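/- arXiv:1902.01594 — 8 statements merged into one kernel-verified Lean document; each statement's English description precedes it below -/
import Mathlib

section
/- For every n ∈ ℕ and 0 < ε < π/2, there exists L_N = L_N(n, ε) ∈ ℕ such that in every n-dimensional real normed space (X, ‖·‖), every point p has the following property: for any points y₁, …, y_{L_N} ∈ X∖{p}, there exist i ≠ j such that the minimum over points x on the line segment from p to yⱼ of ‖yᵢ − x‖ is at most β(ε)·‖p − yᵢ‖. In particular, every n-dimensional normed space is globally ATB(ε) with constant L_N. -/
/-- The constant `β(ε) = (1 - cos ε) sin ε / (2 (1 + sin ε))`. -/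
noncomputable def beta (ε : ℝ) : ℝ :=
  (1 - Real.cos ε) * Real.sin ε / (2 * (1 + Real.sin ε))

/-- The Euclidean comparison angle `∠̃ x p y`. -/
noncomputable def compAngle {X : Type*} [MetricSpace X] (p x y : X) : ℝ :=
  Real.arccos ((dist x p ^ 2 + dist y p ^ 2 - dist x y ^ 2) / (2 * dist x p * dist y p))

open MeasureTheory Metric in
lemma packing_aux {E : Type} [NormedAddCommGroup E] [NormedSpace ℝ E] [FiniteDimensional ℝ E]
    (L : ℕ) (δ : ℝ) (hδ : 0 < δ) (u : Fin L → E) (hu : ∀ i, ‖u i‖ ≤ 1)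
    (h : ∀ i j, i ≠ j → δ + δ ≤ ‖u i - u j‖) :
    (L : ℝ) * δ ^ Module.finrank ℝ E ≤ (1 + δ) ^ Module.finrank ℝ E := by
  borelize E
  let μ : Measure E := Measure.addHaar
  have ρpos : 0 < 1 + δ := by linarith
  have D : Set.Pairwise ((Finset.univ : Finset (Fin L)) : Set (Fin L))
      (Function.onFun Disjoint fun c => ball (u c) δ) := by
    rintro c hc d hd hcd
    apply ball_disjoint_ball
    rw [dist_eq_norm]
    exact h c d hcd
  have A_subset : (⋃ c ∈ (Finset.univ : Finset (Fin L)), ball (u c) δ) ⊆ ball (0 : E) (1 + δ) := by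
    refine Set.iUnion₂_subset fun x hx => ?_
    apply ball_subset_ball'
    rw [dist_zero_right]
    linarith [hu x]
  have I : (L : ENNReal) * ENNReal.ofReal (δ ^ Module.finrank ℝ E) * μ (ball 0 1) ≤
      ENNReal.ofReal ((1 + δ) ^ Module.finrank ℝ E) * μ (ball 0 1) :=
    calc
      _ = μ (⋃ c ∈ (Finset.univ : Finset (Fin L)), ball (u c) δ) := by
        rw [measure_biUnion_finset D fun c _ => measurableSet_ball]
        simp only [μ.addHaar_ball_of_pos _ hδ]
        simp only [Finset.sum_const, nsmul_eq_mul, mul_assoc, Finset.card_univ, Fintype.card_fin]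
      _ ≤ μ (ball (0 : E) (1 + δ)) := measure_mono A_subset
      _ = _ := by
        simp only [μ.addHaar_ball_of_pos _ ρpos]
  have J := (ENNReal.mul_le_mul_iff_left (measure_ball_pos μ _ zero_lt_one).ne'
    measure_ball_lt_top.ne).1 I
  have := ENNReal.toReal_le_of_le_ofReal (pow_nonneg ρpos.le _) J
  simpa [ENNReal.toReal_mul, ENNReal.toReal_ofReal (pow_nonneg hδ.le _)] using this

lemma core_aux {E : Type} [NormedAddCommGroup E] [NormedSpace ℝ E] [FiniteDimensional ℝ E]
    (L : ℕ) (β : ℝ) (hβ : 0 < β)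
    (hL : ((1 + β / 2) / (β / 2)) ^ Module.finrank ℝ E < (L : ℝ))
    (p : E) (y : Fin L → E) (hy : ∀ i, y i ≠ p) :
    ∃ i j, i ≠ j ∧ ∃ t ∈ Set.Icc (0 : ℝ) 1, ‖y i - p‖ = t * ‖y j - p‖ ∧
      ‖y i - ((1 - t) • p + t • y j)‖ ≤ β * ‖p - y i‖ := by
  have hpos : ∀ i, 0 < ‖y i - p‖ := fun i => norm_pos_iff.2 (sub_ne_zero.2 (hy i))
  obtain ⟨i, j, hij, hd⟩ : ∃ i j, i ≠ j ∧
      ‖‖y i - p‖⁻¹ • (y i - p) - ‖y j - p‖⁻¹ • (y j - p)‖ < β := by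
    by_contra! hcon
    have := packing_aux L (β / 2) (by positivity) (fun i => ‖y i - p‖⁻¹ • (y i - p))
      (fun i => by simp [norm_smul, (hpos i).ne']) (fun i j hij => by
        simpa using hcon i j hij)
    rw [div_pow, div_lt_iff₀ (by positivity)] at hL
    linarith
  wlog hle : ‖y i - p‖ ≤ ‖y j - p‖ generalizing i j
  · exact this j i hij.symm (by rwa [norm_sub_rev]) (le_of_not_ge hle)
  refine ⟨i, j, hij, ‖y i - p‖ / ‖y j - p‖, ⟨by positivity, ?_⟩, ?_, ?_⟩
  · rw [div_le_one (hpos j)]; exact hle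
  · rw [div_mul_cancel₀ _ (hpos j).ne']
  · have hi := (hpos i).ne'
    have e : y i - ((1 - ‖y i - p‖ / ‖y j - p‖) • p + (‖y i - p‖ / ‖y j - p‖) • y j)
        = ‖y i - p‖ • (‖y i - p‖⁻¹ • (y i - p) - ‖y j - p‖⁻¹ • (y j - p)) := by
      rw [smul_sub, smul_smul, mul_inv_cancel₀ hi, smul_smul, div_eq_mul_inv]
      module
    rw [e, norm_smul, norm_norm, norm_sub_rev p, mul_comm]
    exact mul_le_mul_of_nonneg_right hd.le (norm_nonneg _)

lemma angle_aux {E : Type} [NormedAddCommGroup E] [NormedSpace ℝ E] (β ε t : ℝ) (hβ : 0 < β)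
    (hε0 : 0 < ε) (hε : ε < Real.pi / 2) (hβε : β < 1 - Real.cos ε) (p x y : E)
    (hx : x ≠ p) (hy : y ≠ p) (ht : t ∈ Set.Icc (0 : ℝ) 1) (hn : ‖x - p‖ = t * ‖y - p‖)
    (h : ‖x - ((1 - t) • p + t • y)‖ ≤ β * ‖p - x‖) : compAngle p x y < ε := by
  have hc : 0 < Real.cos ε := Real.cos_pos_of_mem_Ioo ⟨by linarith, hε⟩
  have ha : 0 < ‖x - p‖ := norm_pos_iff.2 (sub_ne_zero.2 hx)
  have hb : 0 < ‖y - p‖ := norm_pos_iff.2 (sub_ne_zero.2 hy)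
  have hd : ‖x - y‖ ≤ β * ‖x - p‖ + (1 - t) * ‖y - p‖ := by
    have e : x - y = (x - ((1 - t) • p + t • y)) - (1 - t) • (y - p) := by module
    have := norm_sub_le (x - ((1 - t) • p + t • y)) ((1 - t) • (y - p))
    rw [← e, norm_smul, Real.norm_of_nonneg (by linarith [ht.2])] at this
    rw [norm_sub_rev p] at h
    linarith
  have key : Real.cos ε <
      (dist x p ^ 2 + dist y p ^ 2 - dist x y ^ 2) / (2 * dist x p * dist y p) := by
    simp only [dist_eq_norm]
    rw [lt_div_iff₀ (by positivity)]
    have hsq := pow_le_pow_left₀ (norm_nonneg (x - y)) hd 2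
    rw [hn] at ha hsq ⊢
    have ht0 : 0 < t := pos_of_mul_pos_left ha hb.le
    set b := ‖y - p‖
    have hb2 : 0 < t * b ^ 2 := by positivity
    have h1 : (1 - β) * (2 * (t * b ^ 2)) ≤
        (t * b) ^ 2 + b ^ 2 - (β * (t * b) + (1 - t) * b) ^ 2 := by
      have : (t * b) ^ 2 + b ^ 2 - (β * (t * b) + (1 - t) * b) ^ 2
        - (1 - β) * (2 * (t * b ^ 2)) = β * (2 - β) * t * (t * b ^ 2) := by ring
      have : 0 ≤ β * (2 - β) * t * (t * b ^ 2) := by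
        have : 0 < 2 - β := by linarith
        positivity
      linarith
    have h2 : Real.cos ε * (2 * (t * b ^ 2)) < (1 - β) * (2 * (t * b ^ 2)) :=
      mul_lt_mul_of_pos_right (by linarith) (by linarith)
    calc Real.cos ε * (2 * (t * b) * b) = Real.cos ε * (2 * (t * b ^ 2)) := by ring
      _ < _ := by linarith
  unfold compAngle
  generalize (dist x p ^ 2 + dist y p ^ 2 - dist x y ^ 2) / (2 * dist x p * dist y p) = z at key
  by_contra! hcon
  rcases le_total z 1 with hz | hz
  · have := Real.cos_le_cos_of_nonneg_of_le_pi hε0.le (Real.arccos_le_pi z) hcon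
    rw [Real.cos_arccos (by linarith) hz] at this
    linarith
  · rw [Real.arccos_of_one_le hz] at hcon
    linarith

/-- For every `n` and `0 < ε < π/2` there is `L_N = L_N(n, ε)` such that every point
`p` of any `n`-dimensional real normed space satisfies the `ATB*(ε)` condition with
respect to the linear quasi-bicombing with constants `L_N` and `R = ∞`; in particular
every `n`-dimensional normed space is globally `ATB(ε)` with constant `L_N`. -/
theorem normed_atbStar_and_globalATB (n : ℕ) (ε : ℝ) (hε0 : 0 < ε) (hε : ε < Real.pi / 2) :
    ∃ L : ℕ, ∀ (X : Type) [NormedAddCommGroup X] [NormedSpace ℝ X],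
      FiniteDimensional ℝ X → Module.finrank ℝ X = n →
      ((∀ (p : X) (y : Fin L → X), (∀ i, y i ≠ p) →
          ∃ i j, i ≠ j ∧ ∃ t ∈ Set.Icc (0 : ℝ) 1,
            ‖y i - ((1 - t) • p + t • y j)‖ ≤ beta ε * ‖p - y i‖) ∧
        (∀ (p : X) (y : Fin L → X), (∀ i, y i ≠ p) →
          ∃ i j, i ≠ j ∧ compAngle p (y i) (y j) < ε)) := by
  have hs : 0 < Real.sin ε := Real.sin_pos_of_pos_of_lt_pi hε0 (by linarith [Real.pi_pos])
  have hc : Real.cos ε < 1 := by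
    have := Real.cos_lt_cos_of_nonneg_of_le_pi le_rfl (by linarith [Real.pi_pos]) hε0
    simpa using this
  have hβ : 0 < beta ε := by
    unfold beta
    have : 0 < 1 - Real.cos ε := by linarith
    positivity
  have hβε : beta ε < 1 - Real.cos ε := by
    unfold beta
    rw [div_lt_iff₀ (by positivity)]
    exact mul_lt_mul_of_pos_left (by linarith) (by linarith)
  obtain ⟨L, hL⟩ := exists_nat_gt (((1 + beta ε / 2) / (beta ε / 2)) ^ n)
  refine ⟨L, fun X _ _ hfd hn => ?_⟩
  subst hn
  refine ⟨fun p y hy => ?_, fun p y hy => ?_⟩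
  · obtain ⟨i, j, hij, t, ht, -, h⟩ := core_aux L _ hβ hL p y hy
    exact ⟨i, j, hij, t, ht, h⟩
  · obtain ⟨i, j, hij, t, ht, h1, h2⟩ := core_aux L _ hβ hL p y hy
    exact ⟨i, j, hij, angle_aux _ ε t hβ hε0 hε hβε p _ _ (hy i) (hy j) ht h1 h2⟩
end

section
/- Let (X,d) be a proper geodesic metric space on which Γ = ℤⁿ acts cocompactly and properly discontinuously by isometries, and suppose there is a continuous map F : X → ℝⁿ equivariant with respect to the given action of ℤⁿ on X and the standard action of ℤⁿ on ℝⁿ by translations. Fix x₀ ∈ X. Then for every g ∈ Γ the limit ‖g‖ := lim_{k→∞} d(x₀, g^k(x₀))/k exists; there is a norm N on ℝⁿ with N(g) = ‖g‖ for all g ∈ ℤⁿ; and there is a constant C ≥ 0 such that ‖g‖ ≤ d(x₀, g(x₀)) ≤ ‖g‖ + C for all g ∈ Γ. In particular, X is at finite Gromov–Hausdorff distance from (ℝⁿ, N). -/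
namespace PM

section Topo
variable {V : Type*}

def dd (f : List V → ZMod 2) : List V → ZMod 2
  | [] => 0
  | x :: l => f l + dd (fun l' => f (x :: l')) l

def KK (p q : V → V) (f : List V → ZMod 2) : List V → ZMod 2
  | [] => 0
  | x :: l => f (p x :: q x :: l.map q) + KK p q (fun l' => f (p x :: l')) l

lemma z2 (a : ZMod 2) : a + a = 0 := by revert a; decide

lemma dd_add (f g : List V → ZMod 2) (l : List V) :
    dd (fun l => f l + g l) l = dd f l + dd g l := by
  induction l generalizing f g with
  | nil => simp [dd]
  | cons x l ih => simp only [dd]; rw [ih]; ring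

lemma dd_zero (l : List V) : dd (fun _ => 0) l = 0 := by
  induction l with
  | nil => simp [dd]
  | cons x l ih => simp only [dd]; rw [ih]; ring

lemma dd_smul (c : ZMod 2) (f : List V → ZMod 2) (l : List V) :
    dd (fun l => c * f l) l = c * dd f l := by
  induction l generalizing f with
  | nil => simp [dd]
  | cons x l ih => simp only [dd]; rw [ih]; ring

lemma dd_map (f : List V → ZMod 2) (q : V → V) (l : List V) :
    dd (fun l => f (l.map q)) l = dd f (l.map q) := by
  induction l generalizing f with
  | nil => simp [dd]
  | cons x l ih => simp only [dd, List.map_cons]; rw [ih (fun l => f (q x :: l))]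

lemma dd_dd (f : List V → ZMod 2) (l : List V) : dd (dd f) l = 0 := by
  induction l generalizing f with
  | nil => simp [dd]
  | cons x l ih =>
    simp only [dd]; rw [dd_add, ih]
    have := z2 (dd f l)
    linear_combination this

lemma dd_congr (f g : List V → ZMod 2) (l : List V)
    (h : ∀ l', l'.length + 1 = l.length → f l' = g l') : dd f l = dd g l := by
  induction l generalizing f g with
  | nil => simp [dd]
  | cons x l ih =>
    simp only [dd]
    rw [h l (by simp), ih _ _ (fun l' hl' => h _ (by simp; omega))]

lemma KK_add (p q : V → V) (f g : List V → ZMod 2) (l : List V) :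
    KK p q (fun l => f l + g l) l = KK p q f l + KK p q g l := by
  induction l generalizing f g with
  | nil => simp [KK]
  | cons x l ih => simp only [KK]; rw [ih]; ring

lemma KK_dd (p q : V → V) (f : List V → ZMod 2) (l : List V) :
    KK p q (dd f) l + dd (KK p q f) l = f (l.map p) + f (l.map q) := by
  induction l generalizing f with
  | nil => simp [KK, dd, z2]
  | cons x l ih =>
    simp only [KK, dd, List.map_cons]
    rw [KK_add, dd_add, dd_map (fun l => f (p x :: q x :: l))]
    have h := ih (fun l => f (p x :: l))
    have h1 := z2 (KK p q f l)
    have h2 := z2 (dd (fun l => f (p x :: q x :: l)) (l.map q))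
    have h3 := z2 (f (p x :: l.map q))
    linear_combination h + h1 + h2 + h3

lemma KK_vanish (p q : V → V) (f : List V → ZMod 2) (l : List V)
    (h : ∀ l1 x l2, l = l1 ++ x :: l2 → f (l1.map p ++ p x :: q x :: l2.map q) = 0) :
    KK p q f l = 0 := by
  induction l generalizing f with
  | nil => simp [KK]
  | cons x l ih =>
    simp only [KK]
    rw [ih]
    · have := h [] x l rfl
      simpa using this
    · intro l1 y l2 e
      have := h (x :: l1) y l2 (by simp [e])
      simpa using this

def Nrm (f : List V → ZMod 2) : Prop := ∀ l1 x l2, f (l1 ++ x :: x :: l2) = 0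

lemma KK_nrm (p q : V → V) (f : List V → ZMod 2) (hf : Nrm f) : Nrm (KK p q f) := by
  intro l1 x l2
  induction l1 generalizing f with
  | nil =>
    simp only [KK, List.nil_append, List.map_cons]
    have h1 := hf [p x] (q x) (l2.map q)
    have h2 := hf [] (p x) (q x :: l2.map q)
    have h3 : KK p q (fun l' => f (p x :: p x :: l')) l2 = 0 :=
      KK_vanish _ _ _ _ (fun l1 y l2 _ => hf [] (p x) _)
    simp only [List.nil_append, List.cons_append] at h1 h2
    rw [h1, h2, h3]; ring
  | cons y l1 ih =>
    simp only [KK, List.cons_append]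
    rw [ih]
    · have := hf (p y :: q y :: l1.map q) (q x) (l2.map q)
      simpa using this
    · intro l3 z l4
      exact hf (p y :: l3) z l4

def GG (G : ℕ → V → V) (m : ℕ) (f : List V → ZMod 2) (l : List V) : ZMod 2 :=
  ∑ t ∈ Finset.range m, KK (G t) (G (t + 1)) f l

lemma dd_sum (s : Finset ℕ) (F : ℕ → List V → ZMod 2) (l : List V) :
    dd (fun l => ∑ t ∈ s, F t l) l = ∑ t ∈ s, dd (F t) l := by
  classical
  induction s using Finset.induction_on with
  | empty => simp [dd_zero]
  | insert a s ha ih =>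
    simp only [Finset.sum_insert ha]
    rw [dd_add, ih]

lemma GG_dd (G : ℕ → V → V) (m : ℕ) (f : List V → ZMod 2) (l : List V) :
    GG G m (dd f) l + dd (GG G m f) l = f (l.map (G 0)) + f (l.map (G m)) := by
  have h0 : dd (GG G m f) l = ∑ t ∈ Finset.range m, dd (KK (G t) (G (t+1)) f) l :=
    dd_sum _ _ _
  rw [h0]
  unfold GG
  rw [← Finset.sum_add_distrib]
  simp only [KK_dd]
  induction m with
  | zero => simp [z2]
  | succ m ih =>
    rw [Finset.sum_range_succ, ih (dd_sum _ _ _)]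
    have := z2 (f (l.map (G m)))
    linear_combination this

lemma GG_nrm (G : ℕ → V → V) (m : ℕ) (f : List V → ZMod 2) (hf : Nrm f) :
    Nrm (GG G m f) := fun l1 x l2 =>
  Finset.sum_eq_zero (fun _ _ => KK_nrm _ _ f hf l1 x l2)

def EE (v0 : V) (a : V → V) (G : ℕ → V → V) (m : ℕ) : ℕ → (List V → ZMod 2) → ZMod 2
  | 0, f => f [v0]
  | k + 1, f => EE v0 a G m k (fun l => GG G m f l + GG G m f (l.map a))

def Good (Q : ℕ → V → Prop) (r : V → V → Prop) (k : ℕ) (l : List V) : Prop :=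
  l.length = k + 1 ∧ l.IsChain r ∧ ∀ v ∈ l, Q k v

lemma EE_add (v0 : V) (a : V → V) (G : ℕ → V → V) (m k : ℕ) (f g : List V → ZMod 2) :
    EE v0 a G m k (fun l => f l + g l) = EE v0 a G m k f + EE v0 a G m k g := by
  induction k generalizing f g with
  | zero => simp [EE]
  | succ k ih =>
    simp only [EE]
    rw [← ih]
    congr 1
    funext l
    simp only [GG, KK_add, Finset.sum_add_distrib]
    ring

lemma EE_vanish (v0 : V) (a : V → V) (G : ℕ → V → V) (m : ℕ)
    (Q : ℕ → V → Prop) (r : V → V → Prop)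
    (hQ0 : Q 0 v0) (hQa : ∀ k v, Q k v → Q k (a v))
    (hQG : ∀ k v t, t ≤ m → Q k v → Q (k + 1) (G t v))
    (hra : ∀ v w, r v w → r (a v) (a w)) (hrG : ∀ t v w, r v w → r (G t v) (G t w))
    (hrs : ∀ t v, r (G t v) (G (t + 1) v)) (k : ℕ) (f : List V → ZMod 2)
    (hf : ∀ l, Good Q r k l → f l = 0) : EE v0 a G m k f = 0 := by
  induction k generalizing f with
  | zero =>
    apply hf
    refine ⟨rfl, by simp, by simpa using hQ0⟩
  | succ k ih =>
    simp only [EE]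
    apply ih
    have key : ∀ l, Good Q r k l → GG G m f l = 0 := by
      rintro l ⟨h1, h2, h3⟩
      apply Finset.sum_eq_zero
      intro t ht
      rw [Finset.mem_range] at ht
      apply KK_vanish
      rintro l1 x l2 rfl
      apply hf
      refine ⟨?_, ?_, ?_⟩
      · simp at h1 ⊢; omega
      · have e1 : (l1 ++ [x]).IsChain r := by
          apply List.IsChain.left_of_append (l₂ := l2); simpa using h2
        have e2 : (x :: l2).IsChain r := List.IsChain.right_of_append h2
        have e3 : ((l1 ++ [x]).map (G t)).IsChain r := by
          rw [List.isChain_map]; exact e1.imp (fun a b h => hrG t _ _ h)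
        have e4 : ((x :: l2).map (G (t + 1))).IsChain r := by
          rw [List.isChain_map]; exact e2.imp (fun a b h => hrG _ _ _ h)
        have : (l1.map (G t) ++ G t x :: G (t+1) x :: l2.map (G (t+1)))
          = (l1 ++ [x]).map (G t) ++ (x :: l2).map (G (t + 1)) := by simp
        rw [this]
        apply List.IsChain.append e3 e4
        simpa using hrs t x
      · intro v hv
        simp only [List.mem_append, List.mem_map, List.mem_cons] at hv
        rcases hv with ⟨y, hy, rfl⟩ | rfl | rfl | ⟨y, hy, rfl⟩
        · exact hQG _ _ _ ht.le (h3 _ (by simp [hy]))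
        · exact hQG _ _ _ ht.le (h3 _ (by simp))
        · exact hQG _ _ _ ht (h3 _ (by simp))
        · exact hQG _ _ _ ht (h3 _ (by simp [hy]))
    rintro l ⟨h1, h2, h3⟩
    rw [key l ⟨h1, h2, h3⟩, key (l.map a) ⟨by simpa using h1, ?_, ?_⟩, add_zero]
    · rw [List.isChain_map]; exact h2.imp (fun a b h => hra _ _ h)
    · intro v hv
      rw [List.mem_map] at hv
      obtain ⟨y, hy, rfl⟩ := hv
      exact hQa _ _ (h3 _ hy)

lemma EE_congr (v0 : V) (a : V → V) (G : ℕ → V → V) (m k : ℕ) (f g : List V → ZMod 2)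
    (hf : ∀ l, l.length = k + 1 → f l = g l) : EE v0 a G m k f = EE v0 a G m k g := by
  have h := EE_vanish v0 a G m (fun _ _ => True) (fun _ _ => True) trivial
    (fun _ _ _ => trivial) (fun _ _ _ _ _ => trivial) (fun _ _ _ => trivial)
    (fun _ _ _ _ => trivial) (fun _ _ => trivial) k (fun l => f l + g l)
    (fun l hl => by rw [hf l hl.1, z2])
  rw [EE_add] at h
  have := z2 (EE v0 a G m k g)
  linear_combination h - this

lemma EE_dd (v0 : V) (a : V → V) (G : ℕ → V → V) (m : ℕ) (haa : ∀ v, a (a v) = v)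
    (hG0 : ∀ v, G 0 v = v) (c : V) (hGm : ∀ v, G m v = c) (k : ℕ) (f : List V → ZMod 2)
    (hf : Nrm f) :
    EE v0 a G m (k + 1) (dd f) = EE v0 a G m k (fun l => f l + f (l.map a)) := by
  have hid : ∀ l : List V, l.map (G 0) = l := by
    intro l; rw [show G 0 = id from funext hG0]; simp
  have hGd : ∀ l, GG G m (dd f) l = f l + f (l.map (G m)) + dd (GG G m f) l := by
    intro l
    have h1 := GG_dd G m f l
    rw [hid] at h1
    have := z2 (dd (GG G m f) l)
    linear_combination h1 - this
  induction k generalizing f with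
  | zero =>
    simp only [EE]
    rw [hGd, hGd]
    simp only [List.map_cons, List.map_nil, dd, hGm]
    have := z2 (f [c])
    have := z2 (GG G m f [])
    grind
  | succ k ih =>
    rw [EE]
    have h1 : EE v0 a G m (k+1) (fun l => GG G m (dd f) l + GG G m (dd f) (l.map a))
      = EE v0 a G m (k+1) (fun l => (f l + f (l.map a)) +
          dd (fun l => GG G m f l + GG G m f (l.map a)) l) := by
      apply EE_congr
      intro l hl
      rw [hGd, hGd, dd_add, dd_map]
      have hc : ∀ l : List V, l.length = k + 1 + 1 → f (l.map (G m)) = 0 := by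
        intro l hl
        match l, hl with
        | x :: y :: l, _ =>
          have := hf [] c (l.map (G m))
          simpa [hGm] using this
      rw [hc l hl, hc (l.map a) (by simpa using hl)]
      ring
    rw [h1, EE_add, ih]
    · have h2 : EE v0 a G m k (fun l => GG G m f l + GG G m f (l.map a) +
        (GG G m f (l.map a) + GG G m f ((l.map a).map a))) = EE v0 a G m k (fun _ => 0) := by
        apply EE_congr
        intro l _
        have : (l.map a).map a = l := by
          rw [List.map_map, show a ∘ a = id from funext haa]; simp
        rw [this]
        have e1 := z2 (GG G m f l)
        have e2 := z2 (GG G m f (l.map a))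
        linear_combination e1 + e2
      have h3 : EE v0 a G m k (fun _ => 0) = 0 := by
        have := EE_add v0 a G m k (fun _ => 0) (fun _ => 0)
        simpa using this
      rw [h2, h3, add_zero]
    · intro l1 x l2
      have hg := GG_nrm G m f hf
      beta_reduce
      rw [hg l1 x l2]
      have := hg (l1.map a) (a x) (l2.map a)
      simpa using this
    · intro l
      have h1 := GG_dd G m (fun l => GG G m f l + GG G m f (l.map a)) l
      rw [hid] at h1
      have := z2 (dd (GG G m (fun l => GG G m f l + GG G m f (l.map a))) l)
      linear_combination h1 - this

def WW (e : ℕ → V → ZMod 2) : ℕ → List V → ZMod 2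
  | 0, [_] => 1
  | k + 1, x :: y :: l => (e k x + e k y) * WW e k (y :: l)
  | _, _ => 0

def PP (e : ℕ → V → ZMod 2) (k : ℕ) : List V → ZMod 2
  | [] => 0
  | x :: l => e k x * WW e k (x :: l)

lemma WW_nrm (e : ℕ → V → ZMod 2) (k : ℕ) : Nrm (WW e k) := by
  induction k with
  | zero =>
    intro l1 x l2
    match l1 with
    | [] => simp [WW]
    | [y] => simp [WW]
    | y :: z :: l => simp [WW]
  | succ k ih =>
    intro l1 x l2
    match l1 with
    | [] => simp [WW, z2]
    | [y] =>
      have := ih [] x l2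
      simp only [List.nil_append] at this
      simp [WW, this]
    | y :: z :: l =>
      have := ih (z :: l) x l2
      simp only [List.cons_append] at this
      simp [WW, this]

lemma PP_nrm (e : ℕ → V → ZMod 2) (k : ℕ) : Nrm (PP e k) := by
  intro l1 x l2
  have := WW_nrm e k l1 x l2
  match l1 with
  | [] => simp only [List.nil_append] at this; simp [PP, this]
  | y :: l => simp only [List.cons_append] at this; simp [PP, this]

lemma WW_cocycle (e : ℕ → V → ZMod 2) (k : ℕ) :
    (∀ l : List V, l.length = k + 2 → dd (WW e k) l = 0) ∧
    (∀ l : List V, l.length = k + 2 → dd (PP e k) l = WW e (k + 1) l) := by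
  have step : ∀ k, (∀ l : List V, l.length = k + 2 → dd (WW e k) l = 0) →
     (∀ l : List V, l.length = k + 2 → dd (PP e k) l = WW e (k + 1) l) := by
    intro k hk l hl
    match l, hl with
    | x :: y :: l, hl =>
      have h := hk _ hl
      rw [dd] at h
      rw [dd]
      have h2 : dd (fun l' => PP e k (x :: l')) (y :: l)
        = e k x * dd (fun l' => WW e k (x :: l')) (y :: l) := by
        rw [← dd_smul]; rfl
      rw [h2]
      simp only [WW, PP]
      have := z2 (e k x * WW e k (y :: l))
      linear_combination e k x * h - this
  refine ⟨?_, ?_⟩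
  · induction k with
    | zero =>
      intro l hl
      match l, hl with
      | [x, y], _ => simp [dd, WW]; decide
    | succ k ih =>
      intro l hl
      rw [← dd_dd (PP e k) l]
      apply dd_congr
      intro l' hl'
      exact (step k ih l' (by omega)).symm
  · apply step
    induction k with
    | zero =>
      intro l hl
      match l, hl with
      | [x, y], _ => simp [dd, WW]; decide
    | succ k ih =>
      intro l hl
      rw [← dd_dd (PP e k) l]
      apply dd_congr
      intro l' hl'
      exact (step k ih l' (by omega)).symm

lemma WW_map (e : ℕ → V → ZMod 2) (a : V → V) (he : ∀ i v, e i (a v) = e i v + 1)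
    (k : ℕ) (l : List V) : WW e k (l.map a) = WW e k l := by
  induction k generalizing l with
  | zero =>
    match l with
    | [] => simp
    | [y] => simp [WW]
    | y :: z :: l => simp [WW]
  | succ k ih =>
    match l with
    | [] => simp
    | [y] => simp [WW]
    | y :: z :: l =>
      have := ih (z :: l)
      simp only [List.map_cons] at this
      simp only [WW, List.map_cons, this, he]
      have := z2 (1 : ZMod 2)
      linear_combination (WW e k (z :: l)) * this

lemma EE_WW (v0 : V) (a : V → V) (G : ℕ → V → V) (m : ℕ) (haa : ∀ v, a (a v) = v)
    (hG0 : ∀ v, G 0 v = v) (c : V) (hGm : ∀ v, G m v = c)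
    (e : ℕ → V → ZMod 2) (he : ∀ i v, e i (a v) = e i v + 1) (k : ℕ) :
    EE v0 a G m k (WW e k) = 1 := by
  induction k with
  | zero => simp [EE, WW]
  | succ k ih =>
    rw [← EE_congr v0 a G m (k+1) _ _ (WW_cocycle e k).2,
      EE_dd v0 a G m haa hG0 c hGm k _ (PP_nrm e k), ← ih]
    apply EE_congr
    intro l hl
    match l, hl with
    | x :: l, _ =>
      have h := WW_map e a he k (x :: l)
      simp only [List.map_cons] at h
      simp only [PP, List.map_cons, h, he]
      have := z2 (e k x * WW e k (x :: l))
      linear_combination this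

/-- Discrete Borsuk--Ulam. -/
theorem discreteBU (v0 : V) (a : V → V) (G : ℕ → V → V) (m : ℕ) (haa : ∀ v, a (a v) = v)
    (hG0 : ∀ v, G 0 v = v) (c : V) (hGm : ∀ v, G m v = c)
    (e : ℕ → V → ZMod 2) (he : ∀ i v, e i (a v) = e i v + 1)
    (Q : ℕ → V → Prop) (r : V → V → Prop)
    (hQ0 : Q 0 v0) (hQa : ∀ k v, Q k v → Q k (a v))
    (hQG : ∀ k v t, t ≤ m → Q k v → Q (k + 1) (G t v))
    (hra : ∀ v w, r v w → r (a v) (a w)) (hrG : ∀ t v w, r v w → r (G t v) (G t w))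
    (hrs : ∀ t v, r (G t v) (G (t + 1) v)) (k : ℕ) :
    ∃ l, Good Q r k l ∧ WW e k l ≠ 0 := by
  by_contra hcon
  push Not at hcon
  have h1 := EE_WW v0 a G m haa hG0 c hGm e he k
  rw [EE_vanish v0 a G m Q r hQ0 hQa hQG hra hrG hrs k _ hcon] at h1
  exact absurd h1 (by decide)

/-- Consequence: if the functions `H i` change little along `r`, some vertex is almost a zero. -/
theorem approxBU (v0 : V) (a : V → V) (G : ℕ → V → V) (m : ℕ) (haa : ∀ v, a (a v) = v)
    (hG0 : ∀ v, G 0 v = v) (c : V) (hGm : ∀ v, G m v = c)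
    (H : ℕ → V → ℤ) (hH : ∀ i v, H i (a v) = - H i v)
    (σ : V → Prop) (hσ : ∀ v, σ (a v) ↔ ¬ σ v)
    (Q : ℕ → V → Prop) (r : V → V → Prop) (M : ℤ)
    (hM : ∀ i v w, r v w → |H i v - H i w| ≤ M)
    (hQ0 : Q 0 v0) (hQa : ∀ k v, Q k v → Q k (a v))
    (hQG : ∀ k v t, t ≤ m → Q k v → Q (k + 1) (G t v))
    (hra : ∀ v w, r v w → r (a v) (a w)) (hrG : ∀ t v w, r v w → r (G t v) (G t w))
    (hrs : ∀ t v, r (G t v) (G (t + 1) v)) (k : ℕ) :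
    ∃ v, Q k v ∧ ∀ i < k, |H i v| ≤ M * (k + 1) := by
  classical
  let e : ℕ → V → ZMod 2 := fun i v => if 0 < H i v ∨ (H i v = 0 ∧ σ v) then 1 else 0
  have he : ∀ i v, e i (a v) = e i v + 1 := by
    intro i v
    simp only [e, hH, hσ]
    have h2 : (1 : ZMod 2) + 1 = 0 := by decide
    rcases lt_trichotomy (H i v) 0 with h | h | h
    · have h1 : 0 < - H i v := by omega
      have h3 : ¬ (0 < H i v) := by omega
      have h4 : H i v ≠ 0 := by omega
      simp [h3, h4, h]
    · by_cases hs : σ v <;> simp [h, hs, h2]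
    · have h1 : ¬ 0 < - H i v := by omega
      have h4 : H i v ≠ 0 := by omega
      have h5 : ¬ H i v < 0 := by omega
      simp [h, h4, h5, h2]
  obtain ⟨l, ⟨hlen, hch, hQ⟩, hW⟩ := discreteBU v0 a G m haa hG0 c hGm e he Q r hQ0 hQa hQG hra hrG hrs k
  have main : ∀ k (x : V) (l : List V), l.length = k → (x :: l).IsChain r →
      WW e k (x :: l) ≠ 0 → ∀ i < k, |H i x| ≤ M * (k + 1) := by
    intro k
    induction k with
    | zero => intro x l _ _ _ i hi; omega
    | succ k ih =>
      intro x l hl hc hW i hi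
      match l, hl with
      | y :: l, hl =>
        rw [List.isChain_cons_cons] at hc
        simp only [WW] at hW
        have hW1 := left_ne_zero_of_mul hW
        have hW2 := right_ne_zero_of_mul hW
        have hd := hM i x y hc.1
        have hM0 : 0 ≤ M := le_trans (abs_nonneg _) hd
        rcases Nat.lt_succ_iff_lt_or_eq.mp hi with h | h
        · have := ih y l (by simpa using hl) hc.2 hW2 i h
          push_cast
          have h3 : |H i x| ≤ |H i x - H i y| + |H i y| := by
            have := abs_add_le (H i x - H i y) (H i y)
            simpa using this
          linarith
        · subst h
          have h0 : |H i x| ≤ |H i x - H i y| := by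
            by_contra hlt
            push Not at hlt
            apply hW1
            have hx : e i x = e i y := by
              have h1 : (0 < H i x ∧ 0 < H i y) ∨ (H i x < 0 ∧ H i y < 0) := by
                rcases lt_trichotomy (H i x) 0 with h | h | h
                · right; rw [abs_of_neg h] at hlt
                  have := neg_abs_le (H i x - H i y)
                  omega
                · rw [h] at hlt; simp at hlt; have := abs_nonneg (H i y); omega
                · left; rw [abs_of_pos h] at hlt
                  have := le_abs_self (H i x - H i y)
                  omega
              rcases h1 with ⟨h1, h2⟩ | ⟨h1, h2⟩
              · simp [e, h1, h2]
              · simp [e, h1.ne, h2.ne, not_lt.mpr h1.le, not_lt.mpr h2.le]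
            rw [hx, z2]
          push_cast
          have : 0 ≤ M * (i + 1 : ℤ) := by positivity
          nlinarith
  match l, hlen with
  | x :: l, hlen =>
    exact ⟨x, hQ _ (by simp), main k x l (by simpa using hlen) hch hW⟩

end Topo
end PM

namespace PM

def GF (m t : ℕ) (v : Fin m → Bool) : Fin m → Bool := fun i => if (i : ℕ) < t then true else v i

def TT {n m : ℕ} (u : ℕ → Fin n → ℤ) (s t : ℕ) (b : Bool) (v : Fin m → Bool) : Fin n → ℤ :=
  ∑ i : Fin m, if (s ≤ (i : ℕ) ∧ (i : ℕ) < t) ∧ v i = b then u i else 0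

lemma TT_const {n m : ℕ} (h : ℕ → Fin n → ℤ) (s t : ℕ) (hst : s ≤ t) (ht : t ≤ m) :
    TT (m := m) (fun i => h (i + 1) - h i) s t true (fun _ => true) = h t - h s := by
  unfold TT
  rw [Fin.sum_univ_eq_sum_range
    (fun i => if (s ≤ i ∧ i < t) ∧ true = true then h (i + 1) - h i else 0) m]
  rw [← Finset.sum_filter, ← Finset.sum_Ico_sub h hst]
  apply Finset.sum_congr _ (fun _ _ => rfl)
  ext i
  simp
  omega

lemma TT_const_false {n m : ℕ} (u : ℕ → Fin n → ℤ) (s t : ℕ) :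
    TT (m := m) u s t false (fun _ => true) = 0 := by
  simp [TT]

lemma TT_neg {n m : ℕ} (u : ℕ → Fin n → ℤ) (s t : ℕ) (b : Bool) (v : Fin m → Bool) :
    TT u s t b (fun i => !v i) = TT u s t (!b) v := by
  unfold TT
  apply Finset.sum_congr rfl
  intro i _
  by_cases hv : v i = true <;> cases b <;> simp [hv]

lemma TT_GF {n m : ℕ} (u : ℕ → Fin n → ℤ) (s t t0 : ℕ) (hst : s ≤ t) (b : Bool)
    (v : Fin m → Bool) :
    TT u s t b (GF m t0 v) = TT (m := m) u s (max s (min t t0)) b (fun _ => true)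
      + TT u (max s (min t t0)) t b v := by
  unfold TT
  rw [← Finset.sum_add_distrib]
  apply Finset.sum_congr rfl
  intro i _
  by_cases h : (i : ℕ) < t0
  · have e1 : ¬ (max s (min t t0) ≤ (i : ℕ) ∧ (i : ℕ) < t) := by omega
    have e2 : (s ≤ (i : ℕ) ∧ (i : ℕ) < max s (min t t0)) ↔ (s ≤ (i : ℕ) ∧ (i : ℕ) < t) := by omega
    simp only [GF, h, if_true, e1, e2, false_and, if_false, add_zero]
  · have e1 : ¬ (s ≤ (i : ℕ) ∧ (i : ℕ) < max s (min t t0)) := by omega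
    have e2 : (max s (min t t0) ≤ (i : ℕ) ∧ (i : ℕ) < t) ↔ (s ≤ (i : ℕ) ∧ (i : ℕ) < t) := by omega
    simp only [GF, h, if_false, e1, e2, false_and, zero_add]

theorem doubling {n : ℕ} (f : (Fin n → ℤ) → ℝ) (f0 : f 0 = 0)
    (fadd : ∀ g h, f (g + h) ≤ f g + f h) (R : ℝ) (hR : 0 ≤ R)
    (disc : ∀ g, ∃ (m : ℕ) (h : ℕ → Fin n → ℤ) (τ : ℕ → ℝ), 1 ≤ m ∧ (m : ℝ) ≤ f g + 2 ∧
      h 0 = 0 ∧ h m = g ∧ τ 0 = 0 ∧ τ m = f g ∧ (∀ i, τ (i + 1) - τ i ≤ 1) ∧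
      ∀ i j, i ≤ j → j ≤ m → f (h j - h i) ≤ τ j - τ i + 2 * R)
    (M : ℤ) (hM : ∀ g, f g ≤ 2 * R + 1 → ∀ i, |g i| ≤ M)
    (hbd : ∀ B : ℤ, ∃ D : ℝ, ∀ g : Fin n → ℤ, (∀ i, |g i| ≤ B) → f g ≤ D) :
    ∃ C, 0 ≤ C ∧ ∀ g, 2 * f g ≤ f (g + g) + C := by
  obtain ⟨D, hD⟩ := hbd (2 * |M| * (n + 1))
  have hD0 : 0 ≤ D := by
    have := hD 0 (fun i => by simp)
    rwa [f0] at this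
  refine ⟨2 * R * (n + 1) + 2 * D, by positivity, fun g => ?_⟩
  obtain ⟨m, h, τ, hm, -, h0, hmg, τ0, τm, τs, hf⟩ := disc (g + g)
  let u : ℕ → Fin n → ℤ := fun i => h (i + 1) - h i
  have hu : ∀ i, i < m → ∀ j, |u i j| ≤ M := by
    intro i hi j
    apply hM
    have := hf i (i + 1) (by omega) (by omega)
    have := τs i
    linarith
  let S : (Fin m → Bool) → Fin n → ℤ := fun v => ∑ i : Fin m, if v i then u i else - u i
  let r : (Fin m → Bool) → (Fin m → Bool) → Prop :=
    fun v w => ∀ i j, v i ≠ w i → v j ≠ w j → i = j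
  let Q : ℕ → (Fin m → Bool) → Prop := fun k v => ∀ s t, s ≤ t → t ≤ m →
    f (TT u s t true v) + f (TT u s t false v) ≤ τ t - τ s + 2 * R * (k + 1)
  have hSn : ∀ v, S (fun i => !v i) = - S v := by
    intro v
    simp only [S]
    rw [← Finset.sum_neg_distrib]
    apply Finset.sum_congr rfl
    intro i _
    by_cases hv : v i = true <;> simp [hv]
  have hSr : ∀ v w, r v w → ∀ j, |S v j - S w j| ≤ 2 * |M| := by
    intro v w hr j
    by_cases hvw : v = w
    · subst hvw; simp
    · obtain ⟨i0, hi0⟩ := Function.ne_iff.mp hvw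
      have : S v - S w = (if v i0 then u i0 else - u i0) - (if w i0 then u i0 else - u i0) := by
        simp only [S]
        rw [← Finset.sum_sub_distrib]
        apply Finset.sum_eq_single
        · intro i _ hi
          have : v i = w i := by
            by_contra hne
            exact hi (hr _ _ hne hi0)
          rw [this, sub_self]
        · simp
      rw [← Pi.sub_apply, this]
      have hh := (hu i0 i0.2 j).trans (le_abs_self M)
      rw [abs_le] at hh ⊢
      by_cases hv : v i0 = true <;> by_cases hw : w i0 = true <;> simp [hv, hw] <;> (try constructor) <;> linarith
  let H : ℕ → (Fin m → Bool) → ℤ := fun j v => if hj : j < n then S v ⟨j, hj⟩ else 0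
  obtain ⟨v, hQ, hv⟩ := approxBU (fun _ : Fin m => true) (fun v i => !v i) (GF m) m
    (by intro v; funext i; simp) (by intro v; funext i; simp [GF]) (fun _ => true)
    (by intro v; funext i; simp [GF])
    H (by intro i v; simp only [H]; split_ifs <;> simp [hSn])
    (fun v => v ⟨0, hm⟩ = true) (by intro v; simp)
    Q r (2 * |M|)
    (by
      intro i v w hr
      simp only [H]
      split_ifs with hj
      · exact hSr v w hr _
      · simp)
    (by
      intro s t hst ht
      rw [TT_const h s t hst ht, TT_const_false, f0]
      have := hf s t hst ht
      push_cast; linarith)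
    (by
      intro k v hQ s t hst ht
      rw [TT_neg, TT_neg]
      have := hQ s t hst ht
      simp only [Bool.not_true, Bool.not_false]; linarith)
    (by
      intro k v t0 _ hQ s t hst ht
      rw [TT_GF u s t t0 hst, TT_GF u s t t0 hst]
      have hc1 : s ≤ max s (min t t0) := by omega
      have hc2 : max s (min t t0) ≤ t := by omega
      generalize max s (min t t0) = c at *
      rw [TT_const h s c hc1 (hc2.trans ht), TT_const_false, zero_add]
      have h1 := hQ c t hc2 ht
      have h2 := hf s c hc1 (hc2.trans ht)
      have h3 := fadd (h c - h s) (TT u c t true v)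
      push_cast; linarith)
    (by intro v w hr i j hi hj; exact hr i j (by simpa using hi) (by simpa using hj))
    (by
      intro t v w hr i j hi hj
      apply hr
      · intro e; apply hi; simp [GF, e]
      · intro e; apply hj; simp [GF, e])
    (by
      intro t v i j hi hj
      have key : ∀ i : Fin m, GF m t v i ≠ GF m (t + 1) v i → (i : ℕ) = t := by
        intro i hi
        by_contra hne
        apply hi
        have : (i : ℕ) < t ↔ (i : ℕ) < t + 1 := by omega
        simp only [GF, this]
      exact Fin.ext ((key i hi).trans (key j hj).symm))
    n
  have hQ' := hQ 0 m (by omega) le_rfl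
  set P := TT u 0 m true v with hP
  set N := TT u 0 m false v with hN
  have hPN : P + N = g + g := by
    have := TT_const (m := m) h 0 m (by omega) le_rfl
    rw [hmg, h0, sub_zero] at this
    rw [← this, hP, hN]
    unfold TT
    rw [← Finset.sum_add_distrib]
    apply Finset.sum_congr rfl
    intro i _
    by_cases hv : v i = true <;> simp [hv, u]
  have hPN2 : P - N = S v := by
    rw [hP, hN]
    unfold TT
    rw [← Finset.sum_sub_distrib]
    apply Finset.sum_congr rfl
    intro i _
    by_cases hv : v i = true <;> simp [hv]
  have hSv : ∀ j, |S v j| ≤ 2 * |M| * (n + 1) := by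
    intro j
    have := hv j j.2
    simpa [H] using this
  have c1 : f (g - P) ≤ D := by
    apply hD
    intro j
    have e1 := congrFun hPN j
    have e2 := congrFun hPN2 j
    have e3 := hSv j
    simp only [Pi.add_apply, Pi.sub_apply] at *
    rw [abs_le] at *
    constructor <;> linarith [e3.1, e3.2]
  have c2 : f (g - N) ≤ D := by
    apply hD
    intro j
    have e1 := congrFun hPN j
    have e2 := congrFun hPN2 j
    have e3 := hSv j
    simp only [Pi.add_apply, Pi.sub_apply] at *
    rw [abs_le] at *
    constructor <;> linarith [e3.1, e3.2]
  have d1 := fadd P (g - P)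
  have d2 := fadd N (g - N)
  rw [add_sub_cancel] at d1 d2
  linarith

end PM

namespace PM
open Filter Topology

noncomputable def fl {n : ℕ} (k : ℕ) (v : EuclideanSpace ℝ (Fin n)) : Fin n → ℤ := fun i => ⌊(k : ℝ) * v i⌋

noncomputable def io {n : ℕ} (g : Fin n → ℤ) : EuclideanSpace ℝ (Fin n) :=
  (EuclideanSpace.equiv (Fin n) ℝ).symm (fun i => (g i : ℝ))

lemma io_apply {n : ℕ} (g : Fin n → ℤ) (i : Fin n) : io g i = (g i : ℝ) := by
  simp [io]

lemma int_close (a b : ℤ) (B : ℤ) (x y : ℝ) (ha : (a : ℝ) ≤ x) (ha' : x < a + 1)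
    (hb : (b : ℝ) ≤ y) (hb' : y < b + 1) (h : |x - y| ≤ B) : |a - b| ≤ B + 1 := by
  rw [abs_le] at h ⊢
  constructor
  · have : (b : ℝ) < a + 1 + B := by linarith
    have : b < a + 1 + B := by exact_mod_cast this
    omega
  · have : (a : ℝ) < b + 1 + B := by linarith
    have : a < b + 1 + B := by exact_mod_cast this
    omega

theorem normExt {n : ℕ} (f : (Fin n → ℤ) → ℝ) (f0 : f 0 = 0) (fnn : ∀ g, 0 ≤ f g)
    (fneg : ∀ g, f (-g) = f g)
    (fadd : ∀ g h, f (g + h) ≤ f g + f h)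
    (hbd : ∀ B : ℤ, ∃ D : ℝ, ∀ g : Fin n → ℤ, (∀ i, |g i| ≤ B) → f g ≤ D)
    (c : ℝ) (hc : 0 < c) (K : ℝ) (hlow : ∀ g i, c * |(g i : ℝ)| ≤ f g + K)
    (C : ℝ) (hdbl : ∀ g, 2 * f g ≤ f (g + g) + C) :
    ∃ ν : EuclideanSpace ℝ (Fin n) → ℝ,
      (∀ v, 0 ≤ ν v) ∧ (∀ v, ν v = 0 ↔ v = 0) ∧
        (∀ (c : ℝ) (v), ν (c • v) = |c| * ν v) ∧
        (∀ v w, ν (v + w) ≤ ν v + ν w) ∧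
        (∀ g : Fin n → ℤ, Tendsto (fun k : ℕ => f (k • g) / (k : ℝ)) atTop (𝓝 (ν (io g)))) ∧
        (∀ g, ν (io g) ≤ f g ∧ f g ≤ ν (io g) + C) ∧
        (∃ D, ∀ v, ν v ≤ f (fun i => ⌊v i⌋) + D) := by
  have hcl : ∀ B : ℤ, ∃ D : ℝ, 0 ≤ D ∧ ∀ g h : Fin n → ℤ, (∀ i, |g i - h i| ≤ B) →
      |f g - f h| ≤ D := by
    intro B
    obtain ⟨D, hD⟩ := hbd B
    refine ⟨max D 0, le_max_right _ _, fun g h hgh => ?_⟩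
    have h1 := hD (g - h) hgh
    have h2 := fadd h (g - h)
    have h3 := fadd g (-(g - h))
    rw [fneg] at h3
    rw [show h + (g - h) = g by abel] at h2
    rw [show g + -(g - h) = h by abel] at h3
    have := le_max_left D 0
    rw [abs_le]; constructor <;> linarith
  obtain ⟨D, hD0, hD⟩ := hcl 2
  have hflsum : ∀ (v w : EuclideanSpace ℝ (Fin n)) (j k : ℕ) (x : Fin n → ℝ) (g : Fin n → ℤ),
      (∀ i, (j : ℝ) * v i + k * w i = x i) → (∀ i, g i = ⌊x i⌋) →
      f g ≤ f (fl j v) + f (fl k w) + D := by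
    intro v w j k x g hx hg
    have h1 := hD g (fl j v + fl k w) (by
      intro i
      have a1 := Int.floor_le (x i)
      have a2 := Int.lt_floor_add_one (x i)
      have b1 := Int.floor_le ((j : ℝ) * v i)
      have b2 := Int.lt_floor_add_one ((j : ℝ) * v i)
      have c1 := Int.floor_le ((k : ℝ) * w i)
      have c2 := Int.lt_floor_add_one ((k : ℝ) * w i)
      have e := hx i
      simp only [Pi.add_apply, fl, hg]
      rw [abs_le]
      constructor
      · have : ((⌊(j : ℝ) * v i⌋ + ⌊(k : ℝ) * w i⌋ : ℤ) : ℝ) < ((⌊x i⌋ + 1 : ℤ) : ℝ) := by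
          push_cast; linarith
        have := Int.cast_lt.mp this
        omega
      · have : ((⌊x i⌋ : ℤ) : ℝ) < ((⌊(j : ℝ) * v i⌋ + ⌊(k : ℝ) * w i⌋ + 2 : ℤ) : ℝ) := by
          push_cast; linarith
        have := Int.cast_lt.mp this
        omega)
    have h2 := fadd (fl j v) (fl k w)
    have := (abs_le.mp h1).2
    linarith
  have hsub : ∀ v : EuclideanSpace ℝ (Fin n), Subadditive (fun k => f (fl k v) + D) := by
    intro v j k
    have := hflsum v v j k (fun i => ((j + k : ℕ) : ℝ) * v i) (fl (j + k) v)
      (by intro i; push_cast; ring) (fun i => rfl)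
    simp only
    linarith
  have hbb : ∀ v : EuclideanSpace ℝ (Fin n),
      BddBelow (Set.range fun k : ℕ => (f (fl k v) + D) / (k : ℝ)) := by
    intro v
    refine ⟨0, ?_⟩
    rintro _ ⟨k, rfl⟩
    have := fnn (fl k v)
    positivity
  let ν : EuclideanSpace ℝ (Fin n) → ℝ := fun v => (hsub v).lim
  have tend0 : ∀ (a : ℕ → ℝ) (E : ℝ), (∀ k, |a k| ≤ E) → Tendsto (fun k : ℕ => a k / (k : ℝ)) atTop (𝓝 0) := by
    intro a E ha
    apply squeeze_zero_norm (a := fun k : ℕ => E / (k : ℝ))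
    · intro k
      rw [Real.norm_eq_abs, abs_div, Nat.abs_cast]
      gcongr
      exact ha k
    · exact tendsto_const_div_atTop_nhds_zero_nat E
  have hlim : ∀ v, Tendsto (fun k : ℕ => f (fl k v) / (k : ℝ)) atTop (𝓝 (ν v)) := by
    intro v
    have h1 := (hsub v).tendsto_lim (hbb v)
    have h2 := tend0 (fun _ => D) |D| (fun _ => le_rfl)
    have h3 := h1.sub h2
    rw [sub_zero] at h3
    refine h3.congr (fun k => ?_)
    ring
  have hcmp : ∀ (g h : ℕ → Fin n → ℤ) (B : ℤ) (L : ℝ), (∀ k i, |g k i - h k i| ≤ B) →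
      Tendsto (fun k : ℕ => f (h k) / (k : ℝ)) atTop (𝓝 L) →
      Tendsto (fun k : ℕ => f (g k) / (k : ℝ)) atTop (𝓝 L) := by
    intro g h B L hgh hL
    obtain ⟨E, -, hE⟩ := hcl B
    have h2 := tend0 (fun k => f (g k) - f (h k)) E (fun k => hE _ _ (hgh k))
    have h3 := hL.add h2
    rw [add_zero] at h3
    refine h3.congr (fun k => ?_)
    ring
  have hnn : ∀ v, 0 ≤ ν v := by
    intro v
    apply ge_of_tendsto' (hlim v)
    intro k
    have := fnn (fl k v)
    positivity
  have hν0 : ν 0 = 0 := by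
    apply tendsto_nhds_unique (hlim 0)
    have : ∀ k : ℕ, fl k (0 : EuclideanSpace ℝ (Fin n)) = 0 := by
      intro k; funext i; simp [fl]
    simp [this, f0]
  have hlow' : ∀ v i, c * |v i| ≤ ν v := by
    intro v i
    have h1 := (hlim v).add (tend0 (fun _ => K + c) |K + c| (fun _ => le_rfl))
    rw [add_zero] at h1
    apply ge_of_tendsto h1
    filter_upwards [eventually_gt_atTop 0] with k hk
    have hk' : (0 : ℝ) < k := by exact_mod_cast hk
    rw [← add_div, le_div_iff₀ hk']
    have h2 := hlow (fl k v) i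
    have h3 : |(k : ℝ) * v i| ≤ |((fl k v i : ℤ) : ℝ)| + 1 := by
      have a1 := Int.floor_le ((k : ℝ) * v i)
      have a2 := Int.lt_floor_add_one ((k : ℝ) * v i)
      have h4 : |(k : ℝ) * v i - ((fl k v i : ℤ) : ℝ)| ≤ 1 := by
        rw [abs_le]; simp only [fl]; constructor <;> linarith
      have := abs_sub_abs_le_abs_sub ((k : ℝ) * v i) ((fl k v i : ℤ) : ℝ)
      linarith
    rw [abs_mul, Nat.abs_cast] at h3
    nlinarith
  have hpos : ∀ (s : ℝ) (v), 0 < s → ν (s • v) = s * ν v := by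
    intro s v hs
    let q : ℕ → ℕ := fun k => ⌊s * (k : ℝ)⌋₊
    have hq : Tendsto q atTop atTop :=
      tendsto_nat_floor_atTop.comp (tendsto_natCast_atTop_atTop.const_mul_atTop hs)
    have hq2 : Tendsto (fun k : ℕ => (q k : ℝ) / (k : ℝ)) atTop (𝓝 s) :=
      (tendsto_nat_floor_mul_div_atTop hs.le).comp tendsto_natCast_atTop_atTop
    have h1 := hq2.mul ((hlim v).comp hq)
    have h2 : Tendsto (fun k : ℕ => f (fl (q k) v) / (k : ℝ)) atTop (𝓝 (s * ν v)) := by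
      refine h1.congr (fun k => ?_)
      simp only [Function.comp]
      by_cases hk : q k = 0
      · have : fl 0 v = 0 := by funext i; simp [fl]
        rw [hk, this, f0]; simp
      · have : (q k : ℝ) ≠ 0 := by exact_mod_cast hk
        field_simp
    refine tendsto_nhds_unique (hlim _) (hcmp _ _ (⌈‖v‖⌉ + 1) _ ?_ h2)
    intro k i
    apply int_close _ _ _ _ _ (Int.floor_le _) (Int.lt_floor_add_one _) (Int.floor_le _)
      (Int.lt_floor_add_one _)
    have e1 : (q k : ℝ) ≤ s * k := Nat.floor_le (by positivity)
    have e2 : s * k < q k + 1 := Nat.lt_floor_add_one _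
    have e3 : |v i| ≤ ‖v‖ := by
      have := PiLp.norm_apply_le v i
      simpa using this
    have e4 : (k : ℝ) * (s • v) i - (q k : ℝ) * v i = (s * k - q k) * v i := by
      simp; ring
    rw [e4, abs_mul]
    have e5 : |s * k - q k| ≤ 1 := by rw [abs_le]; constructor <;> linarith
    calc |s * k - q k| * |v i| ≤ 1 * ‖v‖ := by gcongr
      _ ≤ ⌈‖v‖⌉ := by rw [one_mul]; exact Int.le_ceil _
  have hneg : ∀ v, ν (-v) = ν v := by
    intro v
    have h1 : Tendsto (fun k : ℕ => f (-(fl k v)) / (k : ℝ)) atTop (𝓝 (ν v)) := by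
      simpa only [fneg] using hlim v
    refine tendsto_nhds_unique (hlim _) (hcmp _ _ 2 _ ?_ h1)
    intro k i
    have a1 := Int.floor_le ((k : ℝ) * v i)
    have a2 := Int.lt_floor_add_one ((k : ℝ) * v i)
    have b1 := Int.floor_le ((k : ℝ) * (-v) i)
    have b2 := Int.lt_floor_add_one ((k : ℝ) * (-v) i)
    simp only [fl, Pi.neg_apply]
    have e : (k : ℝ) * (-v) i = - ((k : ℝ) * v i) := by simp
    rw [e] at b1 b2 ⊢
    have : |((⌊-((k : ℝ) * v i)⌋ - -⌊(k : ℝ) * v i⌋ : ℤ) : ℝ)| ≤ ((2 : ℤ) : ℝ) := by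
      push_cast
      rw [abs_le]; constructor <;> linarith
    exact_mod_cast this
  have hflio : ∀ (k : ℕ) (g : Fin n → ℤ), fl k (io g) = k • g := by
    intro k g
    funext i
    simp only [fl, io_apply, Pi.smul_apply, nsmul_eq_mul]
    rw [show (k : ℝ) * (g i : ℝ) = (((k : ℤ) * g i : ℤ) : ℝ) by push_cast; rfl, Int.floor_intCast]
  have hlimg : ∀ g : Fin n → ℤ,
      Tendsto (fun k : ℕ => f (k • g) / (k : ℝ)) atTop (𝓝 (ν (io g))) := by
    intro g
    have := hlim (io g)
    simpa only [hflio] using this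
  refine ⟨ν, hnn, ?_, ?_, ?_, hlimg, ?_, D, ?_⟩
  · intro v
    constructor
    · intro h
      ext i
      have := hlow' v i
      rw [h] at this
      have h2 : |v i| ≤ 0 := by
        by_contra hh
        push Not at hh
        have := mul_pos hc hh
        linarith
      simpa using h2
    · rintro rfl; exact hν0
  · intro s v
    rcases lt_trichotomy s 0 with h | h | h
    · rw [abs_of_neg h, ← hpos (-s) v (by linarith), neg_smul, hneg]
    · subst h; simp [hν0]
    · rw [abs_of_pos h, hpos s v h]
  · intro v w
    have h1 := ((hlim v).add (hlim w)).add (tend0 (fun _ => D) |D| (fun _ => le_rfl))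
    rw [add_zero] at h1
    refine le_of_tendsto_of_tendsto' (hlim (v + w)) h1 (fun k => ?_)
    rw [← add_div, ← add_div]
    gcongr
    exact hflsum v w k k (fun i => (k : ℝ) * (v + w) i) _ (by intro i; simp; ring) (fun i => rfl)
  · intro g
    constructor
    · apply le_of_tendsto (hlimg g)
      filter_upwards [eventually_gt_atTop 0] with k hk
      have hk' : (0 : ℝ) < k := by exact_mod_cast hk
      rw [div_le_iff₀ hk']
      have : ∀ k : ℕ, f (k • g) ≤ f g * k := by
        intro k
        induction k with
        | zero => simp [f0]
        | succ k ih =>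
          rw [succ_nsmul]
          have := fadd (k • g) g
          push_cast
          linarith
      exact this k
    · have h2 : ∀ j : ℕ, (2 : ℝ) ^ j * (f g - C) ≤ f (2 ^ j • g) - C := by
        intro j
        induction j with
        | zero => simp
        | succ j ih =>
          have := hdbl (2 ^ j • g)
          rw [← add_nsmul, ← two_mul, ← pow_succ'] at this
          rw [pow_succ']
          nlinarith
      have h3 : Tendsto (fun j : ℕ => 2 ^ j) atTop (atTop : Filter ℕ) :=
        tendsto_pow_atTop_atTop_of_one_lt (by norm_num)
      have h4 := ((hlimg g).comp h3).sub ((tend0 (fun _ => C) |C| (fun _ => le_rfl)).comp h3)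
      rw [sub_zero] at h4
      have : f g - C ≤ ν (io g) := by
        apply ge_of_tendsto' h4
        intro j
        simp only [Function.comp]
        rw [← sub_div, le_div_iff₀ (by positivity)]
        push_cast
        have := h2 j
        linarith
      linarith
  · intro v
    have := (hsub v).lim_le_div (hbb v) (n := 1) one_ne_zero
    have e : fl 1 v = fun i => ⌊v i⌋ := by funext i; simp [fl]
    simp only [e, Nat.cast_one, div_one] at this
    exact this

end PM

/-- If `ℤⁿ` acts cocompactly and properly discontinuously by isometries on a proper
geodesic metric space `X`, and there is a continuous map `F : X → ℝⁿ` equivariant with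
respect to the standard translation action of `ℤⁿ` on `ℝⁿ`, then, for a fixed `x₀ ∈ X`:
the stable norm limit `‖g‖ = lim d(x₀, gᵏx₀)/k` exists for all `g`; it extends to a
norm `ν` on `ℝⁿ`; `‖g‖ ≤ d(x₀, g x₀) ≤ ‖g‖ + C` for a uniform constant `C ≥ 0`; and
(finiteness of the Gromov–Hausdorff distance) there is a map `Φ : X → ℝⁿ` which
distorts distances (measured by `ν` on `ℝⁿ`) by at most an additive constant and
has coarsely dense image. -/
theorem periodic_metric_close_to_norm
    {X : Type*} [MetricSpace X] [ProperSpace X]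
    (hgeo : ∀ x y : X, ∃ γ : ℝ → X, γ 0 = x ∧ γ (dist x y) = y ∧
      ∀ s ∈ Set.Icc (0 : ℝ) (dist x y), ∀ t ∈ Set.Icc (0 : ℝ) (dist x y),
        dist (γ s) (γ t) = |s - t|)
    (n : ℕ) [AddAction (Fin n → ℤ) X]
    (hisom : ∀ (g : Fin n → ℤ) (a b : X), dist (g +ᵥ a) (g +ᵥ b) = dist a b)
    (hcocompact : ∃ K : Set X, IsCompact K ∧ ∀ x : X, ∃ g : Fin n → ℤ, g +ᵥ x ∈ K)
    (hpd : ∀ K : Set X, IsCompact K →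
      {g : Fin n → ℤ | (((g +ᵥ ·) '' K) ∩ K).Nonempty}.Finite)
    (F : X → EuclideanSpace ℝ (Fin n)) (hF : Continuous F)
    (hequiv : ∀ (g : Fin n → ℤ) (x : X),
      F (g +ᵥ x) = F x + (EuclideanSpace.equiv (Fin n) ℝ).symm (fun i => (g i : ℝ)))
    (x₀ : X) :
    ∃ ℓ : (Fin n → ℤ) → ℝ,
      (∀ g : Fin n → ℤ, Filter.Tendsto
        (fun k : ℕ => dist x₀ ((k • g) +ᵥ x₀) / (k : ℝ)) Filter.atTop (nhds (ℓ g))) ∧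
      (∃ ν : EuclideanSpace ℝ (Fin n) → ℝ,
        (∀ v, 0 ≤ ν v) ∧ (∀ v, ν v = 0 ↔ v = 0) ∧
        (∀ (c : ℝ) (v), ν (c • v) = |c| * ν v) ∧
        (∀ v w, ν (v + w) ≤ ν v + ν w) ∧
        (∀ g : Fin n → ℤ, ν ((EuclideanSpace.equiv (Fin n) ℝ).symm (fun i => (g i : ℝ))) = ℓ g) ∧
        (∃ C : ℝ, 0 ≤ C ∧ ∀ g : Fin n → ℤ,
          ℓ g ≤ dist x₀ (g +ᵥ x₀) ∧ dist x₀ (g +ᵥ x₀) ≤ ℓ g + C) ∧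
        (∃ (D : ℝ) (Φ : X → EuclideanSpace ℝ (Fin n)),
          (∀ a b : X, |ν (Φ a - Φ b) - dist a b| ≤ D) ∧
          (∀ v : EuclideanSpace ℝ (Fin n), ∃ a : X, ν (Φ a - v) ≤ D))) := by
  let f : (Fin n → ℤ) → ℝ := fun g => dist x₀ (g +ᵥ x₀)
  have fsub : ∀ g h : Fin n → ℤ, dist (g +ᵥ x₀) (h +ᵥ x₀) = f (h - g) := by
    intro g h
    simp only [f]
    rw [← hisom g x₀, vadd_vadd, add_sub_cancel]
  have f0 : f 0 = 0 := by simp [f]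
  have fnn : ∀ g, 0 ≤ f g := fun g => dist_nonneg
  have fneg : ∀ g, f (-g) = f g := by
    intro g
    have h1 := fsub 0 g
    have h2 := fsub g 0
    rw [dist_comm, h1] at h2
    simpa using h2.symm
  have fadd : ∀ g h, f (g + h) ≤ f g + f h := by
    intro g h
    have h1 := dist_triangle x₀ (g +ᵥ x₀) ((g + h) +ᵥ x₀)
    rw [fsub g (g + h), add_sub_cancel_left] at h1
    exact h1
  have hbd : ∀ B : ℤ, ∃ D : ℝ, ∀ g : Fin n → ℤ, (∀ i, |g i| ≤ B) → f g ≤ D := by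
    intro B
    have hfin : (f '' (Set.Icc (fun _ => -B) (fun _ => B))).Finite :=
      (Set.finite_Icc _ _).image f
    obtain ⟨D, hD⟩ := hfin.bddAbove
    refine ⟨D, fun g hg => hD ⟨g, ⟨fun i => (abs_le.mp (hg i)).1, fun i => (abs_le.mp (hg i)).2⟩, rfl⟩⟩
  obtain ⟨R, hR, hdense⟩ : ∃ R : ℝ, 0 ≤ R ∧ ∀ x : X, ∃ g : Fin n → ℤ, dist x (g +ᵥ x₀) ≤ R := by
    obtain ⟨K, hK, hKx⟩ := hcocompact
    obtain ⟨R, hR⟩ := hK.isBounded.subset_closedBall x₀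
    refine ⟨max R 0, le_max_right _ _, fun x => ?_⟩
    obtain ⟨g, hg⟩ := hKx x
    refine ⟨-g, ?_⟩
    have := hR hg
    rw [Metric.mem_closedBall] at this
    rw [← hisom g, vadd_vadd, add_neg_cancel, zero_vadd]
    exact this.trans (le_max_left _ _)
  obtain ⟨M, hM0, hM⟩ : ∃ M : ℤ, 0 ≤ M ∧ ∀ g, f g ≤ 2 * R + 1 → ∀ i, |g i| ≤ M := by
    have hfin := hpd (Metric.closedBall x₀ (2 * R + 1)) (isCompact_closedBall _ _)
    have hfin2 := (hfin.image (fun g => ∑ i, |g i|)).bddAbove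
    obtain ⟨M, hM⟩ := hfin2
    refine ⟨max M 0, le_max_right _ _, fun g hg i => ?_⟩
    have h1 : ∑ i, |g i| ≤ M := by
      apply hM
      refine ⟨g, ⟨g +ᵥ x₀, ⟨x₀, ?_, rfl⟩, ?_⟩, rfl⟩
      · apply Metric.mem_closedBall_self; linarith
      · rw [Metric.mem_closedBall, dist_comm]; exact hg
    have h2 : |g i| ≤ ∑ i, |g i| :=
      Finset.single_le_sum (f := fun i => |g i|) (fun i _ => abs_nonneg _) (Finset.mem_univ i)
    exact (h2.trans h1).trans (le_max_left _ _)
  have disc : ∀ g, ∃ (m : ℕ) (h : ℕ → Fin n → ℤ) (τ : ℕ → ℝ), 1 ≤ m ∧ (m : ℝ) ≤ f g + 2 ∧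
      h 0 = 0 ∧ h m = g ∧ τ 0 = 0 ∧ τ m = f g ∧ (∀ i, τ (i + 1) - τ i ≤ 1) ∧
      ∀ i j, i ≤ j → j ≤ m → f (h j - h i) ≤ τ j - τ i + 2 * R := by
    intro g
    obtain ⟨γ, γ0, γ1, hγ⟩ := hgeo x₀ (g +ᵥ x₀)
    change γ (f g) = _ at γ1
    change ∀ s ∈ Set.Icc (0 : ℝ) (f g), ∀ t ∈ Set.Icc (0 : ℝ) (f g), _ at hγ
    choose p hp using hdense
    let m := ⌈f g⌉₊ + 1
    have hmpos : (0 : ℝ) < m := by positivity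
    have hm1 : f g ≤ m := by
      have := Nat.le_ceil (f g)
      simp only [m]; push_cast; linarith
    have hm2 : (m : ℝ) ≤ f g + 2 := by
      have := Nat.ceil_lt_add_one (fnn g)
      simp only [m]; push_cast; linarith
    let τ : ℕ → ℝ := fun i => i * (f g / m)
    have hq : 0 ≤ f g / m := div_nonneg (fnn g) hmpos.le
    have τm : τ m = f g := by simp only [τ]; field_simp
    let h : ℕ → Fin n → ℤ := fun i => if i = 0 then 0 else if i = m then g else p (γ (τ i))
    have hh : ∀ i, dist (γ (τ i)) (h i +ᵥ x₀) ≤ R := by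
      intro i
      by_cases h1 : i = 0
      · have : γ (τ i) = x₀ := by simp [τ, h1, γ0]
        rw [this]; simp [h, h1, hR]
      · by_cases h2 : i = m
        · rw [h2, τm, γ1]
          simp [h, m, hR]
        · simp only [h, h1, h2, if_false]; exact hp _
    have hτmono : ∀ i j, i ≤ j → τ i ≤ τ j := by
      intro i j hij
      simp only [τ]
      gcongr
    refine ⟨m, h, τ, by simp [m], hm2, by simp [h], by simp [h, m], by simp [τ], τm, ?_, ?_⟩
    · intro i
      simp only [τ]
      have : f g / m ≤ 1 := by rw [div_le_one hmpos]; exact hm1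
      push_cast; linarith
    · intro i j hij hj
      rw [← fsub]
      have t0 : 0 ≤ τ i := by simp only [τ]; positivity
      have t1 := hτmono i j hij
      have t2 := hτmono j m hj
      rw [τm] at t2
      have e := hγ (τ i) ⟨t0, t1.trans t2⟩ (τ j) ⟨t0.trans t1, t2⟩
      rw [abs_sub_comm, abs_of_nonneg (by linarith)] at e
      have d1 := dist_triangle4 (h i +ᵥ x₀) (γ (τ i)) (γ (τ j)) (h j +ᵥ x₀)
      have d2 := hh i
      have d3 := hh j
      rw [dist_comm] at d2
      linarith
  have hlow : ∀ g i, (1 / ((M : ℝ) + 1)) * |(g i : ℝ)| ≤ f g + 2 := by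
    intro g i
    obtain ⟨m, h, τ, hm, hm2, h0, hmg, τ0, τm, τs, hf⟩ := disc g
    have key : ∀ k ≤ m, |h k i| ≤ M * k := by
      intro k
      induction k with
      | zero => intro _; simp [h0]
      | succ k ih =>
        intro hk
        have a1 := ih (by omega)
        have a2 := hM (h (k + 1) - h k) (by
          have := hf k (k + 1) (by omega) hk
          have := τs k
          linarith) i
        have a3 := abs_add_le (h k i) ((h (k + 1) - h k) i)
        rw [Pi.sub_apply, add_sub_cancel] at a3
        rw [Pi.sub_apply] at a2
        push_cast; linarith
    have a := key m le_rfl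
    rw [hmg] at a
    have a' : |(g i : ℝ)| ≤ M * m := by exact_mod_cast a
    have hMr : (0 : ℝ) ≤ M := by exact_mod_cast hM0
    rw [one_div, inv_mul_le_iff₀ (by linarith)]
    have : (0 : ℝ) ≤ m := by positivity
    nlinarith
  obtain ⟨C, hC, hdbl⟩ := PM.doubling f f0 fadd R hR disc M hM hbd
  have hMr : (0 : ℝ) ≤ M := by exact_mod_cast hM0
  obtain ⟨ν, hnn, hdef, hhom, htri, hlim, hcmp, D, hD⟩ :=
    PM.normExt f f0 fnn fneg fadd hbd (1 / ((M : ℝ) + 1)) (by positivity) 2 hlow C hdbl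
  refine ⟨fun g => ν (PM.io g), hlim, ν, hnn, hdef, hhom, htri, fun g => rfl,
    ⟨C, hC, hcmp⟩, ?_⟩
  choose p hp using hdense
  have iosub : ∀ g h : Fin n → ℤ, PM.io g - PM.io h = PM.io (g - h) := by
    intro g h; ext i; simp [PM.io_apply]
  refine ⟨2 * R + C + |D|, fun x => PM.io (p x), ?_, ?_⟩
  · intro a b
    rw [iosub]
    have h1 := hcmp (p a - p b)
    rw [← fsub, dist_comm] at h1
    have h2 := hp a
    have h3 := hp b
    have h4 := dist_triangle4 (p a +ᵥ x₀) a b (p b +ᵥ x₀)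
    have h5 := dist_triangle4 a (p a +ᵥ x₀) (p b +ᵥ x₀) b
    rw [dist_comm (p a +ᵥ x₀) a] at h4
    rw [dist_comm (p b +ᵥ x₀) b] at h5
    have := abs_nonneg D
    rw [abs_le]; constructor <;> linarith [h1.1, h1.2]
  · intro v
    let g : Fin n → ℤ := fun i => ⌊v i⌋
    refine ⟨g +ᵥ x₀, ?_⟩
    have h1 := hp (g +ᵥ x₀)
    rw [fsub] at h1
    have h2 := (hcmp (p (g +ᵥ x₀) - g)).1
    have h3 : ν (PM.io g - v) ≤ D := by
      have e : PM.io g - v = (-1 : ℝ) • (v - PM.io g) := by simp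
      rw [e, hhom]
      have := hD (v - PM.io g)
      have e2 : (fun i => ⌊(v - PM.io g) i⌋) = (0 : Fin n → ℤ) := by
        funext i
        simp [PM.io_apply, g]
      rw [e2, f0] at this
      simpa using this
    have h4 := htri (PM.io (p (g +ᵥ x₀) - g)) (PM.io g - v)
    rw [← iosub, sub_add_sub_cancel] at h4
    rw [← iosub] at h2
    have := le_abs_self D
    linarith
end

section
/- Let f : ℕ₊ → (0,∞) be a sub-additive function (f(m+n) ≤ f(m) + f(n) for all m,n) such that f(n) → ∞ as n → ∞ and f(n) ≤ f(2n)/2 + C for some C > 0 and all n. Then c := lim_{n→∞} f(n)/n exists, c > 0, and c·n ≤ f(n) ≤ c·n + 2C for all n. -/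
/-- Lemma on sub-additive functions: if `f : ℕ₊ → (0, ∞)` is sub-additive, tends to
infinity, and satisfies `f(n) ≤ f(2n)/2 + C`, then `c := lim f(n)/n` exists, is
positive, and `c·n ≤ f(n) ≤ c·n + 2C` for all `n`. -/
theorem subadditive_doubling_bound
    (f : ℕ+ → ℝ) (hpos : ∀ n : ℕ+, 0 < f n)
    (hsub : ∀ m n : ℕ+, f (m + n) ≤ f m + f n)
    (hinf : Filter.Tendsto f Filter.atTop Filter.atTop)
    (C : ℝ) (hC : 0 < C)
    (hdouble : ∀ n : ℕ+, f n ≤ f (2 * n) / 2 + C) :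
    ∃ c : ℝ,
      Filter.Tendsto (fun n : ℕ+ => f n / (n : ℝ)) Filter.atTop (nhds c) ∧
      0 < c ∧ ∀ n : ℕ+, c * (n : ℝ) ≤ f n ∧ f n ≤ c * (n : ℝ) + 2 * C := by
  obtain ⟨u, hu0, hu⟩ : ∃ u : ℕ → ℝ, u 0 = 0 ∧ ∀ n : ℕ+, u (n : ℕ) = f n := by
    refine ⟨fun n => if h : 0 < n then f ⟨n, h⟩ else 0, by simp, fun n => ?_⟩
    have := n.pos
    simp only [this, dif_pos]
    rfl
  have hS : Subadditive u := by
    intro m n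
    rcases Nat.eq_zero_or_pos m with rfl | hm
    · simp [hu0]
    rcases Nat.eq_zero_or_pos n with rfl | hn
    · simp [hu0]
    lift m to ℕ+ using hm
    lift n to ℕ+ using hn
    have := hsub m n
    rw [← hu, ← hu, ← hu] at this
    exact this
  have hb : BddBelow (Set.range fun n : ℕ => u n / n) := by
    refine ⟨0, ?_⟩
    rintro _ ⟨n, rfl⟩
    rcases Nat.eq_zero_or_pos n with rfl | hn
    · simp
    lift n to ℕ+ using hn
    have h1 := hpos n
    rw [← hu] at h1
    exact div_nonneg h1.le (Nat.cast_nonneg _)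
  have hlim := hS.tendsto_lim hb
  have hlow : ∀ n : ℕ+, hS.lim * (n : ℝ) ≤ f n := by
    intro n
    have h1 := hS.lim_le_div hb n.pos.ne'
    rw [hu, le_div_iff₀ (by exact_mod_cast n.pos)] at h1
    exact h1
  have hk : ∀ (n : ℕ+) (k : ℕ), f n - 2 * C ≤ (f (2 ^ k * n) - 2 * C) / 2 ^ k := by
    intro n k
    induction k with
    | zero => simp
    | succ k ih =>
      refine ih.trans ?_
      have h1 := hdouble (2 ^ k * n)
      rw [← mul_assoc, ← pow_succ'] at h1
      rw [pow_succ' (2 : ℝ), ← div_div]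
      gcongr
      linarith
  have hup : ∀ n : ℕ+, f n ≤ hS.lim * (n : ℝ) + 2 * C := by
    intro n
    have hn : (0 : ℝ) < (n : ℝ) := by exact_mod_cast n.pos
    have ht : Filter.Tendsto (fun k : ℕ => 2 ^ k * (n : ℕ)) Filter.atTop Filter.atTop :=
      (tendsto_pow_atTop_atTop_of_one_lt (one_lt_two : (1 : ℕ) < 2)).atTop_mul_const' n.pos
    have h2 := (hlim.comp ht).mul_const (n : ℝ)
    have h3 : f n - 2 * C ≤ hS.lim * (n : ℝ) := by
      refine ge_of_tendsto' h2 fun k => ?_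
      refine (hk n k).trans ?_
      have h4 := hu (2 ^ k * n)
      have h5 : ((2 ^ k * n : ℕ+) : ℕ) = 2 ^ k * (n : ℕ) := by simp
      rw [h5] at h4
      simp only [Function.comp]
      rw [h4]
      push_cast
      have h6 : f (2 ^ k * n) / (2 ^ k * (n : ℝ)) * (n : ℝ) = f (2 ^ k * n) / 2 ^ k := by
        field_simp
      rw [h6]
      gcongr
      linarith
    linarith
  refine ⟨hS.lim, ?_, ?_, fun n => ⟨hlow n, hup n⟩⟩
  · have ht : Filter.Tendsto (fun n : ℕ+ => (n : ℕ)) Filter.atTop Filter.atTop := by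
      refine Filter.tendsto_atTop.2 fun b => ?_
      filter_upwards [Filter.eventually_ge_atTop b.succPNat] with n hn
      have h1 : (b.succPNat : ℕ) ≤ n := hn
      rw [Nat.succPNat_coe] at h1
      omega
    refine (hlim.comp ht).congr fun n => ?_
    simp [hu]
  · obtain ⟨n, hn⟩ := (hinf.eventually_gt_atTop (2 * C)).exists
    have h1 := hup n
    have h2 : (0 : ℝ) < (n : ℝ) := by exact_mod_cast n.pos
    exact pos_of_mul_pos_left (by linarith) h2.le
end

section
/- Let (X,d) be a proper geodesic metric space on which Γ = ℤⁿ acts cocompactly and properly discontinuously by isometries, and suppose there is a continuous map F : X → ℝⁿ equivariant with respect to the given action of ℤⁿ on X and the standard action of ℤⁿ on ℝⁿ by translations. Fix x₀ ∈ X. Then there exists a constant C ≥ 0 such that d(x₀, g(x₀)) ≤ d(x₀, g²(x₀))/2 + C for every g ∈ Γ. -/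
namespace HR

def dl {α : Type*} : List α → (List α → ZMod 2) → ZMod 2
  | [], _ => 0
  | v :: τ, f => f τ + dl τ (fun ρ => f (v :: ρ))

theorem z2 (a : ZMod 2) : a + a = 0 := by revert a; decide

theorem dl_congr {α : Type*} (σ : List α) (f g : List α → ZMod 2)
    (h : ∀ ρ : List α, ρ.Sublist σ → ρ.length + 1 = σ.length → f ρ = g ρ) : dl σ f = dl σ g := by
  induction σ generalizing f g with
  | nil => rfl
  | cons v τ ih =>
    simp only [dl]
    rw [h τ (List.sublist_cons_self v τ) (by simp)]
    congr 1
    apply ih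
    intro ρ h1 h2
    exact h _ (h1.cons_cons v) (by simp [h2])

theorem dl_add {α : Type*} (σ : List α) (f g : List α → ZMod 2) :
    dl σ (fun τ => f τ + g τ) = dl σ f + dl σ g := by
  induction σ generalizing f g with
  | nil => simp [dl]
  | cons v τ ih => simp only [dl]; rw [ih]; ring

theorem dl_zero {α : Type*} (σ : List α) : dl σ (fun _ => 0) = 0 := by
  induction σ with
  | nil => simp [dl]
  | cons v τ ih => simp [dl, ih]

theorem dl_dl {α : Type*} (σ : List α) (f : List α → ZMod 2) :
    dl σ (fun τ => dl τ f) = 0 := by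
  induction σ generalizing f with
  | nil => simp [dl]
  | cons v τ ih =>
    simp only [dl]; rw [dl_add, ih, add_zero, z2]

theorem dl_map {α β : Type*} (L : α → β) (σ : List α) (f : List β → ZMod 2) :
    dl (σ.map L) f = dl σ (fun τ => f (τ.map L)) := by
  induction σ generalizing f with
  | nil => simp [dl]
  | cons v τ ih => simp only [dl, List.map_cons]; rw [ih]

theorem dl_perm {α : Type*} {σ τ : List α} (h : σ.Perm τ) (f : List α → ZMod 2)
    (hf : ∀ a b : List α, a.Perm b → f a = f b) : dl σ f = dl τ f := by
  induction h generalizing f with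
  | nil => rfl
  | cons x h ih =>
    simp only [dl]; rw [hf _ _ h, ih _ (fun a b hab => hf _ _ (hab.cons x))]
  | swap x y l =>
    simp only [dl]
    have : (fun ρ => f (y :: x :: ρ)) = (fun ρ => f (x :: y :: ρ)) := by
      funext ρ; exact hf _ _ (List.Perm.swap x y ρ)
    rw [this]; ring
  | trans _ _ ih1 ih2 => rw [ih1 f hf, ih2 f hf]

theorem dl_degen {α : Type*} (ρ ρ' : List α) (p : α) (g : List α → ZMod 2)
    (hg : ∀ a b : List α, g (a ++ p :: p :: b) = 0) : dl (ρ ++ p :: p :: ρ') g = 0 := by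
  induction ρ generalizing g with
  | nil =>
    simp only [dl, List.nil_append]
    have : (fun ρ => g (p :: p :: ρ)) = fun _ => 0 := by
      funext ρ; exact hg [] ρ
    rw [this, dl_zero, add_zero, z2]
  | cons v τ ih =>
    simp only [dl, List.cons_append]
    rw [hg, ih _ (fun a b => hg (v :: a) b), add_zero]

theorem dl_snoc {α : Type*} (ρ : List α) (w : α) (g : List α → ZMod 2)
    (hg : ∀ (a b : List α) (x : α), ρ = a ++ x :: b → g (a ++ b ++ [w]) = 0) :
    dl (ρ ++ [w]) g = g ρ := by
  induction ρ generalizing g with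
  | nil => simp [dl]
  | cons v τ ih =>
    simp only [dl, List.cons_append]
    rw [ih]
    · have := hg [] τ v rfl
      simp only [List.nil_append] at this
      rw [this, zero_add]
    · intro a b x h
      exact hg (v :: a) b x (by simp [h])

section sd
variable {E : Type*} [AddCommGroup E] [Module ℝ E]

noncomputable def bary (σ : List E) : E := (1 / (σ.length : ℝ)) • σ.sum

noncomputable def sdN : ℕ → (List E → ZMod 2) → List E → ZMod 2
  | 0, f, [] => f []
  | 0, _, _ :: _ => 0
  | m + 1, f, σ => dl σ (sdN m (fun τ => f (bary σ :: τ)))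

theorem sdN_add (m : ℕ) (f g : List E → ZMod 2) (σ : List E) :
    sdN m (fun τ => f τ + g τ) σ = sdN m f σ + sdN m g σ := by
  induction m generalizing f g σ with
  | zero => cases σ <;> simp [sdN]
  | succ m ih =>
    simp only [sdN]
    rw [← dl_add]
    congr 1
    funext τ
    exact ih _ _ _

theorem sdN_dl (m : ℕ) (f : List E → ZMod 2) (σ : List E) (h : σ.length = m + 1) :
    sdN (m + 1) (fun τ => dl τ f) σ = dl σ (sdN m f) := by
  induction m generalizing f σ with
  | zero =>
    simp only [sdN, dl]
    apply dl_congr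
    intro ρ _ h2
    have : ρ = [] := by apply List.eq_nil_of_length_eq_zero; omega
    subst this
    simp [sdN, dl]
  | succ m ih =>
    rw [sdN]
    simp only [dl]
    have e : sdN (m + 1) (fun τ => f τ + dl τ (fun ρ => f (bary σ :: ρ))) =
      fun τ => sdN (m + 1) f τ + sdN (m + 1) (fun τ => dl τ (fun ρ => f (bary σ :: ρ))) τ := by
      funext τ; exact sdN_add _ _ _ _
    rw [e, dl_add]
    have : dl σ (sdN (m + 1) (fun τ => dl τ (fun ρ => f (bary σ :: ρ)))) =
        dl σ (fun τ => dl τ (sdN m (fun ρ => f (bary σ :: ρ)))) := by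
      apply dl_congr
      intro ρ _ h2
      exact ih _ _ (by omega)
    rw [this, dl_dl, add_zero]

theorem sdN_map (L : E →ₗ[ℝ] E) (m : ℕ) (f : List E → ZMod 2) (σ : List E) :
    sdN m f (σ.map L) = sdN m (fun τ => f (τ.map L)) σ := by
  induction m generalizing f σ with
  | zero => cases σ <;> simp [sdN]
  | succ m ih =>
    simp only [sdN]
    rw [dl_map]
    congr 1
    funext τ
    rw [ih]
    have : bary (σ.map L) = L (bary σ) := by
      simp [bary, map_list_sum]
    simp [this]

theorem sdN_degen (m : ℕ) (f : List E → ZMod 2) (ρ ρ' : List E) (p : E) :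
    sdN m f (ρ ++ p :: p :: ρ') = 0 := by
  induction m generalizing f ρ ρ' with
  | zero => cases ρ <;> simp [sdN]
  | succ m ih =>
    simp only [sdN]
    apply dl_degen
    intro a b
    exact ih _ _ _

theorem bary_mem (σ : List E) (h : σ ≠ []) : bary σ ∈ convexHull ℝ {x | x ∈ σ} := by
  have hl : (0 : ℝ) < σ.length := by
    exact_mod_cast List.length_pos_of_ne_nil h
  have := (convex_convexHull ℝ {x | x ∈ σ}).sum_mem (t := Finset.univ)
    (w := fun _ : Fin σ.length => 1 / (σ.length : ℝ)) (z := fun i => σ[i])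
    (fun _ _ => by positivity) (by simp; field_simp)
    (fun i _ => subset_convexHull ℝ _ (by simp))
  rw [← Finset.smul_sum] at this
  rw [bary]
  convert this using 2
  simp [Fin.sum_univ_getElem]

theorem sum_bd (p : Seminorm ℝ E) (v : E) (D : ℝ) (σ : List E) (h : ∀ x ∈ σ, p (x - v) ≤ D) :
    p (σ.sum - (σ.length : ℝ) • v) ≤ σ.length * D := by
  induction σ with
  | nil => simp
  | cons x τ ih =>
    have h1 := ih (fun y hy => h y (List.mem_cons_of_mem _ hy))
    have h2 := h x List.mem_cons_self
    have e : (x :: τ).sum - ((x :: τ).length : ℝ) • v = (x - v) + (τ.sum - (τ.length : ℝ) • v) := by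
      simp only [List.sum_cons, List.length_cons]; push_cast; module
    rw [e]
    refine (map_add_le_add p _ _).trans ?_
    simp only [List.length_cons]; push_cast; linarith

theorem bary_dist (p : Seminorm ℝ E) (D : ℝ) (K : ℕ) (σ : List E) (hK : σ.length ≤ K)
    (hD : 0 ≤ D)
    (h : ∀ x ∈ σ, ∀ y ∈ σ, p (x - y) ≤ D) (w : E) (hw : w ∈ convexHull ℝ {x | x ∈ σ}) :
    p (w - bary σ) ≤ (1 - 1 / (K : ℝ)) * D := by
  suffices hs : convexHull ℝ {x | x ∈ σ} ⊆ p.closedBall (bary σ) ((1 - 1 / (K : ℝ)) * D) by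
    have := hs hw
    rwa [Seminorm.mem_closedBall] at this
  apply convexHull_min _ (Seminorm.convex_closedBall p _ _)
  intro v hv
  rw [Seminorm.mem_closedBall]
  classical
  have hv' : v ∈ σ := hv
  have hp := List.perm_cons_erase hv'
  have hl := hp.length_eq
  have hs := hp.sum_eq
  simp only [List.length_cons, List.sum_cons] at hl hs
  have hb := sum_bd p v D (σ.erase v) (fun x hx => h x (List.mem_of_mem_erase hx) v hv')
  set m := (σ.erase v).length
  have hm : (0 : ℝ) < (m : ℝ) + 1 := by positivity
  have e : v - bary σ = (-(1 / ((m : ℝ) + 1))) • ((σ.erase v).sum - (m : ℝ) • v) := by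
    rw [bary, hs, hl]; push_cast
    have : v = ((1 / ((m : ℝ) + 1)) * ((m : ℝ) + 1)) • v := by
      rw [one_div_mul_cancel hm.ne', one_smul]
    nth_rewrite 1 [this]
    module
  rw [e, map_smul_eq_mul, norm_neg, Real.norm_of_nonneg (by positivity)]
  have hKm : (m : ℝ) + 1 ≤ K := by exact_mod_cast hl ▸ hK
  calc 1 / ((m : ℝ) + 1) * p ((σ.erase v).sum - (m : ℝ) • v) ≤ 1 / ((m : ℝ) + 1) * (m * D) := by gcongr
    _ = (1 - 1 / ((m : ℝ) + 1)) * D := by field_simp; ring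
    _ ≤ _ := by gcongr

theorem sdN_congr (p : Seminorm ℝ E) (D : ℝ) (K : ℕ) (hD : 0 ≤ D) (hK0 : 1 ≤ K) (m : ℕ) (hK : m ≤ K)
    (f g : List E → ZMod 2)
    (σ : List E) (hσ : σ.length = m)
    (h : ∀ x ∈ σ, ∀ y ∈ σ, p (x - y) ≤ D)
    (hfg : ∀ τ : List E, τ.length = m → (∀ x ∈ τ, x ∈ convexHull ℝ {x | x ∈ σ}) →
      (∀ x ∈ τ, ∀ y ∈ τ, p (x - y) ≤ (1 - 1 / (K : ℝ)) * D) → f τ = g τ) :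
    sdN m f σ = sdN m g σ := by
  have hr : 0 ≤ (1 - 1 / (K : ℝ)) * D := by
    apply mul_nonneg _ hD
    have : (1 : ℝ) ≤ K := by exact_mod_cast hK0
    rw [sub_nonneg, div_le_one (by linarith)]; exact this
  induction m generalizing f g σ with
  | zero =>
    have : σ = [] := List.eq_nil_of_length_eq_zero hσ
    subst this
    simp only [sdN]
    exact hfg [] rfl (by simp) (by simp)
  | succ m ih =>
    simp only [sdN]
    apply dl_congr
    intro ρ h1 h2
    have hsub : convexHull ℝ {x | x ∈ ρ} ⊆ convexHull ℝ {x | x ∈ σ} :=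
      convexHull_mono (fun x hx => h1.subset hx)
    apply ih (by omega) _ _ _ (by omega)
    · intro x hx y hy
      exact h x (h1.subset hx) y (h1.subset hy)
    · intro τ t1 t2 t3
      have hb : ∀ x ∈ τ, p (x - bary σ) ≤ (1 - 1 / (K : ℝ)) * D := fun x hx =>
        bary_dist p D K σ (by omega) hD h x (hsub (t2 x hx))
      apply hfg
      · simp [t1]
      · intro x hx
        rcases List.mem_cons.1 hx with rfl | hx
        · exact bary_mem σ (by intro h; simp [h] at hσ)
        · exact hsub (t2 x hx)
      · intro x hx y hy
        rcases List.mem_cons.1 hx with rfl | hx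
        · rcases List.mem_cons.1 hy with rfl | hy
          · simpa using hr
          · rw [map_sub_rev]; exact hb y hy
        · rcases List.mem_cons.1 hy with rfl | hy
          · exact hb x hx
          · exact t3 x hx y hy

noncomputable def it (M m : ℕ) (f : List E → ZMod 2) : List E → ZMod 2 := (sdN m)^[M] f

theorem it_succ (M m : ℕ) (f : List E → ZMod 2) : it (M + 1) m f = sdN m (it M m f) := by
  simp [it, Function.iterate_succ_apply']

theorem sdN_congr_len (m : ℕ) (f g : List E → ZMod 2) (σ : List E) (hσ : σ.length = m)
    (hfg : ∀ τ : List E, τ.length = m → f τ = g τ) : sdN m f σ = sdN m g σ := by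
  apply sdN_congr 0 0 (m + 1) le_rfl (by omega) m (by omega) f g σ hσ (by simp)
  intro τ h _ _
  exact hfg τ h

theorem it_dl (M m : ℕ) (f : List E → ZMod 2) (σ : List E) (h : σ.length = m + 1) :
    it M (m + 1) (fun τ => dl τ f) σ = dl σ (it M m f) := by
  induction M generalizing σ with
  | zero => simp [it]
  | succ M ih =>
    rw [it_succ, it_succ, ← sdN_dl _ _ _ h]
    apply sdN_congr_len _ _ _ _ h
    intro τ ht
    exact ih τ ht

theorem it_add (M m : ℕ) (f g : List E → ZMod 2) (σ : List E) :
    it M m (fun τ => f τ + g τ) σ = it M m f σ + it M m g σ := by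
  induction M generalizing σ with
  | zero => simp [it]
  | succ M ih =>
    rw [it_succ, it_succ, it_succ, ← sdN_add]
    congr 1
    funext τ; exact ih τ

theorem it_map (L : E →ₗ[ℝ] E) (M m : ℕ) (f : List E → ZMod 2) (σ : List E) :
    it M m f (σ.map L) = it M m (fun τ => f (τ.map L)) σ := by
  induction M generalizing σ with
  | zero => simp [it]
  | succ M ih =>
    rw [it_succ, it_succ, sdN_map]
    congr 1
    funext τ; exact ih τ

theorem it_degen (M m : ℕ) (f : List E → ZMod 2) (ρ ρ' : List E) (p : E) :
    it (M + 1) m f (ρ ++ p :: p :: ρ') = 0 := by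
  rw [it_succ]; exact sdN_degen _ _ _ _ _

theorem it_congr (p : Seminorm ℝ E) (D : ℝ) (K : ℕ) (hD : 0 ≤ D) (hK0 : 1 ≤ K) (M m : ℕ) (hK : m ≤ K)
    (f g : List E → ZMod 2)
    (σ : List E) (hσ : σ.length = m)
    (h : ∀ x ∈ σ, ∀ y ∈ σ, p (x - y) ≤ D)
    (hfg : ∀ τ : List E, τ.length = m → (∀ x ∈ τ, x ∈ convexHull ℝ {x | x ∈ σ}) →
      (∀ x ∈ τ, ∀ y ∈ τ, p (x - y) ≤ (1 - 1 / (K : ℝ)) ^ M * D) → f τ = g τ) :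
    it M m f σ = it M m g σ := by
  induction M generalizing σ D with
  | zero =>
    simp only [it, Function.iterate_zero, id]
    exact hfg σ hσ (fun x hx => subset_convexHull ℝ _ hx) (by simpa using h)
  | succ M ih =>
    rw [it_succ, it_succ]
    apply sdN_congr p D K hD hK0 m hK _ _ σ hσ h
    intro τ t1 t2 t3
    have hr : 0 ≤ (1 - 1 / (K : ℝ)) * D := by
      apply mul_nonneg _ hD
      have : (1 : ℝ) ≤ K := by exact_mod_cast hK0
      rw [sub_nonneg, div_le_one (by linarith)]; exact this
    apply ih ((1 - 1 / (K : ℝ)) * D) hr τ t1 t3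
    intro ω w1 w2 w3
    apply hfg ω w1
    · intro x hx
      exact convexHull_min (fun y hy => t2 y hy) (convex_convexHull ℝ _) (w2 x hx)
    · intro x hx y hy
      have := w3 x hx y hy
      rw [pow_succ, mul_assoc]; exact this

theorem it_congr_hull (M m : ℕ) (f g : List E → ZMod 2) (σ : List E) (hσ : σ.length = m)
    (hfg : ∀ τ : List E, τ.length = m → (∀ x ∈ τ, x ∈ convexHull ℝ {x | x ∈ σ}) → f τ = g τ) :
    it M m f σ = it M m g σ := by
  apply it_congr 0 0 (m + 1) le_rfl (by omega) M m (by omega) f g σ hσ (by simp)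
  intro τ h h' _
  exact hfg τ h h'

end sd

section fan

def alt : Bool → List ℤ → Prop
  | _, [] => True
  | s, a :: τ => (decide (0 < a) = s) ∧ alt (!s) τ

open Classical in
noncomputable def ind (P : Prop) : ZMod 2 := if P then 1 else 0

theorem ind_congr {P Q : Prop} (h : P ↔ Q) : ind P = ind Q := by rw [propext h]

theorem ind_true {P : Prop} (h : P) : ind P = 1 := by unfold ind; rw [if_pos h]

theorem ind_false {P : Prop} (h : ¬ P) : ind P = 0 := by unfold ind; rw [if_neg h]

noncomputable def th (s : Bool) (τ : List ℤ) : ZMod 2 := ind (alt s τ)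

theorem th_dl (s : Bool) (τ : List ℤ) : dl τ (th s) = th s τ + th (!s) τ := by
  induction τ generalizing s with
  | nil => rw [th, th, ind_true (P := alt s []) trivial, ind_true (P := alt (!s) []) trivial]; rfl
  | cons a τ ih =>
    simp only [dl]
    by_cases h : decide (0 < a) = s
    · have e : (fun ρ => th s (a :: ρ)) = th (!s) := by
        funext ρ; exact ind_congr ⟨fun h => h.2, fun h' => ⟨h, h'⟩⟩
      have e2 : th (!s) (a :: τ) = 0 := by
        apply ind_false; intro h'; have := h'.1; rw [h] at this; simp at this
      have e3 : th s (a :: τ) = th (!s) τ := congrFun e τ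
      rw [e, ih, e2, e3, Bool.not_not, add_comm (th (!s) τ), ← add_assoc, z2]; ring
    · have e : (fun ρ => th s (a :: ρ)) = fun _ => 0 := by
        funext ρ; exact ind_false (fun h' => h h'.1)
      have e3 : th s (a :: τ) = 0 := congrFun e τ
      have h' : decide (0 < a) = !s := by
        revert h; cases s <;> simp
      have e2 : th (!s) (a :: τ) = th s τ := by
        apply ind_congr; simp [alt, h']
      rw [e, dl_zero, e2, e3]; ring

def Good (σ : List ℤ) : Prop := ∀ a ∈ σ, ∀ b ∈ σ, a ≠ 0 ∧ a ≠ -b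

def lt' (a b : ℤ) : Prop := a.natAbs < b.natAbs
def le' (a b : ℤ) : Prop := a.natAbs ≤ b.natAbs

instance : DecidableRel le' := fun a b => inferInstanceAs (Decidable (a.natAbs ≤ b.natAbs))
instance : Std.Total le' := ⟨fun a b => le_total a.natAbs b.natAbs⟩
instance : IsTrans ℤ le' := ⟨fun _ _ _ h1 h2 => le_trans (α := ℕ) h1 h2⟩

noncomputable def al (s : Bool) (σ : List ℤ) : ZMod 2 :=
  ind (∃ τ : List ℤ, τ.Perm σ ∧ τ.Pairwise lt' ∧ alt s τ)

theorem al_perm (s : Bool) (a b : List ℤ) (h : a.Perm b) : al s a = al s b := by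
  unfold al
  have : (∃ τ : List ℤ, τ.Perm a ∧ τ.Pairwise lt' ∧ alt s τ) ↔
    (∃ τ : List ℤ, τ.Perm b ∧ τ.Pairwise lt' ∧ alt s τ) :=
    ⟨fun ⟨τ, h1, h2⟩ => ⟨τ, h1.trans h, h2⟩, fun ⟨τ, h1, h2⟩ => ⟨τ, h1.trans h.symm, h2⟩⟩
  exact ind_congr this

theorem alt_strict (s : Bool) (ρ : List ℤ) (hg : Good ρ) (hs : ρ.Pairwise le') (ha : alt s ρ) :
    ρ.Pairwise lt' := by
  induction ρ generalizing s with
  | nil => exact List.Pairwise.nil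
  | cons a ρ ih =>
    have hg' : Good ρ := fun x hx y hy =>
      hg x (List.mem_cons_of_mem _ hx) y (List.mem_cons_of_mem _ hy)
    rw [List.pairwise_cons] at hs
    have ih' := ih (!s) hg' hs.2 ha.2
    refine List.pairwise_cons.2 ⟨?_, ih'⟩
    cases ρ with
    | nil => simp
    | cons b ρ =>
      have hab : lt' a b := by
        have h1 := hs.1 b List.mem_cons_self
        have h2 := (hg a List.mem_cons_self b (by simp)).2
        have h3 := ha.1
        have h4 := ha.2.1
        unfold le' at h1
        unfold lt'
        rcases Nat.lt_or_eq_of_le h1 with h | h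
        · exact h
        · exfalso
          rcases Int.natAbs_eq_natAbs_iff.1 h with h | h
          · subst h; rw [h3] at h4; simp at h4
          · exact h2 h
      intro y hy
      rcases List.mem_cons.1 hy with rfl | hy
      · exact hab
      · exact lt_trans (α := ℕ) hab ((List.pairwise_cons.1 ih').1 y hy)

theorem al_eq_th (s : Bool) (ρ : List ℤ) (hg : Good ρ) (hs : ρ.Pairwise le') :
    al s ρ = th s ρ := by
  unfold al th
  have : (∃ τ : List ℤ, τ.Perm ρ ∧ τ.Pairwise lt' ∧ alt s τ) ↔ alt s ρ := by
    constructor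
    · rintro ⟨τ, h1, h2, h3⟩
      have : τ = ρ := by
        apply List.Perm.eq_of_pairwise (le := le') _ _ hs h1
        · intro a b ha hb hab hba
          have : a.natAbs = b.natAbs := le_antisymm hab hba
          rcases Int.natAbs_eq_natAbs_iff.1 this with h | h
          · exact h
          · exact absurd h (hg a (h1.subset ha) b hb).2
        · exact h2.imp (fun h => le_of_lt (α := ℕ) h)
      exact this ▸ h3
    · intro h
      exact ⟨ρ, List.Perm.refl _, alt_strict s ρ hg hs h, h⟩
  exact ind_congr this

theorem al_dl (s : Bool) (σ : List ℤ) (hg : Good σ) : dl σ (al s) = al s σ + al (!s) σ := by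
  have hp := List.perm_insertionSort le' σ
  have hs := List.pairwise_insertionSort le' σ
  set τ := List.insertionSort le' σ
  have hgτ : Good τ := fun a ha b hb => hg a (hp.subset ha) b (hp.subset hb)
  rw [← dl_perm hp _ (al_perm s), ← al_perm s _ _ hp, ← al_perm (!s) _ _ hp,
    al_eq_th _ _ hgτ hs, al_eq_th _ _ hgτ hs, ← th_dl]
  apply dl_congr
  intro ρ h1 _
  apply al_eq_th
  · exact fun a ha b hb => hgτ a (h1.subset ha) b (h1.subset hb)
  · exact hs.sublist h1

theorem alt_neg (s : Bool) (τ : List ℤ) (h0 : ∀ a ∈ τ, a ≠ 0) (h : alt s τ) :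
    alt (!s) (τ.map (fun a => -a)) := by
  induction τ generalizing s with
  | nil => trivial
  | cons a τ ih =>
    refine ⟨?_, ih (!s) (fun a ha => h0 a (List.mem_cons_of_mem _ ha)) h.2⟩
    have := h0 a List.mem_cons_self
    have h1 := h.1
    rw [← h1]
    rcases lt_or_gt_of_ne this with h | h
    · have h' : ¬ (0 < a) := by omega
      simp [h, h']
    · have h' : ¬ (0 < -a) := by omega
      simp [h]; omega

theorem al_neg (s : Bool) (σ : List ℤ) (h0 : ∀ a ∈ σ, a ≠ 0) :
    al s (σ.map (fun a => -a)) = al (!s) σ := by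
  have key : ∀ (s : Bool) (σ : List ℤ), (∀ a ∈ σ, a ≠ 0) →
      (∃ τ : List ℤ, τ.Perm σ ∧ τ.Pairwise lt' ∧ alt s τ) →
      (∃ τ : List ℤ, τ.Perm (σ.map (fun a => -a)) ∧ τ.Pairwise lt' ∧ alt (!s) τ) := by
    rintro s σ h0 ⟨τ, h1, h2, h3⟩
    refine ⟨τ.map (fun a => -a), h1.map _, ?_, alt_neg s τ (fun a ha => h0 a (h1.subset ha)) h3⟩
    rw [List.pairwise_map]
    exact h2.imp (fun h => by simpa [lt'] using h)
  unfold al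
  have : (∃ τ : List ℤ, τ.Perm (σ.map (fun a => -a)) ∧ τ.Pairwise lt' ∧ alt s τ) ↔
      (∃ τ : List ℤ, τ.Perm σ ∧ τ.Pairwise lt' ∧ alt (!s) τ) := by
    constructor
    · intro h
      have := key s _ (by intro a ha; simp only [List.mem_map] at ha; obtain ⟨b, hb, rfl⟩ := ha; simpa using h0 b hb) h
      simpa [List.map_map, Function.comp_def] using this
    · intro h
      have := key (!s) _ h0 h
      simpa using this
  exact ind_congr this

theorem al_zero (n : ℕ) (s : Bool) (σ : List ℤ) (h : ∀ a ∈ σ, a ≠ 0 ∧ a.natAbs ≤ n)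
    (hl : σ.length = n + 1) : al s σ = 0 := by
  unfold al
  apply ind_false
  rintro ⟨τ, h1, h2, -⟩
  have hn : (τ.map Int.natAbs).Nodup := by
    rw [List.Nodup, List.pairwise_map]
    exact h2.imp (fun h => ne_of_lt (α := ℕ) h)
  have hc := List.toFinset_card_of_nodup hn
  have hsub : (τ.map Int.natAbs).toFinset ⊆ Finset.Icc 1 n := by
    intro x hx
    simp only [List.mem_toFinset, List.mem_map] at hx
    obtain ⟨a, ha, rfl⟩ := hx
    have := h a (h1.subset ha)
    simp only [Finset.mem_Icc]
    have := Int.natAbs_pos.2 this.1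
    omega
  have := Finset.card_le_card hsub
  rw [hc, List.length_map, h1.length_eq, hl] at this
  simp at this

end fan

section main

noncomputable def e (i : ℕ) : ℕ → ℝ := Pi.single i 1

noncomputable def sh : (ℕ → ℝ) →ₗ[ℝ] (ℕ → ℝ) where
  toFun x := fun i => match i with
    | 0 => 0
    | i + 1 => x i
  map_add' x y := by funext i; cases i <;> simp
  map_smul' c x := by funext i; cases i <;> simp

noncomputable def qq (i : ℕ) : (ℕ → ℝ) →ₗ[ℝ] (ℕ → ℝ) :=
  LinearMap.id + (LinearMap.proj (R := ℝ) (φ := fun _ : ℕ => ℝ) (i + 2)).smulRight (e i - e (i + 2))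

theorem qq_apply (i : ℕ) (x : ℕ → ℝ) : qq i x = x + x (i + 2) • (e i - e (i + 2)) := by
  simp [qq]

theorem sh_e (i : ℕ) : sh (e i) = e (i + 1) := by
  funext j
  cases j with
  | zero => simp [sh, e, Pi.single_apply]
  | succ j => simp [sh, e, Pi.single_apply]

theorem qq_e (i j : ℕ) (h : j ≠ i + 2) : qq i (e j) = e j := by
  rw [qq_apply]
  have : e j (i + 2) = 0 := by simp [e, Pi.single_apply, h.symm]
  simp [this]

theorem qq_e' (i : ℕ) : qq i (e (i + 2)) = e i := by
  rw [qq_apply]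
  have : e (i + 2) (i + 2) = 1 := by simp [e]
  simp [this]

def T (k : ℕ) : Set (ℕ → ℝ) := convexHull ℝ {x | ∃ i < k, x = e i}

theorem it_zero_nil (M : ℕ) (f : List (ℕ → ℝ) → ZMod 2) : it M 0 f [] = f [] := by
  induction M with
  | zero => rfl
  | succ M ih => rw [it_succ]; simpa [sdN] using ih

theorem fan_main (n : ℕ) (l : (ℕ → ℝ) → ℤ) (p : Seminorm ℝ (ℕ → ℝ)) (hp : ∀ i, p (e i) ≤ 1)
    (h1 : ∀ x ∈ T (n + 1), l x ≠ 0 ∧ (l x).natAbs ≤ n)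
    (h2 : ∀ x ∈ T n, l (sh x) = - l x)
    (h3 : ∀ i, i + 2 ≤ n → ∀ x ∈ T (n + 1), x (i + 1) = 0 → l (qq i x) = l x)
    (h4 : ∃ d : ℝ, 0 < d ∧ ∀ x ∈ T (n + 1), ∀ y ∈ T (n + 1), p (x - y) ≤ d → l x ≠ - l y) :
    False := by
  obtain ⟨d, hd, h4⟩ := h4
  have hK : (1 : ℝ) ≤ ((n + 1 : ℕ) : ℝ) := by push_cast; linarith [(Nat.cast_nonneg n : (0 : ℝ) ≤ n)]
  obtain ⟨M', hM'⟩ : ∃ M' : ℕ, (1 - 1 / ((n + 1 : ℕ) : ℝ)) ^ M' < d / 2 :=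
    exists_pow_lt_of_lt_one (by positivity) (by
      have : 0 < 1 / ((n + 1 : ℕ) : ℝ) := by positivity
      linarith)
  have hr0 : 0 ≤ 1 - 1 / ((n + 1 : ℕ) : ℝ) := by
    rw [sub_nonneg, div_le_one (by linarith)]; exact hK
  have hM : (1 - 1 / ((n + 1 : ℕ) : ℝ)) ^ (M' + 1) * 2 ≤ d := by
    have : (1 - 1 / ((n + 1 : ℕ) : ℝ)) ^ (M' + 1) ≤ (1 - 1 / ((n + 1 : ℕ) : ℝ)) ^ M' := by
      apply pow_le_pow_of_le_one hr0 _ (by omega)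
      have : 0 < 1 / ((n + 1 : ℕ) : ℝ) := by positivity
      linarith
    linarith
  set f : Bool → List (ℕ → ℝ) → ZMod 2 := fun s τ => al s (τ.map l) with hf
  have hT : ∀ (L : List ℕ) (k : ℕ), (∀ i ∈ L, i < k) →
      convexHull ℝ {x | x ∈ L.map e} ⊆ T k := by
    intro L k hL
    apply convexHull_mono
    intro x hx
    simp only [Set.mem_ofPred_eq, List.mem_map] at hx
    obtain ⟨i, hi, rfl⟩ := hx
    exact ⟨i, hL i hi, rfl⟩
  have hTm : ∀ k, k ≤ n + 1 → T k ⊆ T (n + 1) := by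
    intro k hk
    apply convexHull_mono
    rintro x ⟨i, hi, rfl⟩
    exact ⟨i, by omega, rfl⟩
  have step : ∀ k, k ≤ n →
      it (M' + 1) (k + 1) (f true) ((List.range (k + 1)).map e) +
      it (M' + 1) (k + 1) (f false) ((List.range (k + 1)).map e) =
      dl ((List.range (k + 1)).map e) (it (M' + 1) k (f true)) := by
    intro k hk
    rw [← it_dl _ _ _ _ (by simp), ← it_add]
    apply it_congr p 2 (n + 1) (by norm_num) (by omega) _ _ (by omega) _ _ _ (by simp)
    · intro x hx y hy
      simp only [List.mem_map] at hx hy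
      obtain ⟨i, -, rfl⟩ := hx
      obtain ⟨j, -, rfl⟩ := hy
      have := map_sub_le_add p (e i) (e j)
      linarith [hp i, hp j]
    · intro τ t1 t2 t3
      have t2' : ∀ x ∈ τ, x ∈ T (n + 1) := fun x hx =>
        hTm (k + 1) (by omega) (hT _ (k + 1) (by simp) (t2 x hx))
      simp only [hf]
      rw [← dl_map l τ (al true), al_dl]
      · rfl
      · intro a ha b hb
        simp only [List.mem_map] at ha hb
        obtain ⟨x, hx, rfl⟩ := ha
        obtain ⟨y, hy, rfl⟩ := hb
        exact ⟨(h1 x (t2' x hx)).1, h4 x (t2' x hx) y (t2' y hy) ((t3 x hx y hy).trans hM)⟩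
  have main : ∀ k, k ≤ n →
      it (M' + 1) (k + 1) (f true) ((List.range (k + 1)).map e) +
      it (M' + 1) (k + 1) (f false) ((List.range (k + 1)).map e) = 1 := by
    intro k
    induction k with
    | zero =>
      intro hk
      rw [step 0 hk]
      simp only [zero_add, List.range_one, List.map_cons, List.map_nil, dl, add_zero]
      rw [it_zero_nil]
      simp only [hf, List.map_nil, al]
      apply ind_true
      exact ⟨[], List.Perm.refl _, List.Pairwise.nil, trivial⟩
    | succ k ih =>
      intro hk
      rw [step (k + 1) hk, ← ih (by omega), dl_map]
      have er : List.range (k + 1 + 1) = 0 :: (List.range' 1 k ++ [k + 1]) := by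
        rw [List.range_eq_range', List.range'_succ]
        congr 1
        rw [List.range'_1_concat]; simp [add_comm]
      have er1 : List.range (k + 1) = 0 :: List.range' 1 k := by
        rw [List.range_eq_range', List.range'_succ]
      have er2 : (List.range' 1 k ++ [k + 1]).map e = ((List.range (k + 1)).map e).map sh := by
        have : List.range' 1 k ++ [k + 1] = (List.range (k + 1)).map (fun i => i + 1) := by
          have := List.range_succ_eq_map (n := k + 1)
          rw [er] at this
          exact (List.cons.inj this).2
        rw [this, List.map_map, List.map_map]
        congr 1
        funext i
        simp [sh_e]
      rw [er]
      simp only [dl]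
      rw [dl_snoc, ← er1, er2, add_comm]
      · congr 1
        rw [it_map]
        apply it_congr_hull _ _ _ _ _ (by simp)
        intro τ t1 t2
        have t2' : ∀ x ∈ τ, x ∈ T (k + 1) := fun x hx => hT _ (k + 1) (by simp) (t2 x hx)
        simp only [hf]
        have : (τ.map sh).map l = (τ.map l).map (fun a => -a) := by
          rw [List.map_map, List.map_map]
          apply List.map_congr_left
          intro x hx
          simp only [Function.comp]
          apply h2
          have := t2' x hx
          apply convexHull_mono _ this
          rintro x ⟨i, hi, rfl⟩
          exact ⟨i, by omega, rfl⟩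
        rw [this, al_neg]
        · rfl
        · intro a ha
          simp only [List.mem_map] at ha
          obtain ⟨x, hx, rfl⟩ := ha
          exact (h1 x (hTm (k + 1) (by omega) (t2' x hx))).1
      · intro a b x hab
        obtain ⟨j, hj, ha, hb⟩ := List.range'_eq_append_iff.1 hab
        have hjk : j < k := by
          by_contra hcon
          have : k - j = 0 := by omega
          rw [this] at hb; simp at hb
        obtain ⟨r, hr⟩ : ∃ r, k - j = r + 1 := ⟨k - j - 1, by omega⟩
        rw [hr, List.range'_succ] at hb
        obtain ⟨hx, hb⟩ := List.cons.inj hb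
        have e1 : 0 :: a = List.range j ++ [j] := by
          rw [ha, ← List.range_succ, List.range_eq_range', List.range'_succ]
        have e2 : b ++ [k + 1] = (j + 2) :: List.range' (j + 3) r := by
          have h5 : List.range' (j + 2) (r + 1) = (j + 2) :: List.range' (j + 3) r := List.range'_succ
          rw [← h5, hb, List.range'_1_concat]
          congr 2 <;> omega
        have e3 : 0 :: (a ++ b ++ [k + 1]) = List.range j ++ j :: (j + 2) :: List.range' (j + 3) r := by
          rw [List.append_assoc, e2, ← List.cons_append, e1]; simp
        rw [e3]
        have hdeg : ((List.range j ++ j :: (j + 2) :: List.range' (j + 3) r).map e).map (qq j) =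
            (List.range j).map e ++ e j :: e j :: (List.range' (j + 3) r).map e := by
          simp only [List.map_append, List.map_cons, List.map_map]
          rw [qq_e', qq_e j j (by omega)]
          congr 1
          · apply List.map_congr_left
            intro i hi
            have := List.mem_range.1 hi
            exact qq_e _ _ (by omega)
          · congr 2
            apply List.map_congr_left
            intro i hi
            have := List.mem_range'_1.1 hi
            exact qq_e _ _ (by omega)
        rw [← it_degen M' (k + 1) (f true) ((List.range j).map e) ((List.range' (j + 3) r).map e) (e j),
          ← hdeg, it_map]
        apply it_congr_hull _ _ _ _ _ (by simp; omega)
        intro τ t1 t2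
        simp only [hf, List.map_map]
        congr 1
        apply List.map_congr_left
        intro x hx
        have hx' := t2 x hx
        have hm : ∀ i ∈ (List.range j ++ j :: (j + 2) :: List.range' (j + 3) r),
            i < n + 1 ∧ i ≠ j + 1 := by
          intro i hi
          simp only [List.mem_append, List.mem_cons, List.mem_range, List.mem_range'_1] at hi
          omega
        symm
        apply h3 j (by omega)
        · exact hT _ _ (fun i hi => (hm i hi).1) hx'
        · have hc : Convex ℝ {x : ℕ → ℝ | x (j + 1) = 0} := by
            intro x hx y hy a b _ _ _
            simp only [Set.mem_ofPred_eq] at hx hy ⊢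
            simp [hx, hy]
          refine convexHull_min ?_ hc hx'
          intro y hy
          simp only [Set.mem_ofPred_eq, List.mem_map] at hy ⊢
          obtain ⟨i, hi, rfl⟩ := hy
          simp [e, Pi.single_apply, (hm i hi).2.symm]
  have := main n le_rfl
  have hz : ∀ s, it (M' + 1) (n + 1) (f s) ((List.range (n + 1)).map e) = 0 := by
    intro s
    have hzz : ∀ M, it M (n + 1) (fun _ => 0) ((List.range (n + 1)).map e) = 0 := by
      intro M
      have := it_add M (n + 1) (fun _ => 0) (fun _ => 0) ((List.range (n + 1)).map e)
      simp only [add_zero] at this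
      rw [z2] at this; exact this
    rw [← hzz (M' + 1)]
    apply it_congr_hull _ _ _ _ _ (by simp)
    intro τ t1 t2
    apply al_zero n
    · intro a ha
      simp only [List.mem_map] at ha
      obtain ⟨x, hx, rfl⟩ := ha
      exact h1 x (hT _ (n + 1) (by simp) (t2 x hx))
    · simpa using t1
  rw [hz, hz] at this
  exact absurd this (by decide)

end main

section hobby

def S (x : ℕ → ℝ) (m : ℕ) : ℝ := ∑ j ∈ Finset.range m, x j

theorem S_succ (x : ℕ → ℝ) (m : ℕ) : S x (m + 1) = S x m + x m := Finset.sum_range_succ _ _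

def Ph {n : ℕ} (c : ℝ → Fin n → ℝ) (K : ℕ) (x : ℕ → ℝ) (i : Fin n) : ℝ :=
  ∑ m ∈ Finset.range K, (-1 : ℝ) ^ m * (c (S x (m + 1)) i - c (S x m) i)

theorem T_zero (k : ℕ) (x : ℕ → ℝ) (hx : x ∈ T k) (i : ℕ) (hi : k ≤ i) : x i = 0 := by
  have hc : Convex ℝ {x : ℕ → ℝ | x i = 0} := by
    intro x hx y hy a b _ _ _
    simp only [Set.mem_ofPred_eq] at hx hy ⊢
    simp [hx, hy]
  refine convexHull_min ?_ hc hx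
  rintro y ⟨j, hj, rfl⟩
  have : i ≠ j := by omega
  simp [e, this]

theorem T_nonneg (k : ℕ) (x : ℕ → ℝ) (hx : x ∈ T k) (i : ℕ) : 0 ≤ x i := by
  have hc : Convex ℝ {x : ℕ → ℝ | 0 ≤ x i} := by
    intro x hx y hy a b ha hb _
    simp only [Set.mem_ofPred_eq] at hx hy ⊢
    simp only [Pi.add_apply, Pi.smul_apply, smul_eq_mul]
    positivity
  refine convexHull_min ?_ hc hx
  rintro y ⟨j, hj, rfl⟩
  simp only [Set.mem_ofPred_eq, e, Pi.single_apply]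
  split_ifs <;> norm_num

theorem T_sum (k : ℕ) (x : ℕ → ℝ) (hx : x ∈ T k) : S x k = 1 := by
  have hc : Convex ℝ {x : ℕ → ℝ | S x k = 1} := by
    intro x hx y hy a b ha hb hab
    simp only [Set.mem_ofPred_eq, S] at hx hy ⊢
    simp only [Pi.add_apply, Pi.smul_apply, smul_eq_mul, Finset.sum_add_distrib, ← Finset.mul_sum]
    rw [hx, hy]; linarith
  refine convexHull_min ?_ hc hx
  rintro y ⟨j, hj, rfl⟩
  simp [S, e, Pi.single_apply, hj]

theorem S_sh (x : ℕ → ℝ) (m : ℕ) : S (sh x) (m + 1) = S x m := by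
  rw [S, Finset.sum_range_succ']
  simp [sh, S]

theorem Ph_sh {n : ℕ} (c : ℝ → Fin n → ℝ) (K : ℕ) (x : ℕ → ℝ) (hx : x K = 0) (i : Fin n) :
    Ph c (K + 1) (sh x) i = - Ph c (K + 1) x i := by
  unfold Ph
  rw [Finset.sum_range_succ', Finset.sum_range_succ]
  have h0 : S (sh x) 1 = S (sh x) 0 := by rw [S_sh]; simp [S]
  have h1 : S x (K + 1) = S x K := by rw [S_succ, hx, add_zero]
  rw [h1]
  simp only [zero_add, h0, sub_self, mul_zero, add_zero, S_sh]
  rw [← Finset.sum_neg_distrib]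
  apply Finset.sum_congr rfl
  intro m _
  rw [pow_succ]; ring

theorem S_qq (j : ℕ) (x : ℕ → ℝ) (m : ℕ) :
    S (qq j x) m = S x m + x (j + 2) * ((if j < m then 1 else 0) - (if j + 2 < m then 1 else 0)) := by
  unfold S
  rw [qq_apply]
  simp only [Pi.add_apply, Pi.smul_apply, Pi.sub_apply, smul_eq_mul, Finset.sum_add_distrib,
    ← Finset.mul_sum, Finset.sum_sub_distrib, e, Pi.single_apply]
  simp

theorem Ph_qq {n : ℕ} (c : ℝ → Fin n → ℝ) (K : ℕ) (x : ℕ → ℝ) (j : ℕ) (hj : j + 2 < K)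
    (hx : x (j + 1) = 0) (i : Fin n) :
    Ph c K (qq j x) i = Ph c K x i := by
  obtain ⟨r, rfl⟩ : ∃ r, K = j + 3 + r := ⟨K - (j + 3), by omega⟩
  unfold Ph
  rw [Finset.sum_range_add _ (j + 3) r, Finset.sum_range_add _ (j + 3) r]
  have h1 : ∀ m, m ≤ j → S (qq j x) m = S x m := by
    intro m hm
    rw [S_qq, if_neg (by omega), if_neg (by omega)]; ring
  have h2 : ∀ m, j + 3 ≤ m → S (qq j x) m = S x m := by
    intro m hm
    rw [S_qq, if_pos (by omega), if_pos (by omega)]; ring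
  have h3 : S (qq j x) (j + 1) = S x (j + 3) := by
    rw [S_qq, if_pos (by omega), if_neg (by omega), S_succ x (j + 2), S_succ x (j + 1), hx]; ring
  have h4 : S (qq j x) (j + 2) = S x (j + 3) := by
    rw [S_qq, if_pos (by omega), if_neg (by omega), S_succ x (j + 2)]; ring
  have h5 : S x (j + 2) = S x (j + 1) := by rw [S_succ x (j + 1), hx, add_zero]
  congr 1
  · rw [Finset.sum_range_succ, Finset.sum_range_succ, Finset.sum_range_succ,
      Finset.sum_range_succ, Finset.sum_range_succ, Finset.sum_range_succ,
      Finset.sum_congr rfl (g := fun m => (-1 : ℝ) ^ m * (c (S x (m + 1)) i - c (S x m) i))]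
    · simp only [add_assoc, Nat.reduceAdd]
      rw [h3, h4, h5, h1 j le_rfl, h2 (j + 3) le_rfl]
      ring
    · intro m hm
      have := Finset.mem_range.1 hm
      rw [h1 _ (by omega), h1 _ (by omega)]
  · apply Finset.sum_congr rfl
    intro m _
    rw [h2 _ (by omega), h2 _ (by omega)]

noncomputable def sn (K : ℕ) : Seminorm ℝ (ℕ → ℝ) :=
  Seminorm.of (fun x => ∑ i ∈ Finset.range K, |x i|)
    (by
      intro x y
      rw [← Finset.sum_add_distrib]
      exact Finset.sum_le_sum (fun i _ => abs_add_le _ _))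
    (by
      intro a x
      simp [abs_mul, Finset.mul_sum])

theorem sn_apply (K : ℕ) (x : ℕ → ℝ) : sn K x = ∑ i ∈ Finset.range K, |x i| := rfl

theorem S_dist (K : ℕ) (x y : ℕ → ℝ) (m : ℕ) (hm : m ≤ K) : |S x m - S y m| ≤ sn K (x - y) := by
  rw [sn_apply, S, S, ← Finset.sum_sub_distrib]
  refine (Finset.abs_sum_le_sum_abs _ _).trans ?_
  apply Finset.sum_le_sum_of_subset_of_nonneg
  · exact Finset.range_mono hm
  · intro i _ _; positivity

open Classical in
noncomputable def lab {n : ℕ} [Nonempty (Fin n)] (v : Fin n → ℝ) : ℤ :=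
  if 0 < v (Classical.epsilon (fun i => 1 < |v i|))
  then ((Classical.epsilon (fun i => 1 < |v i|) : Fin n).val + 1 : ℤ)
  else -((Classical.epsilon (fun i => 1 < |v i|) : Fin n).val + 1 : ℤ)

theorem lab_spec {n : ℕ} [Nonempty (Fin n)] (v : Fin n → ℝ) (h : ∃ i, 1 < |v i|) :
    ∃ i : Fin n, i = Classical.epsilon (fun i => 1 < |v i|) ∧
      ((1 < v i ∧ lab v = i.val + 1) ∨ (v i < -1 ∧ lab v = -((i.val : ℤ) + 1))) := by
  refine ⟨_, rfl, ?_⟩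
  have h1 := Classical.epsilon_spec h
  unfold lab
  by_cases h0 : 0 < v (Classical.epsilon (fun i => 1 < |v i|))
  · left
    rw [if_pos h0]
    rw [abs_of_pos h0] at h1
    exact ⟨h1, rfl⟩
  · right
    rw [if_neg h0]
    rw [abs_of_nonpos (not_lt.1 h0)] at h1
    exact ⟨by linarith, rfl⟩

theorem lab_neg {n : ℕ} [Nonempty (Fin n)] (v : Fin n → ℝ) (h : ∃ i, 1 < |v i|) :
    lab (-v) = - lab v := by
  have hn : ∃ i, 1 < |(-v) i| := by simpa using h
  obtain ⟨i, hi, h1⟩ := lab_spec v h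
  obtain ⟨j, hj, h2⟩ := lab_spec (-v) hn
  have : j = i := by rw [hi, hj]; simp
  subst this
  simp only [Pi.neg_apply] at h2
  rcases h1 with ⟨a, b⟩ | ⟨a, b⟩ <;> rcases h2 with ⟨c, d⟩ | ⟨c, d⟩
  · linarith
  · rw [b, d]
  · rw [b, d]; ring
  · linarith

theorem hobby (n : ℕ) (c : ℝ → Fin n → ℝ) (hc : UniformContinuous c) :
    ∃ s : ℕ → ℝ, (∀ m, s m ≤ s (m + 1)) ∧ s 0 = 0 ∧ s (n + 1) = 1 ∧
      ∀ i, |∑ m ∈ Finset.range (n + 1), (-1 : ℝ) ^ m * (c (s (m + 1)) i - c (s m) i)| ≤ 1 := by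
  suffices h : ∃ x ∈ T (n + 1), ∀ i, |Ph c (n + 1) x i| ≤ 1 by
    obtain ⟨x, hx, h⟩ := h
    refine ⟨S x, ?_, by simp [S], T_sum _ _ hx, h⟩
    intro m
    rw [S_succ]
    linarith [T_nonneg _ _ hx m]
  by_contra! hcon
  have he0 : e 0 ∈ T (n + 1) := subset_convexHull ℝ _ ⟨0, by omega, rfl⟩
  have : Nonempty (Fin n) := ⟨(hcon _ he0).choose⟩
  apply fan_main n (fun x => lab (Ph c (n + 1) x)) (sn (n + 1))
  · intro i
    rw [sn_apply]
    have : ∀ j, |e i j| = if j = i then 1 else 0 := by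
      intro j
      simp only [e, Pi.single_apply]
      split_ifs <;> simp
    simp only [this, Finset.sum_ite_eq']
    split_ifs <;> norm_num
  · intro x hx
    obtain ⟨i, -, h⟩ := lab_spec _ (hcon x hx)
    have := i.2
    rcases h with ⟨-, h⟩ | ⟨-, h⟩ <;> rw [h] <;> omega
  · intro x hx
    have hx' : x ∈ T (n + 1) := by
      apply convexHull_mono _ hx
      rintro x ⟨i, hi, rfl⟩
      exact ⟨i, by omega, rfl⟩
    rw [← lab_neg _ (hcon x hx')]
    congr 1
    funext i
    exact Ph_sh c n x (T_zero n x hx n le_rfl) i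
  · intro j hj x hx hx0
    congr 1
    funext i
    exact Ph_qq c _ x j (by omega) hx0 i
  · rw [Metric.uniformContinuous_iff] at hc
    obtain ⟨d, hd, hc⟩ := hc (1 / ((n : ℝ) + 2)) (by positivity)
    refine ⟨d / 2, by positivity, ?_⟩
    intro x hx y hy hxy hl
    have hS : ∀ m, m ≤ n + 1 → ∀ i, |c (S x m) i - c (S y m) i| ≤ 1 / ((n : ℝ) + 2) := by
      intro m hm i
      have h1 : dist (S x m) (S y m) < d := by
        rw [Real.dist_eq]
        have := S_dist (n + 1) x y m hm
        linarith
      have h2 := hc h1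
      have h3 := dist_le_pi_dist (c (S x m)) (c (S y m)) i
      rw [Real.dist_eq] at h3
      linarith
    have hP : ∀ i, |Ph c (n + 1) x i - Ph c (n + 1) y i| < 2 := by
      intro i
      unfold Ph
      rw [← Finset.sum_sub_distrib]
      calc _ ≤ ∑ m ∈ Finset.range (n + 1), |(-1 : ℝ) ^ m * (c (S x (m + 1)) i - c (S x m) i) -
            (-1 : ℝ) ^ m * (c (S y (m + 1)) i - c (S y m) i)| := Finset.abs_sum_le_sum_abs _ _
        _ ≤ ∑ m ∈ Finset.range (n + 1), 2 * (1 / ((n : ℝ) + 2)) := by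
          apply Finset.sum_le_sum
          intro m hm
          have := Finset.mem_range.1 hm
          have a1 := hS (m + 1) (by omega) i
          have a2 := hS m (by omega) i
          rw [← mul_sub, abs_mul, abs_pow, abs_neg, abs_one, one_pow, one_mul]
          rw [abs_le] at a1 a2 ⊢
          constructor <;> linarith
        _ = ((n : ℝ) + 1) * (2 * (1 / ((n : ℝ) + 2))) := by simp
        _ < 2 := by
          have : (0 : ℝ) < (n : ℝ) + 2 := by positivity
          rw [mul_one_div, mul_div_assoc', div_lt_iff₀ this]
          linarith
    obtain ⟨i, hi, h1⟩ := lab_spec _ (hcon x hx)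
    obtain ⟨j, hj, h2⟩ := lab_spec _ (hcon y hy)
    have hPi := abs_lt.1 (hP i)
    rcases h1 with ⟨a, b⟩ | ⟨a, b⟩ <;> rcases h2 with ⟨a', b'⟩ | ⟨a', b'⟩ <;> rw [b, b'] at hl
    · omega
    · have : i = j := by apply Fin.ext; omega
      subst this; linarith
    · have : i = j := by apply Fin.ext; omega
      subst this; linarith
    · omega

end hobby

end HR

/-- Key lemma: if `ℤⁿ` acts cocompactly and properly discontinuously by isometries on
a proper geodesic metric space `X`, with a continuous equivariant map `F : X → ℝⁿ`,
then for a fixed `x₀ ∈ X` there is `C ≥ 0` with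
`d(x₀, g x₀) ≤ d(x₀, g² x₀)/2 + C` for all `g`. -/
theorem dist_le_half_dist_sq_add_const
    {X : Type*} [MetricSpace X] [ProperSpace X]
    (hgeo : ∀ x y : X, ∃ γ : ℝ → X, γ 0 = x ∧ γ (dist x y) = y ∧
      ∀ s ∈ Set.Icc (0 : ℝ) (dist x y), ∀ t ∈ Set.Icc (0 : ℝ) (dist x y),
        dist (γ s) (γ t) = |s - t|)
    (n : ℕ) [AddAction (Fin n → ℤ) X]
    (hisom : ∀ (g : Fin n → ℤ) (a b : X), dist (g +ᵥ a) (g +ᵥ b) = dist a b)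
    (hcocompact : ∃ K : Set X, IsCompact K ∧ ∀ x : X, ∃ g : Fin n → ℤ, g +ᵥ x ∈ K)
    (hpd : ∀ K : Set X, IsCompact K →
      {g : Fin n → ℤ | (((g +ᵥ ·) '' K) ∩ K).Nonempty}.Finite)
    (F : X → EuclideanSpace ℝ (Fin n)) (hF : Continuous F)
    (hequiv : ∀ (g : Fin n → ℤ) (x : X),
      F (g +ᵥ x) = F x + (EuclideanSpace.equiv (Fin n) ℝ).symm (fun i => (g i : ℝ)))
    (x₀ : X) :
    ∃ C : ℝ, 0 ≤ C ∧ ∀ g : Fin n → ℤ,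
      dist x₀ (g +ᵥ x₀) ≤ dist x₀ ((g + g) +ᵥ x₀) / 2 + C := by
  classical
  obtain ⟨Kc, hKc, hcov⟩ := hcocompact
  obtain ⟨R, hR⟩ := hKc.isBounded.subset_closedBall x₀
  have happ : ∀ y : X, ∃ h : Fin n → ℤ, dist y (h +ᵥ x₀) ≤ R := by
    intro y
    obtain ⟨g, hg⟩ := hcov y
    refine ⟨-g, ?_⟩
    have h1 := hR hg
    rw [Metric.mem_closedBall] at h1
    rw [← hisom g, vadd_vadd, add_neg_cancel, zero_vadd]
    exact h1
  have hR0 : 0 ≤ R := by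
    obtain ⟨h, hh⟩ := happ x₀
    exact dist_nonneg.trans hh
  obtain ⟨B, hB⟩ := (isCompact_closedBall x₀ R).exists_bound_of_continuousOn hF.continuousOn
  have hB0 : 0 ≤ B := (norm_nonneg _).trans (hB x₀ (Metric.mem_closedBall_self hR0))
  have hFi : ∀ (g : Fin n → ℤ) (x : X) (i : Fin n), F (g +ᵥ x) i = F x i + g i := by
    intro g x i
    rw [hequiv]; simp
  have hFh : ∀ (y : X) (h : Fin n → ℤ), dist y (h +ᵥ x₀) ≤ R → ∀ i, |F y i - h i| ≤ B := by
    intro y h hy i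
    have e1 : y = h +ᵥ (-h +ᵥ y) := by rw [vadd_vadd, add_neg_cancel, zero_vadd]
    have e2 : -h +ᵥ y ∈ Metric.closedBall x₀ R := by
      rw [Metric.mem_closedBall, ← hisom h, ← e1]; exact hy
    have e3 := hFi h (-h +ᵥ y) i
    rw [← e1] at e3
    rw [e3, add_sub_cancel_right]
    exact (PiLp.norm_apply_le (F (-h +ᵥ y)) i).trans (hB _ e2)
  set f : (Fin n → ℤ) → ℝ := fun g => dist x₀ (g +ᵥ x₀) with hf
  have hf0 : f 0 = 0 := by simp [hf]
  have hfadd : ∀ a b, f (a + b) ≤ f a + f b := by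
    intro a b
    simp only [hf]
    have := dist_triangle x₀ (a +ᵥ x₀) ((a + b) +ᵥ x₀)
    rw [add_vadd, hisom] at this
    rw [add_vadd]; exact this
  have hfsub : ∀ a b, f (b - a) = dist (a +ᵥ x₀) (b +ᵥ x₀) := by
    intro a b
    simp only [hf]
    rw [← hisom a, vadd_vadd, add_sub_cancel]
  set N : ℤ := ⌈((n : ℝ) + 1) * (2 * B) + 1⌉ with hN
  obtain ⟨C', hC'⟩ : BddAbove (f '' (Set.Icc (fun _ => -N) (fun _ => N))) :=
    ((Set.finite_Icc _ _).image f).bddAbove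
  have hC0 : ∀ v : Fin n → ℤ, (∀ i, |(v i : ℝ)| ≤ ((n : ℝ) + 1) * (2 * B) + 1) → f v ≤ max C' 0 := by
    intro v hv
    refine le_trans (hC' ⟨v, ⟨fun i => ?_, fun i => ?_⟩, rfl⟩) (le_max_left _ _)
    · have h1 := (abs_le.1 (hv i)).1
      have h2 := Int.le_ceil (((n : ℝ) + 1) * (2 * B) + 1)
      rw [← hN] at h2
      have : (-N : ℝ) ≤ v i := by linarith
      exact_mod_cast this
    · have h1 := (abs_le.1 (hv i)).2
      have h2 := Int.le_ceil (((n : ℝ) + 1) * (2 * B) + 1)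
      rw [← hN] at h2
      have : (v i : ℝ) ≤ N := by linarith
      exact_mod_cast this
  refine ⟨((n : ℝ) + 1) * (2 * R) + max C' 0, by positivity, ?_⟩
  intro g
  obtain ⟨γ, hγ0, hγ1, hγ⟩ := hgeo x₀ ((g + g) +ᵥ x₀)
  set L := dist x₀ ((g + g) +ᵥ x₀) with hL
  have hL0 : 0 ≤ L := dist_nonneg
  have hmem : ∀ t ∈ Set.Icc (0 : ℝ) 1, L * t ∈ Set.Icc (0 : ℝ) L := fun t ht =>
    ⟨mul_nonneg hL0 ht.1, mul_le_of_le_one_right hL0 ht.2⟩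
  have hγc : ContinuousOn γ (Set.Icc 0 L) := by
    have : LipschitzOnWith 1 γ (Set.Icc 0 L) := by
      apply LipschitzOnWith.of_dist_le_mul
      intro s hs t ht
      rw [hγ s hs t ht, Real.dist_eq]; simp
    exact this.continuousOn
  let h : Set.Icc (0 : ℝ) 1 → Fin n → ℝ := fun t i => F (γ (L * t)) i
  have hhc : Continuous h := by
    have h1 : Continuous (fun t : Set.Icc (0 : ℝ) 1 => γ (L * t)) :=
      hγc.comp_continuous (by fun_prop) (fun t => hmem t t.2)
    have h2 := hF.comp h1
    apply continuous_pi
    intro i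
    exact (EuclideanSpace.proj (𝕜 := ℝ) i).continuous.comp h2
  let c : ℝ → Fin n → ℝ := fun t => h (Set.projIcc 0 1 zero_le_one t)
  have hcu : UniformContinuous c :=
    (CompactSpace.uniformContinuous_of_continuous hhc).comp
      (LipschitzWith.projIcc zero_le_one).uniformContinuous
  obtain ⟨s, hs, hs0, hs1, hsum⟩ := HR.hobby n c hcu
  have hmono : Monotone s := monotone_nat_of_le_succ hs
  have hsI : ∀ m, m ≤ n + 1 → s m ∈ Set.Icc (0 : ℝ) 1 := fun m hm =>
    ⟨hs0 ▸ hmono (Nat.zero_le m), hs1 ▸ hmono hm⟩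
  have hcs : ∀ m, m ≤ n + 1 → ∀ i, c (s m) i = F (γ (L * s m)) i := by
    intro m hm i
    simp only [c, h]
    rw [Set.projIcc_of_mem zero_le_one (hsI m hm)]
  choose k hk using fun m => happ (γ (L * s m))
  have key : ∀ P : Finset ℕ, P ⊆ Finset.range (n + 1) →
      ∑ m ∈ P, (L * s (m + 1) - L * s m) ≤ L / 2 →
      (∀ i, |∑ m ∈ P, (c (s (m + 1)) i - c (s m) i) - g i| ≤ 1) →
      f g ≤ L / 2 + (((n : ℝ) + 1) * (2 * R) + max C' 0) := by
    intro P hP h1 h2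
    have hcard : (P.card : ℝ) ≤ (n : ℝ) + 1 := by
      have := Finset.card_le_card hP
      rw [Finset.card_range] at this
      exact_mod_cast this
    have hPm : ∀ m ∈ P, m + 1 ≤ n + 1 := fun m hm => by
      have := Finset.mem_range.1 (hP hm); omega
    set u : Fin n → ℤ := ∑ m ∈ P, (k (m + 1) - k m) with hu
    have hfu : f u ≤ L / 2 + ((n : ℝ) + 1) * (2 * R) := by
      calc f u ≤ ∑ m ∈ P, f (k (m + 1) - k m) := Finset.le_sum_of_subadditive f hf0.le hfadd _ _
        _ ≤ ∑ m ∈ P, ((L * s (m + 1) - L * s m) + 2 * R) := by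
          apply Finset.sum_le_sum
          intro m hm
          have hm1 := hPm m hm
          rw [hfsub]
          have a1 := hk m
          have a2 := hk (m + 1)
          have a3 := hγ _ (hmem _ (hsI m (by omega))) _ (hmem _ (hsI (m + 1) hm1))
          have a4 : L * s m ≤ L * s (m + 1) := mul_le_mul_of_nonneg_left (hs m) hL0
          rw [abs_of_nonpos (by linarith)] at a3
          have a5 := dist_triangle4 (k m +ᵥ x₀) (γ (L * s m)) (γ (L * s (m + 1))) (k (m + 1) +ᵥ x₀)
          rw [dist_comm (k m +ᵥ x₀) (γ (L * s m))] at a5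
          linarith
        _ = ∑ m ∈ P, (L * s (m + 1) - L * s m) + P.card * (2 * R) := by
          rw [Finset.sum_add_distrib]; simp
        _ ≤ _ := by gcongr
    have hfv : f (g - u) ≤ max C' 0 := by
      apply hC0
      intro i
      have b1 : |∑ m ∈ P, (c (s (m + 1)) i - c (s m) i) - u i| ≤ ((n : ℝ) + 1) * (2 * B) := by
        have : (u i : ℝ) = ∑ m ∈ P, ((k (m + 1) i : ℝ) - k m i) := by
          rw [hu, Finset.sum_apply]; simp only [Pi.sub_apply]; push_cast; rfl
        rw [this, ← Finset.sum_sub_distrib]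
        calc _ ≤ ∑ m ∈ P, |c (s (m + 1)) i - c (s m) i - ((k (m + 1) i : ℝ) - k m i)| :=
              Finset.abs_sum_le_sum_abs _ _
          _ ≤ ∑ m ∈ P, 2 * B := by
            apply Finset.sum_le_sum
            intro m hm
            have hm1 := hPm m hm
            rw [hcs m (by omega), hcs (m + 1) hm1]
            have a1 := abs_le.1 (hFh _ _ (hk m) i)
            have a2 := abs_le.1 (hFh _ _ (hk (m + 1)) i)
            rw [abs_le]
            constructor <;> linarith
          _ = P.card * (2 * B) := by simp
          _ ≤ _ := by gcongr
      have b2 := abs_le.1 (h2 i)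
      have b1 := abs_le.1 b1
      simp only [Pi.sub_apply]
      push_cast
      rw [abs_le]
      constructor <;> linarith
    have := hfadd u (g - u)
    rw [add_sub_cancel] at this
    linarith
  have hsplit : ∀ a : ℕ → ℝ,
      ∑ m ∈ (Finset.range (n + 1)).filter (fun m => Even m), a m +
      ∑ m ∈ (Finset.range (n + 1)).filter (fun m => ¬ Even m), a m =
      ∑ m ∈ Finset.range (n + 1), a m := fun a => Finset.sum_filter_add_sum_filter_not _ _ _
  have hsplit2 : ∀ a : ℕ → ℝ,
      ∑ m ∈ (Finset.range (n + 1)).filter (fun m => Even m), a m -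
      ∑ m ∈ (Finset.range (n + 1)).filter (fun m => ¬ Even m), a m =
      ∑ m ∈ Finset.range (n + 1), (-1 : ℝ) ^ m * a m := by
    intro a
    rw [← hsplit, sub_eq_add_neg, ← Finset.sum_neg_distrib]
    congr 1
    · apply Finset.sum_congr rfl
      intro m hm
      rw [(Finset.mem_filter.1 hm).2.neg_one_pow, one_mul]
    · apply Finset.sum_congr rfl
      intro m hm
      rw [(Nat.not_even_iff_odd.1 (Finset.mem_filter.1 hm).2).neg_one_pow, neg_one_mul]
  have htot : ∀ i, ∑ m ∈ Finset.range (n + 1), (c (s (m + 1)) i - c (s m) i) = 2 * g i := by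
    intro i
    rw [Finset.sum_range_sub (fun m => c (s m) i), hcs _ le_rfl, hcs 0 (by omega), hs0, hs1,
      mul_one, mul_zero, hγ0, hγ1, hFi]
    simp only [Pi.add_apply]; push_cast; ring
  have hlen : ∑ m ∈ Finset.range (n + 1), (L * s (m + 1) - L * s m) = L := by
    rw [Finset.sum_range_sub (fun m => L * s m), hs0, hs1]; ring
  have hl := hsplit (fun m => L * s (m + 1) - L * s m)
  rw [hlen] at hl
  rcases le_total (∑ m ∈ (Finset.range (n + 1)).filter (fun m => Even m), (L * s (m + 1) - L * s m))
    (L / 2) with hle | hle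
  · apply key _ (Finset.filter_subset _ _) hle
    intro i
    have a1 := hsplit (fun m => c (s (m + 1)) i - c (s m) i)
    have a2 := hsplit2 (fun m => c (s (m + 1)) i - c (s m) i)
    have a3 := abs_le.1 (hsum i)
    rw [htot] at a1
    rw [← a2] at a3
    rw [abs_le]
    constructor <;> linarith
  · apply key _ (Finset.filter_subset (fun m => ¬ Even m) _) (by linarith)
    intro i
    have a1 := hsplit (fun m => c (s (m + 1)) i - c (s m) i)
    have a2 := hsplit2 (fun m => c (s (m + 1)) i - c (s m) i)
    have a3 := abs_le.1 (hsum i)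
    rw [htot] at a1
    rw [← a2] at a3
    rw [abs_le]
    constructor <;> linarith
end

section
/- Let f : [0,1] → ℝⁿ be a continuous map with f(1) = 0. Then there exist 0 ≤ a₁ ≤ a₂ ≤ ⋯ ≤ aₙ ≤ 1 such that Σ_{i=1}^{n} (−1)^{i+1} f(aᵢ) = f(0)/2. -/
namespace AltIVT

open Finset

/-- Coboundary identity mod 2. -/
def skip (k j : ℕ) : ℕ := if j < k then j else j + 1

def D (d : ℕ) (m : ℕ → ℕ → ZMod 2) (k : ℕ) : ZMod 2 :=
  (∏ i ∈ range d, (m i (skip k i) + m i (skip k (i + 1)))) * m d (skip k d)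

def E (d : ℕ) (m : ℕ → ℕ → ZMod 2) (k : ℕ) : ZMod 2 :=
  (∏ i ∈ range d, (if i < k then m i i + m i (i + 1) else m i (i + 1) + m i (i + 2)))
    * m d (d + 1)

lemma z2 (x : ZMod 2) : x + x = 0 := CharTwo.add_self_eq_zero x

lemma D_zero (d : ℕ) (m : ℕ → ℕ → ZMod 2) : D d m 0 = E d m 0 := by
  simp [D, E, skip]

lemma D_succ (d : ℕ) (m : ℕ → ℕ → ZMod 2) (k : ℕ) (hk : k < d) :
    D d m (k + 1) = E d m (k + 1) + E d m k := by
  have hmem : k ∈ range d := by simpa using hk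
  have h1 : skip (k + 1) d = d + 1 := by
    unfold skip; rw [if_neg (by omega)]
  unfold D E
  rw [h1, ← add_mul]
  congr 1
  rw [← mul_prod_erase _ _ hmem, ← mul_prod_erase _ _ hmem, ← mul_prod_erase _ _ hmem]
  have a1 : ∏ i ∈ (range d).erase k, (m i (skip (k+1) i) + m i (skip (k+1) (i + 1)))
      = ∏ i ∈ (range d).erase k,
        (if i < k then m i i + m i (i + 1) else m i (i + 1) + m i (i + 2)) := by
    apply prod_congr rfl
    intro i hi
    have hik : i ≠ k := (mem_erase.mp hi).1
    unfold skip
    by_cases h : i < k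
    · rw [if_pos (by omega), if_pos (by omega), if_pos h]
    · rw [if_neg (by omega), if_neg (by omega), if_neg h]
  have a2 : ∏ i ∈ (range d).erase k,
        (if i < k + 1 then m i i + m i (i + 1) else m i (i + 1) + m i (i + 2))
      = ∏ i ∈ (range d).erase k,
        (if i < k then m i i + m i (i + 1) else m i (i + 1) + m i (i + 2)) := by
    apply prod_congr rfl
    intro i hi
    have hik : i ≠ k := (mem_erase.mp hi).1
    by_cases h : i < k
    · rw [if_pos (by omega), if_pos h]
    · rw [if_neg (by omega), if_neg h]
  rw [a1, a2]
  have s1 : skip (k+1) k = k := by unfold skip; rw [if_pos (by omega)]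
  have s2 : skip (k+1) (k+1) = k + 2 := by unfold skip; rw [if_neg (by omega)]
  rw [s1, s2, if_pos (by omega), if_neg (by omega), ← add_mul]
  congr 1
  linear_combination - z2 (m k (k+1))

lemma D_last (d : ℕ) (m : ℕ → ℕ → ZMod 2) :
    E d m d + D d m (d + 1) = ∏ i ∈ range (d + 1), (m i i + m i (i + 1)) := by
  rw [prod_range_succ]
  unfold D E
  have h1 : skip (d + 1) d = d := by
    unfold skip; rw [if_pos (by omega)]
  rw [h1]
  have a1 : ∏ i ∈ range d, (m i (skip (d+1) i) + m i (skip (d+1) (i + 1)))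
      = ∏ i ∈ range d, (m i i + m i (i + 1)) := by
    apply prod_congr rfl
    intro i hi
    have := mem_range.mp hi
    unfold skip
    rw [if_pos (by omega), if_pos (by omega)]
  have a2 : ∏ i ∈ range d,
        (if i < d then m i i + m i (i + 1) else m i (i + 1) + m i (i + 2))
      = ∏ i ∈ range d, (m i i + m i (i + 1)) := by
    apply prod_congr rfl
    intro i hi
    rw [if_pos (mem_range.mp hi)]
  rw [a1, a2]; ring

lemma cobound (d : ℕ) (m : ℕ → ℕ → ZMod 2) :
    ∏ i ∈ range (d + 1), (m i i + m i (i + 1))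
      = D d m 0 + D d m (d + 1) + ∑ k ∈ range d, D d m (k + 1) := by
  have h : ∑ k ∈ range d, D d m (k + 1) = E d m d + E d m 0 := by
    rw [← CharTwo.sub_eq_add, ← sum_range_sub]
    apply sum_congr rfl
    intro k hk
    rw [D_succ d m k (mem_range.mp hk), CharTwo.sub_eq_add]
  rw [h, D_zero, ← D_last]
  linear_combination - z2 (E d m 0)

variable {N : ℕ}

def e (N : ℕ) (m : ℕ) : Fin N → ZMod 2 := fun c => if m ≤ c then 1 else 0

lemma e_zero : e N 0 = 1 := by ext c; simp [e]
lemma e_N : e N N = 0 := by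
  ext c; simp [e]

def v {d : ℕ} (b : Fin d → Fin N) (t : ℕ) : Fin N → ZMod 2 :=
  ∑ r : Fin d, e N ((b r : ℕ) + if (r : ℕ) < t then 1 else 0)

lemma f2 (x : Fin N → ZMod 2) : x + x = 0 := by ext c; exact z2 _

lemma v_step {d : ℕ} (b : Fin d → Fin N) (t : ℕ) (ht : t < d) :
    v b (t + 1) = v b t + (e N (b ⟨t, ht⟩) + e N ((b ⟨t, ht⟩ : ℕ) + 1)) := by
  unfold v
  rw [← add_sum_erase univ _ (mem_univ (⟨t, ht⟩ : Fin d)),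
    ← add_sum_erase univ _ (mem_univ (⟨t, ht⟩ : Fin d))]
  have : ∑ r ∈ univ.erase (⟨t, ht⟩ : Fin d), e N ((b r : ℕ) + if (r : ℕ) < t + 1 then 1 else 0)
    = ∑ r ∈ univ.erase (⟨t, ht⟩ : Fin d), e N ((b r : ℕ) + if (r : ℕ) < t then 1 else 0) := by
    apply sum_congr rfl
    intro r hr
    have h := (mem_erase.mp hr).1
    have h' : (r : ℕ) ≠ t := fun h'' => h (Fin.ext h'')
    congr 2
    by_cases h : (r : ℕ) < t
    · rw [if_pos h, if_pos (by omega)]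
    · rw [if_neg h, if_neg (by omega)]
  rw [this]
  simp only [lt_add_iff_pos_right, zero_lt_one, if_true, lt_self_iff_false, if_false, add_zero]
  linear_combination - f2 (e N (b ⟨t, ht⟩))

lemma v_swap {d : ℕ} (b : Fin d → Fin N) (k : ℕ) (hk : k + 1 < d) (t : ℕ) (ht : t ≠ k + 1) :
    v (b ∘ Equiv.swap ⟨k, by omega⟩ ⟨k + 1, hk⟩) t = v b t := by
  unfold v
  rw [← Equiv.sum_comp (Equiv.swap (⟨k, by omega⟩ : Fin d) ⟨k + 1, hk⟩)
    (fun r => e N ((b r : ℕ) + if (r : ℕ) < t then 1 else 0))]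
  apply sum_congr rfl
  intro r _
  simp only [Function.comp]
  have : ((Equiv.swap (⟨k, by omega⟩ : Fin d) ⟨k + 1, hk⟩ r : Fin d) : ℕ) < t ↔ (r : ℕ) < t := by
    rw [Equiv.swap_apply_def]
    split_ifs with h1 h2
    · subst h1; simp; omega
    · subst h2; simp; omega
    · rfl
  simp only [this]

def Q (s : ℕ → (Fin N → ZMod 2) → ZMod 2) (d : ℕ) (b : Fin d → Fin N) : ZMod 2 :=
  ∏ i ∈ range d, (s i (v b i) + s i (v b (i + 1)))

lemma mid (s : ℕ → (Fin N → ZMod 2) → ZMod 2) (d k : ℕ) (hk : k < d) :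
    ∑ b : Fin (d + 1) → Fin N, D d (fun i j => s i (v b j)) (k + 1) = 0 := by
  have hsk : ∀ j, skip (k + 1) j ≠ k + 1 := by
    intro j; unfold skip; split_ifs <;> omega
  refine sum_involution
    (fun b _ => b ∘ Equiv.swap (⟨k, by omega⟩ : Fin (d+1)) ⟨k + 1, by omega⟩) ?_ ?_ ?_ ?_
  · intro b _
    have : D d (fun i j => s i (v (b ∘ Equiv.swap (⟨k, by omega⟩ : Fin (d+1)) ⟨k + 1, by omega⟩) j)) (k + 1)
        = D d (fun i j => s i (v b j)) (k + 1) := by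
      unfold D
      simp only [v_swap b k (by omega) _ (hsk _)]
    rw [this, z2]
  · intro b _ hne heq
    apply hne
    have hb : b ⟨k + 1, by omega⟩ = b ⟨k, by omega⟩ := by
      have := congrFun heq ⟨k, by omega⟩
      simpa using this
    have hv : v b (k + 2) = v b k := by
      rw [v_step b (k+1) (by omega), v_step b k (by omega), hb, add_assoc, f2, add_zero]
    unfold D
    rw [prod_eq_zero (mem_range.mpr hk), zero_mul]
    have s1 : skip (k+1) k = k := by unfold skip; rw [if_pos (by omega)]
    have s2 : skip (k+1) (k+1) = k + 2 := by unfold skip; rw [if_neg (by omega)]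
    simp only [s1, s2, hv, z2]
  · intro b _; exact mem_univ _
  · intro b _
    ext r
    simp

def G (s : ℕ → (Fin N → ZMod 2) → ZMod 2) (d : ℕ) (x : Fin N → ZMod 2) (b : Fin d → Fin N) :
    ZMod 2 :=
  (∏ i ∈ range d, (s i (x + v b i) + s i (x + v b (i + 1)))) * s d (x + v b d)

lemma v_cons {d : ℕ} (b : Fin d → Fin N) (a : Fin N) (t : ℕ) :
    v (Fin.cons a b : Fin (d + 1) → Fin N) (t + 1) = e N (a + 1) + v b t := by
  unfold v
  rw [Fin.sum_univ_succ]
  simp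

lemma v_snoc {d : ℕ} (b : Fin d → Fin N) (a : Fin N) (t : ℕ) (ht : t ≤ d) :
    v (Fin.snoc b a : Fin (d + 1) → Fin N) t = e N a + v b t := by
  unfold v
  rw [Fin.sum_univ_castSucc]
  simp [add_comm, not_lt.mpr ht]

lemma first (s : ℕ → (Fin N → ZMod 2) → ZMod 2) (d : ℕ) :
    ∑ b : Fin (d + 1) → Fin N, D d (fun i j => s i (v b j)) 0
      = ∑ a : Fin N, ∑ b : Fin d → Fin N, G s d (e N (a + 1)) b := by
  rw [← Equiv.sum_comp (Fin.consEquiv (fun _ : Fin (d+1) => Fin N)), Fintype.sum_prod_type]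
  refine sum_congr rfl fun a _ => sum_congr rfl fun b _ => ?_
  have : Fin.consEquiv (fun _ : Fin (d+1) => Fin N) (a, b) = Fin.cons a b := rfl
  simp only [this, D, G, skip, Nat.not_lt_zero, if_false, v_cons]

lemma last (s : ℕ → (Fin N → ZMod 2) → ZMod 2) (d : ℕ) :
    ∑ b : Fin (d + 1) → Fin N, D d (fun i j => s i (v b j)) (d + 1)
      = ∑ a : Fin N, ∑ b : Fin d → Fin N, G s d (e N a) b := by
  rw [← Equiv.sum_comp (Fin.snocEquiv (fun _ : Fin (d+1) => Fin N)), Fintype.sum_prod_type]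
  refine sum_congr rfl fun a _ => sum_congr rfl fun b _ => ?_
  have : Fin.snocEquiv (fun _ : Fin (d+1) => Fin N) (a, b) = Fin.snoc b a := rfl
  simp only [this, D, G]
  have s1 : ∀ j ≤ d, skip (d+1) j = j := by
    intro j hj; unfold skip; rw [if_pos (by omega)]
  rw [s1 d le_rfl, v_snoc _ _ _ le_rfl]
  congr 1
  refine prod_congr rfl fun i hi => ?_
  have := mem_range.mp hi
  rw [s1 i (by omega), s1 (i+1) (by omega), v_snoc _ _ _ (by omega), v_snoc _ _ _ (by omega)]

lemma W (s : ℕ → (Fin N → ZMod 2) → ZMod 2) (hs : ∀ i x, s i (1 + x) = 1 + s i x) (d : ℕ) :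
    ∑ b : Fin d → Fin N, Q s d b = 1 := by
  induction d with
  | zero => simp [Q]
  | succ d ih =>
    have h0 : ∀ b : Fin (d+1) → Fin N, Q s (d+1) b = _ :=
      fun b => cobound d (fun i j => s i (v b j))
    simp only [h0, sum_add_distrib]
    rw [sum_comm, sum_eq_zero (fun k hk => mid s d k (mem_range.mp hk)), add_zero, first, last,
      ← CharTwo.sub_eq_add, ← sum_sub_distrib]
    rw [Fin.sum_univ_eq_sum_range (fun a => (∑ b : Fin d → Fin N, G s d (e N (a + 1)) b)
      - (∑ b : Fin d → Fin N, G s d (e N a) b)) N, sum_range_sub (fun a => ∑ b : Fin d → Fin N, G s d (e N a) b), e_zero, e_N, ← ih,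
      ← sum_sub_distrib]
    refine sum_congr rfl fun b _ => ?_
    simp only [G, Q, hs, zero_add]
    have : ∀ i, (1 + s i (v b i) + (1 + s i (v b (i+1)))) = s i (v b i) + s i (v b (i+1)) := by
      intro i; linear_combination z2 1
    simp only [this]
    rw [CharTwo.sub_eq_add]
    linear_combination (∏ i ∈ range d, (s i (v b i) + s i (v b (i + 1)))) * z2 (s d (v b d))

lemma exists_alt (s : ℕ → (Fin N → ZMod 2) → ZMod 2) (hs : ∀ i x, s i (1 + x) = 1 + s i x)
    (d : ℕ) : ∃ b : Fin d → Fin N, ∀ i < d, s i (v b i) ≠ s i (v b (i + 1)) := by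
  obtain ⟨b, -, hb⟩ := exists_ne_zero_of_sum_ne_zero (s := univ) (f := Q s d)
    (by rw [W s hs d]; exact one_ne_zero)
  refine ⟨b, fun i hi h => hb ?_⟩
  unfold Q
  rw [prod_eq_zero (mem_range.mpr hi)]
  rw [h, z2]

noncomputable def sg (z : ZMod 2) : ℝ := if z = 0 then 1 else -1

lemma z2_cases (z : ZMod 2) : z = 0 ∨ z = 1 := by
  revert z; decide

lemma sg_zero : sg 0 = 1 := by simp [sg]
lemma sg_one : sg 1 = -1 := by simp [sg]

lemma sg_add_one (z : ZMod 2) : sg (z + 1) = - sg z := by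
  rcases z2_cases z with h | h
  · subst h; rw [zero_add, sg_zero, sg_one]
  · subst h; rw [z2, sg_zero, sg_one]; ring

lemma sg_abs (z : ZMod 2) : |sg z| = 1 := by
  unfold sg; split_ifs <;> simp

lemma sg_nat (d : ℕ) : sg (d : ZMod 2) = (-1) ^ d := by
  induction d with
  | zero => simp [sg_zero]
  | succ d ih => rw [Nat.cast_succ, sg_add_one, ih, pow_succ]; ring

noncomputable def F (g : ℕ → ℝ) (x : Fin N → ZMod 2) : ℝ :=
  ∑ c : Fin N, sg (x c) * (g (c + 1) - g c)

lemma F_one_add (g : ℕ → ℝ) (x : Fin N → ZMod 2) : F g (1 + x) = - F g x := by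
  unfold F
  rw [← sum_neg_distrib]
  refine sum_congr rfl fun c _ => ?_
  rw [Pi.add_apply, Pi.one_apply, add_comm, sg_add_one]; ring

lemma F_flip (g : ℕ → ℝ) (x : Fin N → ZMod 2) (m : Fin N) (ω : ℝ)
    (hω : ∀ c < N, |g (c + 1) - g c| ≤ ω) :
    |F g (x + (e N m + e N ((m : ℕ) + 1))) - F g x| ≤ 2 * ω := by
  unfold F
  rw [← sum_sub_distrib, sum_eq_single m]
  · have : (x + (e N m + e N ((m : ℕ) + 1))) m = x m + 1 := by simp [e]
    rw [this, sg_add_one, show -sg (x m) * (g (m + 1) - g m) - sg (x m) * (g (m + 1) - g m)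
      = (-2) * sg (x m) * (g (m + 1) - g m) by ring, abs_mul, abs_mul, sg_abs]
    have := hω m m.2
    norm_num
    linarith
  · intro c _ hc
    have hc' : (c : ℕ) ≠ m := fun h => hc (Fin.ext h)
    have : (x + (e N m + e N ((m : ℕ) + 1))) c = x c := by
      simp only [Pi.add_apply, e]
      by_cases h : (m : ℕ) ≤ c
      · rw [if_pos h, if_pos (by omega), z2, add_zero]
      · rw [if_neg h, if_neg (by omega), z2, add_zero]
    rw [this, sub_self]
  · simp

lemma F_chain (g : ℕ → ℝ) (ω : ℝ) (hω : ∀ c < N, |g (c + 1) - g c| ≤ ω)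
    {d : ℕ} (b : Fin d → Fin N) (t : ℕ) (ht : t ≤ d) :
    |F g (v b t) - F g (v b 0)| ≤ 2 * ω * t := by
  induction t with
  | zero => simp
  | succ t ih =>
    have h1 := ih (by omega)
    have h2 := F_flip g (v b t) (b ⟨t, by omega⟩) ω hω
    rw [← v_step b t (by omega)] at h2
    have h3 := abs_sub_le (F g (v b (t+1))) (F g (v b t)) (F g (v b 0))
    push_cast
    linarith

lemma exists_small (hN : 0 < N) (g : ℕ → ℕ → ℝ) (ω : ℝ) (hω0 : 0 ≤ ω) (d : ℕ)
    (hω : ∀ i < d, ∀ c < N, |g i (c + 1) - g i c| ≤ ω) :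
    ∃ b : Fin d → Fin N, ∀ i < d, |F (g i) (v b 0)| ≤ 2 * ω * (d + 1) := by
  classical
  let s : ℕ → (Fin N → ZMod 2) → ZMod 2 := fun i x =>
    if 0 < F (g i) x ∨ (F (g i) x = 0 ∧ x ⟨0, hN⟩ = 1) then 1 else 0
  have hs : ∀ i x, s i (1 + x) = 1 + s i x := by
    intro i x
    simp only [s, F_one_add, Pi.add_apply, Pi.one_apply]
    rcases lt_trichotomy (F (g i) x) 0 with h | h | h
    · rw [if_pos (Or.inl (by linarith)), if_neg]
      · simp
      · rintro (h' | h')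
        · linarith
        · linarith [h'.1]
    · rw [h]
      rcases z2_cases (x ⟨0, hN⟩) with h' | h'
      · simp [h']
      · simp [h', z2]
    · rw [if_neg, if_pos (Or.inl h), z2]
      rintro (h' | h')
      · linarith
      · linarith [h'.1]
  obtain ⟨b, hb⟩ := exists_alt s hs d
  refine ⟨b, fun i hi => ?_⟩
  have h1 := hb i hi
  have h2 := F_flip (g i) (v b i) (b ⟨i, hi⟩) ω (hω i hi)
  rw [← v_step b i hi] at h2
  have h3 := F_chain (g i) ω (hω i hi) b i hi.le
  have h4 : |F (g i) (v b i)| ≤ 2 * ω := by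
    rw [abs_le] at h2 ⊢
    by_contra hcon
    apply h1
    simp only [s]
    rw [not_and_or, not_le, not_le] at hcon
    rcases hcon with h | h
    · rw [if_neg, if_neg]
      · rintro (h' | h')
        · linarith
        · linarith [h'.1]
      · rintro (h' | h')
        · linarith
        · linarith [h'.1]
    · rw [if_pos (Or.inl (by linarith)), if_pos (Or.inl (by linarith))]
  have h5 : (i : ℝ) ≤ d := by exact_mod_cast hi.le
  have h6 := abs_sub_abs_le_abs_sub (F (g i) (v b 0)) (F (g i) (v b i))
  rw [abs_sub_comm] at h6
  nlinarith

lemma F_mono (g : ℕ → ℝ) (d : ℕ) (a : Fin d → ℕ) (ha : Monotone a) (haN : ∀ r, a r ≤ N) :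
    F g (∑ r, e N (a r)) = 2 * (∑ r : Fin d, (-1) ^ (r : ℕ) * g (a r)) - g 0 + (-1) ^ d * g N := by
  induction d with
  | zero =>
    simp only [F, univ_eq_empty, sum_empty, Pi.zero_apply, sg_zero, one_mul]
    rw [Fin.sum_univ_eq_sum_range (fun c => g (c + 1) - g c) N, sum_range_sub]
    simp; ring
  | succ d ih =>
    have h := ih (fun r => a r.castSucc) (fun i j hij => ha (by simpa using hij))
      (fun r => haN _)
    rw [Fin.sum_univ_castSucc, Fin.sum_univ_castSucc]
    set x' : Fin N → ZMod 2 := ∑ r : Fin d, e N (a r.castSucc) with hx'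
    set m := a (Fin.last d) with hm
    have key : F g (x' + e N m) = F g x' - 2 * (-1) ^ d * (g N - g m) := by
      have tel : ∑ c : Fin N, (g (max ((c : ℕ) + 1) m) - g (max c m)) = g N - g m := by
        rw [Fin.sum_univ_eq_sum_range (fun c => g (max (c + 1) m) - g (max c m)) N,
          sum_range_sub (fun c => g (max c m))]
        rw [max_eq_left (haN _), max_eq_right (Nat.zero_le _)]
      rw [← tel]
      unfold F
      rw [mul_sum, ← sum_sub_distrib]
      refine sum_congr rfl fun c _ => ?_
      by_cases hc : m ≤ c
      · have h1 : x' c = (d : ZMod 2) := by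
          rw [hx', Finset.sum_apply, sum_congr rfl (g := fun _ => (1 : ZMod 2))]
          · simp
          · intro r _
            unfold e
            rw [if_pos ((ha (Fin.le_last _)).trans hc)]
        have h2 : (x' + e N m) c = x' c + 1 := by simp [e, hc]
        rw [h2, sg_add_one, h1, sg_nat, max_eq_left (by omega), max_eq_left hc]
        ring
      · have h2 : (x' + e N m) c = x' c := by simp [e, hc]
        rw [h2, max_eq_right (by omega), max_eq_right (by omega)]
        ring
    rw [key, h]
    simp only [Fin.val_castSucc, Fin.val_last]
    rw [pow_succ]
    ring

lemma approx (n : ℕ) (f : ℝ → EuclideanSpace ℝ (Fin n))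
    (hf : ContinuousOn f (Set.Icc 0 1)) (h1 : f 1 = 0) (ε : ℝ) (hε : 0 < ε) :
    ∃ a : Fin n → ℝ, Monotone a ∧ (∀ i, a i ∈ Set.Icc (0 : ℝ) 1) ∧ ∀ j,
      |(∑ i : Fin n, ((-1 : ℝ) ^ (i : ℕ)) • f (a i) - (1 / 2 : ℝ) • f 0) j| ≤ ε := by
  have hu := isCompact_Icc.uniformContinuousOn_of_continuous hf
  rw [Metric.uniformContinuousOn_iff] at hu
  set ω : ℝ := ε / (n + 1) with hω
  have hn1 : (0 : ℝ) < n + 1 := by positivity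
  have hω0 : 0 < ω := by positivity
  obtain ⟨δ, hδ, hu⟩ := hu ω hω0
  obtain ⟨M, hM⟩ := exists_nat_one_div_lt hδ
  set N := M + 1 with hN
  have hNpos : (0 : ℝ) < N := by positivity
  have hmem : ∀ c : ℕ, c ≤ N → (c : ℝ) / N ∈ Set.Icc (0 : ℝ) 1 := by
    intro c hc
    refine ⟨by positivity, ?_⟩
    rw [div_le_one hNpos]; exact_mod_cast hc
  let g : ℕ → ℕ → ℝ := fun i c => if h : i < n then f ((c : ℝ) / N) ⟨i, h⟩ else 0
  obtain ⟨b, hb⟩ := exists_small (N := N) (by omega) g ω hω0.le n (by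
    intro i hi c hc
    simp only [g, dif_pos hi]
    have h := hu _ (hmem (c + 1) hc) _ (hmem c hc.le) (by
      rw [Real.dist_eq, ← sub_div]
      push_cast
      rw [add_sub_cancel_left, abs_of_pos (by positivity)]
      simpa [hN] using hM)
    rw [dist_eq_norm] at h
    have h' := PiLp.norm_apply_le (f (((c + 1 : ℕ) : ℝ) / N) - f ((c : ℝ) / N)) ⟨i, hi⟩
    rw [Real.norm_eq_abs, PiLp.sub_apply] at h'
    exact h'.trans h.le)
  let σ := Tuple.sort b
  have hmono : Monotone (b ∘ σ) := Tuple.monotone_sort b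
  let a : Fin n → ℕ := fun r => (b (σ r) : ℕ)
  have ha : Monotone a := fun i j hij => hmono hij
  have haN : ∀ r, a r ≤ N := fun r => (b (σ r)).2.le
  have hv : v b 0 = ∑ r, e N (a r) := by
    rw [Equiv.sum_comp σ (fun r => e N (b r : ℕ))]
    simp [v]
  refine ⟨fun r => (a r : ℝ) / N, ?_, fun r => hmem _ (haN r), ?_⟩
  · intro i j hij
    have : (a i : ℝ) ≤ a j := by exact_mod_cast ha hij
    simp only
    gcongr
  · intro j
    have h := hb j j.2
    rw [hv, F_mono (g j) n a ha haN] at h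
    have e1 : g j N = 0 := by
      simp only [g, dif_pos j.2, div_self hNpos.ne', h1]; simp
    have e2 : g j 0 = f 0 j := by simp [g]
    have e3 : ∀ r, g j (a r) = f ((a r : ℝ) / N) j := by intro r; simp [g]
    simp only [e1, e2, e3] at h
    have e4 : (∑ i : Fin n, ((-1 : ℝ) ^ (i : ℕ)) • f ((a i : ℝ) / N) - (1 / 2 : ℝ) • f 0) j
      = ∑ i : Fin n, (-1 : ℝ) ^ (i : ℕ) * f ((a i : ℝ) / N) j - (1 / 2 : ℝ) * f 0 j := by
      simp
    rw [e4]
    have e5 : 2 * ω * (n + 1) = 2 * ε := by rw [hω]; field_simp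
    rw [e5, abs_le] at h
    rw [abs_le]
    constructor <;> linarith [h.1, h.2]

end AltIVT

/-- An analogue of the intermediate value theorem: if `f : [0,1] → ℝⁿ` is continuous
with `f(1) = 0`, then there are `0 ≤ a₁ ≤ ⋯ ≤ aₙ ≤ 1` with
`Σ_{i=1}^{n} (−1)^{i+1} f(aᵢ) = f(0)/2`. -/
theorem alternating_intermediate_value
    (n : ℕ) (f : ℝ → EuclideanSpace ℝ (Fin n))
    (hf : ContinuousOn f (Set.Icc 0 1)) (h1 : f 1 = 0) :
    ∃ a : Fin n → ℝ, Monotone a ∧ (∀ i, a i ∈ Set.Icc (0 : ℝ) 1) ∧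
      ∑ i : Fin n, ((-1 : ℝ) ^ (i : ℕ)) • f (a i) = (1 / 2 : ℝ) • f 0 := by
  let K : Set (Fin n → ℝ) := {a | Monotone a} ∩ Set.univ.pi fun _ => Set.Icc (0 : ℝ) 1
  have hcl : IsClosed {a : Fin n → ℝ | Monotone a} := by
    have : {a : Fin n → ℝ | Monotone a} = ⋂ i, ⋂ j, ⋂ (_ : i ≤ j), {a | a i ≤ a j} := by
      ext a; simp [Monotone]
    rw [this]
    refine isClosed_iInter fun i => isClosed_iInter fun j => isClosed_iInter fun _ => ?_
    exact isClosed_le (continuous_apply i) (continuous_apply j)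
  have hK : IsCompact K :=
    (isCompact_univ_pi fun _ => isCompact_Icc).inter_left hcl
  let Φ : (Fin n → ℝ) → ℝ := fun a => ∑ j,
    |(∑ i : Fin n, ((-1 : ℝ) ^ (i : ℕ)) • f (a i) - (1 / 2 : ℝ) • f 0) j|
  have hΦ : ContinuousOn Φ K := by
    have hc : ContinuousOn (fun a : Fin n → ℝ =>
        ∑ i : Fin n, ((-1 : ℝ) ^ (i : ℕ)) • f (a i) - (1 / 2 : ℝ) • f 0) K := by
      refine ContinuousOn.sub (continuousOn_finsetSum _ fun i _ => ?_) continuousOn_const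
      have hfi : ContinuousOn (fun a : Fin n → ℝ => f (a i)) K := hf.comp (t := Set.Icc (0 : ℝ) 1) (f := fun a : Fin n → ℝ => a i)
        (continuous_apply i).continuousOn (fun a ha => ha.2 i (Set.mem_univ i))
      exact hfi.const_smul ((-1 : ℝ) ^ (i : ℕ))
    refine continuousOn_finsetSum _ fun j _ => ?_
    have hp : Continuous (fun y : EuclideanSpace ℝ (Fin n) => y j) := by fun_prop
    exact (hp.comp_continuousOn hc).abs
  have hne : K.Nonempty := ⟨fun _ => 0, fun _ _ _ => le_rfl, fun _ _ => by simp⟩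
  obtain ⟨a, haK, hmin⟩ := hK.exists_isMinOn hne hΦ
  refine ⟨a, haK.1, fun i => haK.2 i (Set.mem_univ i), ?_⟩
  have hle : Φ a ≤ 0 := by
    by_contra hpos
    push Not at hpos
    obtain ⟨a', m', i', h'⟩ := AltIVT.approx n f hf h1 (Φ a / (n + 1)) (by positivity)
    have h2 : Φ a ≤ Φ a' := hmin ⟨m', fun i _ => i' i⟩
    have h3 : Φ a' ≤ ∑ _j : Fin n, Φ a / (n + 1) := Finset.sum_le_sum fun j _ => h' j
    rw [Finset.sum_const, Finset.card_univ, Fintype.card_fin, nsmul_eq_mul] at h3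
    have h4 : (n : ℝ) * (Φ a / (n + 1)) < Φ a := by
      rw [mul_div_assoc', div_lt_iff₀ (by positivity)]
      nlinarith
    linarith
  rw [← sub_eq_zero]
  ext j
  have h5 : ∀ j ∈ Finset.univ, |(∑ i : Fin n, ((-1 : ℝ) ^ (i : ℕ)) • f (a i)
      - (1 / 2 : ℝ) • f 0) j| = 0 :=
    (Finset.sum_eq_zero_iff_of_nonneg (fun _ _ => abs_nonneg _)).mp
      (le_antisymm hle (Finset.sum_nonneg fun _ _ => abs_nonneg _))
  exact abs_eq_zero.mp (h5 j (Finset.mem_univ j))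
end

section
/- Let ψ : X → Y be a submetry between metric spaces and 0 < ε < π/2. If p ∈ X satisfies the ATB(ε) condition with constants L ∈ ℕ and R > 0, then q := ψ(p) ∈ Y also satisfies the ATB(ε) condition with constants L and R. -/
/-- The point `p` satisfies the `ATB(ε)` condition with constants `L` and `R`. -/
def ATBPoint {X : Type*} [MetricSpace X] (ε : ℝ) (p : X) (L : ℕ) (R : ℝ) : Prop :=
  ∀ y : Fin L → X, (∀ i, y i ∈ Metric.ball p R ∧ y i ≠ p) →
    ∃ i j, i ≠ j ∧ compAngle p (y i) (y j) < ε

/-- A map between metric spaces is a submetry if the image of every closed ball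
centered at `x` of radius `r` is the closed ball centered at `ψ x` of radius `r`. -/
def IsSubmetry {X Y : Type*} [MetricSpace X] [MetricSpace Y] (ψ : X → Y) : Prop :=
  ∀ (x : X) (r : ℝ), 0 < r → ψ '' Metric.closedBall x r = Metric.closedBall (ψ x) r

/-- The `ATB(ε)` condition descends through submetries. -/
theorem atb_of_submetry
    {X Y : Type*} [MetricSpace X] [MetricSpace Y]
    (ψ : X → Y) (hψ : IsSubmetry ψ)
    (ε : ℝ) (hε0 : 0 < ε) (hε : ε < Real.pi / 2)
    (p : X) (L : ℕ) (R : ℝ) (hR : 0 < R)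
    (hATB : ATBPoint ε p L R) :
    ATBPoint ε (ψ p) L R := by
  have h1 : ∀ a b : X, dist (ψ a) (ψ b) ≤ dist a b := by
    intro a b
    rcases eq_or_ne a b with rfl | hab
    · simp
    · have h := hψ b (dist a b) (dist_pos.2 hab)
      have : ψ a ∈ Metric.closedBall (ψ b) (dist a b) := by
        rw [← h]
        exact ⟨a, Metric.mem_closedBall.2 le_rfl, rfl⟩
      exact Metric.mem_closedBall.1 this
  intro y hy
  have h2 : ∀ i, ∃ x : X, ψ x = y i ∧ dist x p = dist (y i) (ψ p) := by
    intro i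
    have h := hψ p (dist (y i) (ψ p)) (dist_pos.2 (hy i).2)
    have : y i ∈ Metric.closedBall (ψ p) (dist (y i) (ψ p)) :=
      Metric.mem_closedBall.2 le_rfl
    rw [← h] at this
    obtain ⟨x, hx, hxy⟩ := this
    refine ⟨x, hxy, le_antisymm (Metric.mem_closedBall.1 hx) ?_⟩
    rw [← hxy]
    exact h1 x p
  choose x hx hd using h2
  obtain ⟨i, j, hij, hlt⟩ := hATB x (fun i => ⟨by
    rw [Metric.mem_ball, hd i]
    exact (hy i).1, by
    rw [← dist_pos, hd i, dist_pos]
    exact (hy i).2⟩)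
  refine ⟨i, j, hij, lt_of_le_of_lt ?_ hlt⟩
  unfold compAngle
  rw [hd i, hd j]
  apply Real.arccos_le_arccos
  have h3 : dist (y i) (y j) ≤ dist (x i) (x j) := by
    rw [← hx i, ← hx j]
    exact h1 _ _
  gcongr
end

section
/- Let (X,d) be a geodesic metric space, f : X → ℝ a quasi-convex function, λ ∈ ℝ, and γ : [0,∞) → X a continuous curve such that f∘γ is nonincreasing and γ satisfies the integrated λ-evolution variational inequality: for every y ∈ X and all 0 ≤ s ≤ t, (1/2)d(γ(t),y)² − (1/2)d(γ(s),y)² + λ∫ₛᵗ d(γ(r),y)² dr ≤ ∫ₛᵗ (f(y) − f(γ(r))) dr. Then γ is self-contracted. -/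
/-- A map `ξ : [0,1] → X` is a minimizing geodesic from `x` to `y` parametrized
proportionally to arc length. -/
def IsGeodesicFromTo {X : Type*} [MetricSpace X] (ξ : ℝ → X) (x y : X) : Prop :=
  ξ 0 = x ∧ ξ 1 = y ∧
    ∀ s ∈ Set.Icc (0 : ℝ) 1, ∀ t ∈ Set.Icc (0 : ℝ) 1,
      dist (ξ s) (ξ t) = |s - t| * dist x y

/-- In a geodesic metric space, if `f` is quasi-convex and `γ : [0,∞) → X` is a
continuous curve along which `f` is nonincreasing and which satisfies the integrated
`λ`-evolution variational inequality, then `γ` is self-contracted. -/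
theorem evi_curve_selfContracted
    {X : Type*} [MetricSpace X]
    (hgeo : ∀ x y : X, ∃ ξ : ℝ → X, IsGeodesicFromTo ξ x y)
    (f : X → ℝ)
    (hqc : ∀ (x y : X) (ξ : ℝ → X), IsGeodesicFromTo ξ x y →
      ∀ t ∈ Set.Ioo (0 : ℝ) 1, f (ξ t) ≤ max (f x) (f y))
    (lam : ℝ) (γ : ℝ → X)
    (hcont : ContinuousOn γ (Set.Ici 0))
    (hdecr : ∀ s t : ℝ, 0 ≤ s → s ≤ t → f (γ t) ≤ f (γ s))
    (hEVI : ∀ (y : X) (s t : ℝ), 0 ≤ s → s ≤ t →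
      (1 / 2) * dist (γ t) y ^ 2 - (1 / 2) * dist (γ s) y ^ 2 +
          lam * ∫ r in s..t, dist (γ r) y ^ 2 ≤
        ∫ r in s..t, (f y - f (γ r))) :
    ∀ t₁ t₂ t₃ : ℝ, 0 ≤ t₁ → t₁ ≤ t₂ → t₂ ≤ t₃ →
      dist (γ t₂) (γ t₃) ≤ dist (γ t₁) (γ t₃) := by
  intro t₁ t₂ T h1 h12 h2T
  have hT0 : 0 ≤ T := by linarith
  by_contra hcon
  push Not at hcon
  obtain ⟨a, ha1, ha2⟩ := exists_between hcon
  have ha0 : 0 < a := lt_of_le_of_lt dist_nonneg ha1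
  set D : ℝ → ℝ := fun r => dist (γ r) (γ T) with hD
  have hγc : ContinuousOn γ (Set.Icc t₁ t₂) := hcont.mono (fun x hx => le_trans h1 hx.1)
  have hDc : ContinuousOn D (Set.Icc t₁ t₂) :=
    fun x hx => (hγc x hx).dist tendsto_const_nhds
  -- last time below the level
  have hKc : IsCompact (Set.Icc t₁ t₂ ∩ D ⁻¹' Set.Iic a) :=
    isCompact_Icc.of_isClosed_subset (hDc.preimage_isClosed_of_isClosed isClosed_Icc isClosed_Iic)
      Set.inter_subset_left
  obtain ⟨s₀, hs₀, hs₀max⟩ := hKc.exists_isGreatest ⟨t₁, ⟨le_refl _, h12⟩, ha1.le⟩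
  have hs0a : D s₀ ≤ a := hs₀.2
  have hs01 : t₁ ≤ s₀ := hs₀.1.1
  have hs02 : s₀ ≤ t₂ := hs₀.1.2
  have hlow' : ∀ r, s₀ < r → r ≤ t₂ → a < D r := by
    intro r hr hr2
    by_contra h
    push Not at h
    exact absurd (hs₀max ⟨⟨by linarith, hr2⟩, h⟩) (not_le.2 hr)
  have hlt : s₀ < t₂ := by
    rcases hs02.lt_or_eq with h | h
    · exact h
    · rw [h] at hs0a
      exact absurd ha2 (not_lt.2 hs0a)
  have hs0eq : a ≤ D s₀ := by
    have hcl : IsClosed (Set.Icc t₁ t₂ ∩ D ⁻¹' Set.Ici a) :=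
      hDc.preimage_isClosed_of_isClosed isClosed_Icc isClosed_Ici
    have hsub : Set.Ioo s₀ t₂ ⊆ Set.Icc t₁ t₂ ∩ D ⁻¹' Set.Ici a := fun r hr =>
      ⟨⟨by linarith [hr.1], hr.2.le⟩, (hlow' r hr.1 hr.2.le).le⟩
    have := hcl.closure_subset_iff.2 hsub
    rw [closure_Ioo hlt.ne] at this
    exact (this ⟨le_refl _, hlt.le⟩).2
  have hlow : ∀ r, s₀ ≤ r → r ≤ t₂ → a ≤ D r := by
    intro r hr hr2
    rcases hr.lt_or_eq with h | h
    · exact (hlow' r h hr2).le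
    · rw [← h]; exact hs0eq
  obtain ⟨M, hM⟩ := (isCompact_Icc.image_of_continuousOn hDc).bddAbove
  have hM' : ∀ r, s₀ ≤ r → r ≤ t₂ → D r ≤ M := fun r hr hr2 =>
    hM ⟨r, ⟨by linarith, hr2⟩, rfl⟩
  have hM0 : 0 < M := lt_of_lt_of_le ha0 (hs0eq.trans (hM' s₀ le_rfl hs02))
  set F : ℝ → ℝ := fun r => f (γ r) with hF
  have hstep : ∀ θ : ℝ, 0 < θ → θ < 1 → ∀ s t, s₀ ≤ s → s ≤ t → t ≤ t₂ →
      (∀ r ∈ Set.Icc s t, dist (γ r) (γ s) ≤ θ) →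
      D t ≤ D s + (t - s) * (|lam| * (θ * (1 + M)) ^ 2 + (F s - F t)) / (θ * a) := by
    intro θ hθ0 hθ1 s t hs hst ht hclose
    have hs0 : 0 ≤ s := by linarith
    obtain ⟨ξ, hξ⟩ := hgeo (γ s) (γ T)
    obtain ⟨x0, x1, xd⟩ := id hξ
    set z := ξ θ with hz
    have hDs := hlow s hs (hst.trans ht)
    have hDM := hM' s hs (hst.trans ht)
    have d0 : dist (γ s) z = θ * D s := by
      have := xd 0 ⟨le_rfl, zero_le_one⟩ θ ⟨hθ0.le, hθ1.le⟩
      rw [x0, zero_sub, abs_neg, abs_of_pos hθ0] at this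
      exact this
    have d1 : dist z (γ T) = (1 - θ) * D s := by
      have := xd θ ⟨hθ0.le, hθ1.le⟩ 1 ⟨zero_le_one, le_rfl⟩
      rw [x1, abs_sub_comm, abs_of_pos (by linarith)] at this
      exact this
    have fz : f z ≤ F s := by
      have := hqc _ _ ξ hξ θ ⟨hθ0, hθ1⟩
      rwa [max_eq_left (hdecr s T hs0 (by linarith))] at this
    have key := hEVI z s t hs0 hst
    have hI1 : |∫ r in s..t, dist (γ r) z ^ 2| ≤ (θ * (1 + M)) ^ 2 * (t - s) := by
      have := intervalIntegral.norm_integral_le_of_norm_le_const (a := s) (b := t)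
        (f := fun r => dist (γ r) z ^ 2) (C := (θ * (1 + M)) ^ 2) (by
          intro r hr
          rw [Set.uIoc_of_le hst] at hr
          have h3 := hclose r ⟨hr.1.le, hr.2⟩
          have h4 := dist_triangle (γ r) (γ s) z
          rw [Real.norm_of_nonneg (by positivity)]
          apply pow_le_pow_left₀ dist_nonneg
          nlinarith)
      rwa [abs_of_nonneg (sub_nonneg.2 hst)] at this
    have hFi : IntervalIntegrable F MeasureTheory.volume s t := by
      apply AntitoneOn.intervalIntegrable
      intro x hx y hy hxy
      rw [Set.uIcc_of_le hst] at hx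
      exact hdecr x y (hs0.trans hx.1) hxy
    have hI2 : ∫ r in s..t, (f z - f (γ r)) ≤ (t - s) * (F s - F t) := by
      have := intervalIntegral.integral_mono_on hst
        (intervalIntegrable_const.sub hFi) (intervalIntegrable_const (c := F s - F t))
        (f := fun r => f z - F r) (by
          intro r hr
          have := hdecr r t (hs0.trans hr.1) hr.2
          simp only [hF] at *
          linarith)
      rw [intervalIntegral.integral_const, smul_eq_mul] at this
      exact this
    have hI3 : -(|lam| * ((θ * (1 + M)) ^ 2 * (t - s))) ≤ lam * ∫ r in s..t, dist (γ r) z ^ 2 := by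
      have h5 := neg_abs_le (lam * ∫ r in s..t, dist (γ r) z ^ 2)
      rw [abs_mul] at h5
      have := mul_le_mul_of_nonneg_left hI1 (abs_nonneg lam)
      linarith
    set E := (t - s) * (|lam| * (θ * (1 + M)) ^ 2 + (F s - F t)) with hE
    have hFst : F t ≤ F s := hdecr s t hs0 hst
    have hE0 : 0 ≤ E := mul_nonneg (sub_nonneg.2 hst)
      (add_nonneg (by positivity) (sub_nonneg.2 hFst))
    have hsq : dist (γ t) z ^ 2 ≤ (θ * D s) ^ 2 + 2 * E := by
      rw [d0] at key
      rw [hE]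
      linarith
    have hE' : E / (θ * a) * (θ * a) = E := by
      field_simp
    have hq0 : 0 ≤ E / (θ * a) := by positivity
    have hd : dist (γ t) z ≤ θ * D s + E / (θ * a) := by
      refine (pow_le_pow_iff_left₀ dist_nonneg (add_nonneg (mul_nonneg hθ0.le (ha0.le.trans hDs)) hq0) two_ne_zero).1 ?_
      have : E / (θ * a) * (θ * a) ≤ E / (θ * a) * (θ * D s) := by gcongr
      nlinarith [sq_nonneg (E / (θ * a))]
    have htri : D t ≤ dist (γ t) z + dist z (γ T) := dist_triangle _ _ _
    linarith
  have hunif := isCompact_Icc.uniformContinuousOn_of_continuous hγc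
  rw [Metric.uniformContinuousOn_iff] at hunif
  set L := t₂ - s₀ with hL
  have hL0 : 0 < L := sub_pos.2 hlt
  set C := (L * |lam| * (1 + M) ^ 2 + (F s₀ - F t₂)) / a with hC
  have hfin : ∀ θ : ℝ, 0 < θ → θ < 1 → D t₂ ≤ a + C * θ := by
    intro θ hθ0 hθ1
    obtain ⟨δ, hδ, hu⟩ := hunif θ hθ0
    have hm : 0 < min δ (θ ^ 2) := lt_min hδ (by positivity)
    obtain ⟨N, hN⟩ := exists_nat_gt (L / min δ (θ ^ 2))
    have hN0 : (0 : ℝ) < N := lt_of_le_of_lt (by positivity) hN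
    set h := L / N with hh
    have hh0 : 0 < h := by positivity
    have hNh : N * h = L := by rw [hh]; field_simp
    have hhm : h < min δ (θ ^ 2) := by
      rw [hh, div_lt_iff₀ hN0]
      rw [div_lt_iff₀ hm] at hN
      linarith
    have hind : ∀ k : ℕ, k ≤ N → D (s₀ + k * h) ≤ D s₀ +
        h * (k * (|lam| * (θ * (1 + M)) ^ 2) + (F s₀ - F (s₀ + k * h))) / (θ * a) := by
      intro k
      induction k with
      | zero => intro _; simp
      | succ k ih =>
        intro hk
        have ih' := ih (by omega)
        have hkN : ((k : ℝ) + 1) * h ≤ L := by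
          rw [← hNh]
          have : ((k : ℝ) + 1) ≤ N := by exact_mod_cast hk
          gcongr
        have hkh : 0 ≤ (k : ℝ) * h := by positivity
        have := hstep θ hθ0 hθ1 (s₀ + k * h) (s₀ + (k + 1) * h) (by linarith) (by linarith)
          (by linarith) (by
            intro r hr
            apply (hu r ⟨by linarith [hr.1], by linarith [hr.2]⟩ (s₀ + k * h)
              ⟨by linarith, by linarith⟩ _).le
            rw [Real.dist_eq, abs_of_nonneg (by linarith [hr.1])]
            have := hr.2
            have := lt_of_lt_of_le hhm (min_le_left _ _)
            linarith)
        push_cast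
        refine this.trans ((add_le_add_left ih' _).trans (le_of_eq ?_))
        field_simp
        ring
    have hN' := hind N le_rfl
    rw [hNh, show s₀ + L = t₂ by rw [hL]; ring] at hN'
    have hF0 : F t₂ ≤ F s₀ := hdecr s₀ t₂ (by linarith) hs02
    have hle : h * (N * (|lam| * (θ * (1 + M)) ^ 2) + (F s₀ - F t₂)) / (θ * a) ≤ C * θ := by
      have hh2 : h ≤ θ ^ 2 := (lt_of_lt_of_le hhm (min_le_right _ _)).le
      have e : C * θ = (L * |lam| * (θ * (1 + M)) ^ 2 + θ ^ 2 * (F s₀ - F t₂)) / (θ * a) := by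
        rw [hC]; field_simp
      rw [e]
      apply div_le_div_of_nonneg_right _ (by positivity)
      have := mul_le_mul_of_nonneg_right hh2 (sub_nonneg.2 hF0)
      rw [← hNh]
      linarith
    linarith
  have hC0 : 0 ≤ C := by
    have hF0 : F t₂ ≤ F s₀ := hdecr s₀ t₂ (by linarith) hs02
    exact div_nonneg (add_nonneg (by positivity) (sub_nonneg.2 hF0)) ha0.le
  have hgap : 0 < D t₂ - a := sub_pos.2 ha2
  set g := D t₂ - a with hg
  have h9 := hfin (g / (g + 2 * (C + 1))) (by positivity) (by
    rw [div_lt_one (by positivity)]; linarith)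
  have h10 : g ≤ C * (g / (g + 2 * (C + 1))) := by linarith
  rw [← mul_div_assoc, le_div_iff₀ (by positivity)] at h10
  nlinarith
end

section
/- Let (X,d) be a metric space and suppose there exist 0 < α < 1 and N ∈ ℕ such that X admits no subset of cardinality at least N satisfying the SRA(α) condition. Then X satisfies the doubling condition with a constant L depending only on N and α: there is L = L(N, α) ∈ ℕ such that for every x ∈ X and R > 0, there exist x₁, …, x_L ∈ B_R(x) with B_R(x) ⊆ ⋃_{i=1}^{L} B_{R/2}(xᵢ). -/
/-- A subset of a metric space satisfies the small rough angle condition `SRA(α)`. -/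
def IsSRA {X : Type*} [MetricSpace X] (α : ℝ) (s : Set X) : Prop :=
  ∀ x ∈ s, ∀ y ∈ s, ∀ z ∈ s,
    dist x y ≤ max (dist x z + α * dist z y) (α * dist x z + dist z y)

theorem ramsey_aux (k : ℕ) : ∀ (m : ℕ) (n : Fin k → ℕ), ∑ i, n i = m →
    ∃ M : ℕ, ∀ (X : Type) (c : X → X → Fin k), (∀ x y, c x y = c y x) →
      ∀ S : Finset X, M ≤ S.card → ∃ i, ∃ T : Finset X, T ⊆ S ∧ n i ≤ T.card ∧
        ∀ x ∈ T, ∀ y ∈ T, x ≠ y → c x y = i := by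
  classical
  intro m
  induction m with
  | zero =>
    intro n hn
    refine ⟨1, fun X c _ S hS => ?_⟩
    obtain ⟨v, hv⟩ := Finset.card_pos.1 hS
    refine ⟨c v v, ∅, by simp, ?_, by simp⟩
    have := (Finset.sum_eq_zero_iff.1 hn) (c v v) (Finset.mem_univ _)
    simp [this]
  | succ m ih =>
    intro n hn
    by_cases h0 : ∃ i, n i = 0
    · obtain ⟨i, hi⟩ := h0
      exact ⟨0, fun X c _ S _ => ⟨i, ∅, by simp, by simp [hi], by simp⟩⟩
    push Not at h0
    have key : ∀ i, ∑ j, (Function.update n i (n i - 1)) j = m := by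
      intro i
      have h1 := Finset.sum_update_of_mem (Finset.mem_univ i) n (n i - 1)
      have h2 := Finset.add_sum_erase Finset.univ n (Finset.mem_univ i)
      rw [h1, ← Finset.erase_eq]
      have := h0 i
      omega
    choose M hM using fun i => ih (Function.update n i (n i - 1)) (key i)
    refine ⟨∑ i, M i + 2, fun X c hc S hS => ?_⟩
    obtain ⟨v, hv⟩ : S.Nonempty := Finset.card_pos.1 (by omega)
    have hcard : (S.erase v).card = ∑ i, ((S.erase v).filter (fun y => c v y = i)).card :=
      Finset.card_eq_sum_card_fiberwise (fun _ _ => Finset.mem_coe.2 (Finset.mem_univ _))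
    have he := Finset.card_erase_of_mem hv
    obtain ⟨i, -, hi⟩ := Finset.exists_lt_of_sum_lt
      (s := Finset.univ) (f := M)
      (g := fun i => ((S.erase v).filter (fun y => c v y = i)).card) (by omega)
    obtain ⟨j, T, hTS, hTc, hT⟩ := hM i X c hc _ hi.le
    have hsub : T ⊆ S := fun a ha =>
      Finset.mem_of_mem_erase (Finset.mem_filter.1 (hTS ha)).1
    by_cases hji : j = i
    · subst hji
      rw [Function.update_self] at hTc
      have hvT : v ∉ T := fun h => by
        have := (Finset.mem_filter.1 (hTS h)).1
        simp at this
      have hvc : ∀ y ∈ T, c v y = j := fun y hy => (Finset.mem_filter.1 (hTS hy)).2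
      refine ⟨j, insert v T, Finset.insert_subset hv hsub, ?_, ?_⟩
      · rw [Finset.card_insert_of_notMem hvT]; omega
      · intro x hx y hy hxy
        rcases Finset.mem_insert.1 hx with rfl | hx1
        · rcases Finset.mem_insert.1 hy with rfl | hy
          · exact absurd rfl hxy
          · exact hvc y hy
        · rcases Finset.mem_insert.1 hy with rfl | hy
          · rw [hc]; exact hvc x hx1
          · exact hT x hx1 y hy hxy
    · rw [Function.update_of_ne hji] at hTc
      exact ⟨j, T, hsub, hTc, hT⟩

/-- If a metric space admits no `SRA(α)`-subset of cardinality at least `N`, then it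
satisfies the doubling condition with a constant `L = L(N, α)` depending only on `N`
and `α`: every open ball `B_R(x)` is covered by `L` balls of radius `R/2` centered at
points of `B_R(x)`. -/
theorem doubling_of_no_large_sra (N : ℕ) (α : ℝ) (hα0 : 0 < α) (hα1 : α < 1) :
    ∃ L : ℕ, ∀ (X : Type) [MetricSpace X],
      (¬ ∃ s : Finset X, N ≤ s.card ∧ IsSRA α (↑s : Set X)) →
      ∀ (x : X) (R : ℝ), 0 < R →
        ∃ c : Fin L → X, (∀ i, c i ∈ Metric.ball x R) ∧
          Metric.ball x R ⊆ ⋃ i, Metric.ball (c i) (R / 2) := by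
  classical
  obtain ⟨k, hk⟩ := pow_unbounded_of_one_lt (4 : ℝ) (show (1 : ℝ) < 1 + α by linarith)
  obtain ⟨M, hM⟩ := ramsey_aux (k + 1) _ (fun _ => N) rfl
  refine ⟨M, fun X _ hX x R hR => ?_⟩
  have hf : ∀ d : ℝ, ∃ i : Fin (k + 1), R / 2 ≤ d → d < 2 * R →
      (R / 2) * (1 + α) ^ (i : ℕ) ≤ d ∧ d ≤ (R / 2) * (1 + α) ^ ((i : ℕ) + 1) := by
    intro d
    by_cases h : R / 2 ≤ d ∧ d < 2 * R
    · obtain ⟨n, h1, h2⟩ := exists_nat_pow_near (x := d / (R / 2)) (y := 1 + α)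
        ((one_le_div (by linarith)).2 h.1) (by linarith)
      rw [le_div_iff₀ (by linarith)] at h1
      rw [div_lt_iff₀ (by linarith)] at h2
      have hn : n < k + 1 := by
        by_contra hcon
        have h3 : (1 + α) ^ k ≤ (1 + α) ^ n := pow_le_pow_right₀ (by linarith) (by omega)
        have h4 : 4 * (R / 2) < (1 + α) ^ n * (R / 2) :=
          mul_lt_mul_of_pos_right (by linarith) (by linarith)
        linarith [h.2]
      exact ⟨⟨n, hn⟩, fun _ _ => ⟨by simpa [mul_comm] using h1, by
        have := h2.le
        rwa [mul_comm] at this⟩⟩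
    · exact ⟨0, fun a b => absurd ⟨a, b⟩ h⟩
  choose f hf using hf
  have main : ∀ n : ℕ, (∃ S : Finset X, S.card = n ∧ (∀ y ∈ S, y ∈ Metric.ball x R) ∧
        ∀ y ∈ S, ∀ z ∈ S, y ≠ z → R / 2 ≤ dist y z) ∨
      (∃ C : Finset X, C.card ≤ n ∧ (∀ y ∈ C, y ∈ Metric.ball x R) ∧
        ∀ y ∈ Metric.ball x R, ∃ z ∈ C, dist y z < R / 2) := by
    intro n
    induction n with
    | zero => exact Or.inl ⟨∅, by simp⟩
    | succ n ih =>
      rcases ih with ⟨S, hc, hb, hs⟩ | ⟨C, hc, hb, hs⟩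
      · by_cases hcov : ∀ y ∈ Metric.ball x R, ∃ z ∈ S, dist y z < R / 2
        · exact Or.inr ⟨S, by omega, hb, hcov⟩
        · push Not at hcov
          obtain ⟨v, hv, hvS⟩ := hcov
          have hvn : v ∉ S := fun h => by
            have := hvS v h
            rw [dist_self] at this
            linarith
          refine Or.inl ⟨insert v S, by rw [Finset.card_insert_of_notMem hvn, hc], ?_, ?_⟩
          · intro y hy
            rcases Finset.mem_insert.1 hy with rfl | hy
            · exact hv
            · exact hb y hy
          · intro y hy z hz hyz
            rcases Finset.mem_insert.1 hy with rfl | hy1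
            · rcases Finset.mem_insert.1 hz with rfl | hz
              · exact absurd rfl hyz
              · exact hvS z hz
            · rcases Finset.mem_insert.1 hz with rfl | hz
              · rw [dist_comm]; exact hvS y hy1
              · exact hs y hy1 z hz hyz
      · exact Or.inr ⟨C, by omega, hb, hs⟩
  rcases main M with ⟨S, hc, hb, hs⟩ | ⟨C, hc, hb, hs⟩
  · exfalso
    apply hX
    obtain ⟨i, T, hTS, hTN, hT⟩ := hM X (fun y z => f (dist y z))
      (fun y z => by simp only [dist_comm]) S hc.ge
    refine ⟨T, hTN, ?_⟩
    have hd : ∀ y ∈ T, ∀ z ∈ T, y ≠ z → (R / 2) * (1 + α) ^ (i : ℕ) ≤ dist y z ∧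
        dist y z ≤ (R / 2) * (1 + α) ^ ((i : ℕ) + 1) := by
      intro y hy z hz hyz
      have h1 := hs y (hTS hy) z (hTS hz) hyz
      have h2 := Metric.mem_ball.1 (hb y (hTS hy))
      have h3 := Metric.mem_ball.1 (hb z (hTS hz))
      have h4 := dist_triangle_right y z x
      have h5 := hf (dist y z) h1 (by linarith)
      have h6 : f (dist y z) = i := hT y hy z hz hyz
      rwa [h6] at h5
    intro a ha b hb' z hz
    have ha := Finset.mem_coe.1 ha
    have hb' := Finset.mem_coe.1 hb'
    have hz := Finset.mem_coe.1 hz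
    by_cases hab : a = b
    · subst hab
      rw [dist_self]
      exact le_max_of_le_left (by positivity)
    by_cases haz : a = z
    · subst haz
      exact le_max_of_le_right (by simp)
    by_cases hzb : z = b
    · subst hzb
      exact le_max_of_le_left (by simp)
    apply le_max_of_le_left
    have h1 := (hd a ha b hb' hab).2
    have h2 := (hd a ha z hz haz).1
    have h3 := mul_le_mul_of_nonneg_left (hd z hz b hb' hzb).1 hα0.le
    rw [pow_succ] at h1
    linarith
  · refine ⟨fun i => C.toList.getD i x, fun i => ?_, fun y hy => ?_⟩
    · by_cases hi : (i : ℕ) < C.toList.length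
      · simp only [List.getD_eq_getElem _ _ hi]
        exact hb _ (Finset.mem_toList.1 (List.getElem_mem hi))
      · simp only [List.getD_eq_default _ _ (not_lt.1 hi)]
        exact Metric.mem_ball_self hR
    · obtain ⟨z, hz, hyz⟩ := hs y hy
      obtain ⟨i, hi, hiz⟩ := List.getElem_of_mem (Finset.mem_toList.2 hz)
      have hiM : i < M := by rw [Finset.length_toList] at hi; omega
      refine Set.mem_iUnion.2 ⟨⟨i, hiM⟩, ?_⟩
      simp only [List.getD_eq_getElem _ _ hi, hiz]
      exact hyz
end
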